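/- For the two-user Gaussian interference channel with degraded message sets in which transmitter 1 knows both messages, if |b| ≤ 1 then the capacity region C^{T₁}_{GIFC} is exactly the set of all rate pairs (R₁,R₂) such that for some α ∈ [0,1]: R₁ ≤ ½ log(1 + αP₁) and R₂ ≤ ½ log( (1 + b²P₁ + 2|b|√((1−α)P₁P₂) + P₂) / (1 + b²αP₁) ). -/

import Mathlib

open scoped BigOperators
open MeasureTheory ProbabilityTheory

noncomputable section

/-- The law of `n` i.i.d. standard Gaussian noise samples. -/
def stdGaussN (n : ℕ) : Measure (Fin n → ℝ) :=
  Measure.pi fun _ => gaussianReal 0 1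

/-- Average probability that receiver 1 errs, for a code for the Gaussian IFC
`Y₁ = X₁ + a X₂ + Z₁`, `Y₂ = b X₁ + X₂ + Z₂` with degraded message sets
(transmitter 1 knows both messages), messages uniform and independent. -/
def peG1T1 (a : ℝ) (n M1 M2 : ℕ) (f1 : Fin M1 → Fin M2 → Fin n → ℝ)
    (f2 : Fin M2 → Fin n → ℝ) (g1 : (Fin n → ℝ) → Fin M1) : ℝ :=
  (1 / (M1 * M2) : ℝ) * ∑ w1 : Fin M1, ∑ w2 : Fin M2,
    (stdGaussN n {z | g1 (fun i => f1 w1 w2 i + a * f2 w2 i + z i) ≠ w1}).toReal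

/-- Average probability that receiver 2 errs (transmitter 1 informed). -/
def peG2T1 (b : ℝ) (n M1 M2 : ℕ) (f1 : Fin M1 → Fin M2 → Fin n → ℝ)
    (f2 : Fin M2 → Fin n → ℝ) (g2 : (Fin n → ℝ) → Fin M2) : ℝ :=
  (1 / (M1 * M2) : ℝ) * ∑ w1 : Fin M1, ∑ w2 : Fin M2,
    (stdGaussN n {z | g2 (fun i => b * f1 w1 w2 i + f2 w2 i + z i) ≠ w2}).toReal

/-- A rate pair is achievable for the Gaussian IFC with degraded message sets
(transmitter 1 knows both messages) under the average power constraints `P1`, `P2`. -/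
def AchievableGT1 (a b P1 P2 R1 R2 : ℝ) : Prop :=
  ∀ ε : ℝ, 0 < ε → ∃ (n M1 M2 : ℕ) (f1 : Fin M1 → Fin M2 → Fin n → ℝ)
    (f2 : Fin M2 → Fin n → ℝ) (g1 : (Fin n → ℝ) → Fin M1) (g2 : (Fin n → ℝ) → Fin M2),
    0 < n ∧ 0 < M1 ∧ 0 < M2 ∧
    (1 / (M1 * M2) : ℝ) * ∑ w1 : Fin M1, ∑ w2 : Fin M2,
      ((1 / n : ℝ) * ∑ i, (f1 w1 w2 i) ^ 2) ≤ P1 ∧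
    (1 / M2 : ℝ) * ∑ w2 : Fin M2, ((1 / n : ℝ) * ∑ i, (f2 w2 i) ^ 2) ≤ P2 ∧
    R1 - ε ≤ Real.logb 2 M1 / n ∧ R2 - ε ≤ Real.logb 2 M2 / n ∧
    peG1T1 a n M1 M2 f1 f2 g1 ≤ ε ∧ peG2T1 b n M1 M2 f1 f2 g2 ≤ ε

/-- The capacity region `C^{T₁}_{GIFC}` of the Gaussian IFC with degraded message sets
in which transmitter 1 knows both messages. -/
def CapacityGT1 (a b P1 P2 : ℝ) : Set (ℝ × ℝ) :=
  closure {R : ℝ × ℝ | AchievableGT1 a b P1 P2 R.1 R.2}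

/-- The region of Theorem 5 / the dirty-paper-coding region `ℛ^{12}_{DPC}`. -/
def DPC12 (b P1 P2 : ℝ) : Set (ℝ × ℝ) :=
  {R | ∃ α : ℝ, 0 ≤ α ∧ α ≤ 1 ∧
    R.1 ≤ (1 / 2) * Real.logb 2 (1 + α * P1) ∧
    R.2 ≤ (1 / 2) * Real.logb 2
      ((1 + b ^ 2 * P1 + 2 * |b| * Real.sqrt ((1 - α) * P1 * P2) + P2)
        / (1 + b ^ 2 * α * P1))}

/-
Converse. The output of a deterministic code is a uniform mixture of unit Gaussians, so Fano's
inequality bounds the rates by differences of entropies of such mixtures: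
`n R₁ ≲ h(X₁ + Z | W₂) - h(Z)` and `n R₂ ≲ h(Y₂) - h(Y₂ | W₂)`. The number `α` is read off from
`h(X₁ + Z | W₂) = n/2 log (2πe (1 + α P₁))`. Given `W₂`, and up to a translation, `Y₂` is
`b (X₁ + Z) + √(1 - b²) Z'` because `|b| ≤ 1`, so the entropy power inequality bounds `h(Y₂ | W₂)`
below by `n/2 log (2πe (1 + b² α P₁))`. The Gaussian maximizes `h(Y₂)`, and the correlation of `X₁`
and `X₂` in its variance is at most `√((1 - α) P₁ P₂)`, since only the mean of `X₁` given `W₂` is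
correlated with `X₂`.

The entropy power inequality is needed only against Gaussian noise, and is obtained in dual form:
an upper bound for `∫ exp (θ⁻¹ E[log f (b y + c Z)]) dy` in terms of `∫ f`. In dimension one this
follows from monotone transport of the Gaussian and a rotation, as in Rioul's proof, and Jensen's
inequality carries it to products one coordinate at a time.

Achievability. Transmitter 1 adds to a scaled copy of the cloud center of `W₂` a word `v` carrying
`W₁` by dirty paper coding: `v` is the difference of an auxiliary codeword from the bin of `W₁` and
a multiple of the cloud center, which removes at receiver 1 all of the interference, whatever `a`
is. Receiver 2 treats `v` as noise.
-/

section ProductDensity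

variable {ι : Type*} [Fintype ι]

lemma pi_withDensity_ofReal {E : ι → Type*} [∀ i, MeasurableSpace (E i)]
    (μ : ∀ i, Measure (E i)) [∀ i, SigmaFinite (μ i)] {f : ∀ i, E i → ℝ}
    (hf : ∀ i x, 0 ≤ f i x) (hfi : ∀ i, Integrable (f i) (μ i)) :
    Measure.pi (fun i ↦ (μ i).withDensity fun x ↦ ENNReal.ofReal (f i x)) =
      (Measure.pi μ).withDensity fun x ↦ ENNReal.ofReal (∏ i, f i (x i)) := by
  have hprod (x : ∀ i, E i) : 0 ≤ ∏ i, f i (x i) := Finset.prod_nonneg fun i _ ↦ hf i _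
  refine Measure.pi_eq fun s hs ↦ ?_
  have hbox : (Set.univ.pi s).indicator (fun x ↦ ∏ i, f i (x i)) =
      fun x ↦ ∏ i, (s i).indicator (f i) (x i) := by
    ext x
    by_cases hx : x ∈ Set.univ.pi s
    · rw [Set.indicator_of_mem hx]
      exact Finset.prod_congr rfl fun i _ ↦ (Set.indicator_of_mem (hx i (Set.mem_univ i)) _).symm
    · obtain ⟨i, hi⟩ : ∃ i, x i ∉ s i := by simpa only [Set.mem_univ_pi, not_forall] using hx
      rw [Set.indicator_of_notMem hx]
      exact (Finset.prod_eq_zero (Finset.mem_univ i) (Set.indicator_of_notMem hi _)).symm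
  rw [withDensity_apply _ (MeasurableSet.univ_pi hs)]
  calc ∫⁻ x in Set.univ.pi s, ENNReal.ofReal (∏ i, f i (x i)) ∂Measure.pi μ
      = ENNReal.ofReal (∫ x, ∏ i, (s i).indicator (f i) (x i) ∂Measure.pi μ) := by
        rw [← ofReal_integral_eq_lintegral_ofReal (Integrable.fintype_prod_dep hfi).integrableOn
          (.of_forall hprod), ← integral_indicator (MeasurableSet.univ_pi hs), hbox]
    _ = ∏ i, ENNReal.ofReal (∫ x, (s i).indicator (f i) x ∂μ i) := by
        rw [integral_fintype_prod_eq_prod, ENNReal.ofReal_prod_of_nonneg]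
        exact fun i _ ↦ integral_nonneg fun x ↦ Set.indicator_nonneg (fun y _ ↦ hf i y) x
    _ = ∏ i, (μ i).withDensity (fun x ↦ ENNReal.ofReal (f i x)) (s i) := by
        refine Finset.prod_congr rfl fun i _ ↦ ?_
        rw [withDensity_apply _ (hs i), integral_indicator (hs i),
          ofReal_integral_eq_lintegral_ofReal (hfi i).integrableOn (.of_forall (hf i))]

end ProductDensity

section SqNorm

variable {n : ℕ}

/-- The squared Euclidean norm on `Fin n → ℝ`, whose Mathlib norm is the supremum norm. -/
def sqNorm (x : Fin n → ℝ) : ℝ := ∑ i, x i ^ 2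

lemma sqNorm_nonneg (x : Fin n → ℝ) : 0 ≤ sqNorm x :=
  Finset.sum_nonneg fun _ _ ↦ sq_nonneg _

@[fun_prop]
lemma continuous_sqNorm : Continuous (sqNorm (n := n)) := by
  unfold sqNorm; fun_prop

@[fun_prop]
lemma measurable_sqNorm : Measurable (sqNorm (n := n)) :=
  continuous_sqNorm.measurable

lemma sqNorm_smul (c : ℝ) (x : Fin n → ℝ) : sqNorm (c • x) = c ^ 2 * sqNorm x := by
  simp [sqNorm, mul_pow, Finset.mul_sum]

lemma sqNorm_neg (x : Fin n → ℝ) : sqNorm (-x) = sqNorm x := by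
  simp [sqNorm]

lemma sqNorm_add (x y : Fin n → ℝ) :
    sqNorm (x + y) = sqNorm x + 2 * (x ⬝ᵥ y) + sqNorm y := by
  simp only [sqNorm, dotProduct, Pi.add_apply, add_sq, Finset.sum_add_distrib, Finset.mul_sum,
    mul_assoc]

lemma sqNorm_add_le (x y : Fin n → ℝ) : sqNorm (x + y) ≤ 2 * sqNorm x + 2 * sqNorm y := by
  have h := sqNorm_nonneg (x + -y)
  rw [sqNorm_add, sqNorm_neg, dotProduct_neg] at h
  rw [sqNorm_add]
  linarith

lemma sqNorm_cons (x₀ : ℝ) (x : Fin n → ℝ) :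
    sqNorm (Fin.cons x₀ x : Fin (n + 1) → ℝ) = x₀ ^ 2 + sqNorm x := by
  simp [sqNorm, Fin.sum_univ_succ]

lemma integrable_exp_neg_mul_sqNorm {c : ℝ} (hc : 0 < c) :
    Integrable fun x : Fin n → ℝ ↦ Real.exp (-c * sqNorm x) := by
  have hprod : (fun x : Fin n → ℝ ↦ Real.exp (-c * sqNorm x)) =
      fun x ↦ ∏ i, Real.exp (-c * x i ^ 2) := by
    ext x
    rw [sqNorm, Finset.mul_sum, Real.exp_sum]
  rw [hprod]
  exact Integrable.fintype_prod fun _ ↦ integrable_exp_neg_mul_sq hc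

end SqNorm

section GaussianDensity

variable {n : ℕ}

/-- The density of the centred Gaussian law on `Fin n → ℝ` with covariance `v • 1`. -/
def gaussDensity (v : ℝ) (x : Fin n → ℝ) : ℝ :=
  (√(2 * Real.pi * v))⁻¹ ^ n * Real.exp (-(sqNorm x) / (2 * v))

@[fun_prop]
lemma continuous_gaussDensity (v : ℝ) : Continuous (gaussDensity (n := n) v) := by
  unfold gaussDensity; fun_prop

lemma gaussDensity_pos {v : ℝ} (hv : 0 < v) (x : Fin n → ℝ) : 0 < gaussDensity v x := by
  unfold gaussDensity; positivity

lemma gaussDensity_neg (v : ℝ) (x : Fin n → ℝ) : gaussDensity v (-x) = gaussDensity v x := by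
  rw [gaussDensity, gaussDensity, sqNorm_neg]

lemma log_gaussDensity {v : ℝ} (hv : 0 < v) (x : Fin n → ℝ) :
    Real.log (gaussDensity v x) =
      -(n / 2 * Real.log (2 * Real.pi * v)) - sqNorm x / (2 * v) := by
  rw [gaussDensity, Real.log_mul (by positivity) (by positivity), Real.log_exp, Real.log_pow,
    Real.log_inv, Real.log_sqrt (by positivity)]
  ring

lemma gaussDensity_eq_prod (v : NNReal) (x : Fin n → ℝ) :
    gaussDensity v x = ∏ i, gaussianPDFReal 0 v (x i) := by
  simp only [gaussDensity, gaussianPDFReal, sqNorm, Finset.prod_mul_distrib, ← Real.exp_sum,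
    Finset.prod_const, Finset.card_univ, Fintype.card_fin, sub_zero, ← Finset.sum_div,
    Finset.sum_neg_distrib]

lemma pi_gaussianReal_eq_withDensity {v : NNReal} (hv : v ≠ 0) :
    (Measure.pi fun _ : Fin n ↦ gaussianReal 0 v) =
      volume.withDensity fun x ↦ ENNReal.ofReal (gaussDensity v x) := by
  simp_rw [gaussianReal_of_var_ne_zero 0 hv, gaussDensity_eq_prod]
  exact pi_withDensity_ofReal (fun _ ↦ volume) (fun _ ↦ gaussianPDFReal_nonneg 0 v)
    fun _ ↦ integrable_gaussianPDFReal 0 v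

lemma integrable_gaussDensity (v : NNReal) : Integrable (gaussDensity (n := n) v) := by
  rw [show gaussDensity (n := n) v = _ from funext (gaussDensity_eq_prod v)]
  exact Integrable.fintype_prod fun _ ↦ integrable_gaussianPDFReal 0 v

lemma integral_gaussDensity {v : NNReal} (hv : v ≠ 0) :
    ∫ x : Fin n → ℝ, gaussDensity v x = 1 := by
  simp_rw [gaussDensity_eq_prod]
  rw [integral_fintype_prod_volume_eq_prod (f := fun _ ↦ gaussianPDFReal 0 v)]
  simp [integral_gaussianPDFReal_eq_one 0 hv]

end GaussianDensity

section GaussianMoments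

lemma integrable_sq_gaussianReal (v : NNReal) :
    Integrable (fun x : ℝ ↦ x ^ 2) (gaussianReal 0 v) :=
  (memLp_id_gaussianReal 2).integrable_sq

lemma integrable_id_gaussianReal (v : NNReal) : Integrable (fun x : ℝ ↦ x) (gaussianReal 0 v) :=
  (memLp_id_gaussianReal 1).integrable le_rfl

lemma integral_sq_gaussianReal (v : NNReal) : ∫ x, x ^ 2 ∂gaussianReal 0 v = v := by
  rw [← variance_fun_id_gaussianReal (μ := 0) (v := v),
    variance_of_integral_eq_zero (by fun_prop) (by simp)]

lemma integrable_gaussianReal_iff {v : NNReal} (hv : v ≠ 0) (f : ℝ → ℝ) :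
    Integrable f (gaussianReal 0 v) ↔ Integrable fun x ↦ gaussianPDFReal 0 v x * f x := by
  rw [gaussianReal_of_var_ne_zero 0 hv,
    integrable_withDensity_iff (measurable_gaussianPDF 0 v) (by simp [gaussianPDF])]
  simp only [toReal_gaussianPDF, mul_comm]

variable {n : ℕ}

instance (n : ℕ) : IsProbabilityMeasure (stdGaussN n) := by
  unfold stdGaussN; infer_instance

lemma stdGaussN_eq_withDensity :
    stdGaussN n = volume.withDensity fun x ↦ ENNReal.ofReal (gaussDensity 1 x) :=
  pi_gaussianReal_eq_withDensity one_ne_zero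

lemma integral_stdGaussN (f : (Fin n → ℝ) → ℝ) :
    ∫ x, f x ∂stdGaussN n = ∫ x, gaussDensity 1 x * f x := by
  rw [stdGaussN_eq_withDensity,
    integral_withDensity_eq_integral_toReal_smul (by fun_prop) (by simp)]
  simp only [ENNReal.toReal_ofReal (gaussDensity_pos one_pos _).le, smul_eq_mul]

lemma integrable_coord_stdGaussN (i : Fin n) :
    Integrable (fun x : Fin n → ℝ ↦ x i) (stdGaussN n) :=
  integrable_comp_eval (f := fun y ↦ y) (integrable_id_gaussianReal 1)

lemma integral_coord_stdGaussN (i : Fin n) : ∫ x, x i ∂stdGaussN n = 0 :=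
  (integral_comp_eval (μ := fun _ ↦ gaussianReal 0 1) (f := fun y : ℝ ↦ y) (by fun_prop)).trans
    integral_id_gaussianReal

lemma integrable_sq_coord_stdGaussN (i : Fin n) :
    Integrable (fun x : Fin n → ℝ ↦ x i ^ 2) (stdGaussN n) :=
  integrable_comp_eval (f := fun y ↦ y ^ 2) (integrable_sq_gaussianReal 1)

lemma integral_sq_coord_stdGaussN (i : Fin n) : ∫ x, x i ^ 2 ∂stdGaussN n = 1 :=
  (integral_comp_eval (μ := fun _ ↦ gaussianReal 0 1) (f := fun y : ℝ ↦ y ^ 2)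
    (by fun_prop)).trans (by simp [integral_sq_gaussianReal])

lemma integrable_sqNorm : Integrable (sqNorm (n := n)) (stdGaussN n) :=
  integrable_finsetSum _ fun i _ ↦ integrable_sq_coord_stdGaussN i

lemma integral_sqNorm : ∫ x, sqNorm x ∂stdGaussN n = n := by
  unfold sqNorm
  rw [integral_finsetSum _ fun i _ ↦ integrable_sq_coord_stdGaussN i]
  simp [integral_sq_coord_stdGaussN]

lemma integrable_dotProduct (x : Fin n → ℝ) : Integrable (x ⬝ᵥ ·) (stdGaussN n) :=
  integrable_finsetSum _ fun i _ ↦ (integrable_coord_stdGaussN i).const_mul _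

lemma integral_dotProduct (x : Fin n → ℝ) : ∫ z, x ⬝ᵥ z ∂stdGaussN n = 0 := by
  simp only [dotProduct]
  rw [integral_finsetSum _ fun i _ ↦ (integrable_coord_stdGaussN i).const_mul _]
  simp [integral_const_mul, integral_coord_stdGaussN]

lemma sqNorm_add_smul (c : ℝ) (x z : Fin n → ℝ) :
    sqNorm (x + c • z) = sqNorm x + 2 * c * (x ⬝ᵥ z) + c ^ 2 * sqNorm z := by
  rw [sqNorm_add, dotProduct_smul, sqNorm_smul, smul_eq_mul, mul_assoc]

lemma integrable_sqNorm_add_smul (c : ℝ) (x : Fin n → ℝ) :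
    Integrable (fun z ↦ sqNorm (x + c • z)) (stdGaussN n) := by
  simp only [sqNorm_add_smul]
  exact ((integrable_const _).add ((integrable_dotProduct x).const_mul _)).add
    (integrable_sqNorm.const_mul _)

lemma integral_sqNorm_add_smul (c : ℝ) (x : Fin n → ℝ) :
    ∫ z, sqNorm (x + c • z) ∂stdGaussN n = sqNorm x + c ^ 2 * n := by
  have hdot : Integrable (fun z ↦ 2 * c * (x ⬝ᵥ z)) (stdGaussN n) :=
    (integrable_dotProduct x).const_mul _
  have hlin : Integrable (fun z ↦ sqNorm x + 2 * c * (x ⬝ᵥ z)) (stdGaussN n) :=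
    (integrable_const _).add hdot
  simp only [sqNorm_add_smul]
  rw [integral_add hlin (integrable_sqNorm.const_mul _), integral_add (integrable_const _) hdot]
  simp [integral_const_mul, integral_dotProduct, integral_sqNorm]

end GaussianMoments

section Rotation

lemma measurePreserving_gaussianReal_rotation {s t : ℝ} (ht : 0 ≤ t) (hst : s ^ 2 + t ^ 2 = 1) :
    MeasurePreserving (fun p : ℝ × ℝ ↦ (s * p.1 + t * p.2, -t * p.1 + s * p.2))
      ((gaussianReal 0 1).prod (gaussianReal 0 1))
      ((gaussianReal 0 1).prod (gaussianReal 0 1)) := by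
  refine ⟨by fun_prop, ?_⟩
  have hcos : Real.cos (Real.arccos s) = s :=
    Real.cos_arccos (by nlinarith [sq_nonneg t]) (by nlinarith [sq_nonneg t])
  have hsin : Real.sin (Real.arccos s) = t := by
    rw [Real.sin_arccos, ← hst, add_sub_cancel_left, Real.sqrt_sq ht]
  convert IsGaussian.map_rotation_eq_self (μ := gaussianReal 0 1) (by simp) (Real.arccos s) using 2
  ext p <;> simp [ContinuousLinearMap.rotation_apply, hcos, hsin]

lemma measurePreserving_stdGaussN_combination {n : ℕ} {s t : ℝ} (ht : 0 ≤ t)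
    (hst : s ^ 2 + t ^ 2 = 1) :
    MeasurePreserving (fun p : (Fin n → ℝ) × (Fin n → ℝ) ↦ s • p.1 + t • p.2)
      ((stdGaussN n).prod (stdGaussN n)) (stdGaussN n) := by
  have hcoord : MeasurePreserving (fun p : ℝ × ℝ ↦ s * p.1 + t * p.2)
      ((gaussianReal 0 1).prod (gaussianReal 0 1)) (gaussianReal 0 1) :=
    measurePreserving_fst.comp (measurePreserving_gaussianReal_rotation ht hst)
  exact (measurePreserving_pi _ _ fun _ : Fin n ↦ hcoord).comp
    (measurePreserving_arrowProdEquivProdArrow ℝ ℝ (Fin n)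
      (fun _ ↦ gaussianReal 0 1) fun _ ↦ gaussianReal 0 1).symm

end Rotation

section Transport

variable {f g p T Θ Θ' : ℝ → ℝ}

/-- The cumulative distribution function of the density `g`, not necessarily of mass one. -/
def cumulative (g : ℝ → ℝ) (y : ℝ) : ℝ := ∫ t in Set.Iic y, g t

lemma hasDerivAt_cumulative (hg : Continuous g) (hgi : Integrable g) (y : ℝ) :
    HasDerivAt (cumulative g) (g y) y := by
  have h0 : cumulative g = fun y ↦ cumulative g 0 + ∫ t in (0 : ℝ)..y, g t := by
    ext y
    rw [← intervalIntegral.integral_Iic_sub_Iic hgi.integrableOn hgi.integrableOn, cumulative,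
      cumulative, add_sub_cancel]
  rw [h0]
  exact (hg.integral_hasStrictDerivAt 0 y).hasDerivAt.const_add _

lemma strictMono_cumulative (hg : Continuous g) (hgi : Integrable g) (hpos : ∀ y, 0 < g y) :
    StrictMono (cumulative g) :=
  strictMono_of_deriv_pos fun y ↦ (hasDerivAt_cumulative hg hgi y).deriv ▸ hpos y

lemma range_cumulative (hg : Continuous g) (hgi : Integrable g) (hpos : ∀ y, 0 < g y) :
    Set.range (cumulative g) = Set.Ioo 0 (∫ t, g t) := by
  have hbot : Filter.Tendsto (cumulative g) .atBot (nhds 0) :=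
    tendsto_integral_Iic_zero Filter.tendsto_id
  have htop : Filter.Tendsto (cumulative g) .atTop (nhds (∫ t, g t)) :=
    (aecover_Iic Filter.tendsto_id).integral_tendsto_of_countably_generated hgi
  have hmono := strictMono_cumulative hg hgi hpos
  have hcont : Continuous (cumulative g) :=
    continuous_iff_continuousAt.2 fun y ↦ (hasDerivAt_cumulative hg hgi y).continuousAt
  refine Set.Subset.antisymm ?_ fun v ⟨hv0, hv1⟩ ↦ ?_
  · rintro _ ⟨y, rfl⟩
    exact ⟨(hmono.monotone.le_of_tendsto hbot _).trans_lt (hmono (sub_one_lt y)),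
      (hmono (lt_add_one y)).trans_le (hmono.monotone.ge_of_tendsto htop _)⟩
  · exact mem_range_of_exists_le_of_exists_ge hcont
      ((hbot.eventually (gt_mem_nhds hv0)).exists.imp fun _ ↦ le_of_lt)
      ((htop.eventually (lt_mem_nhds hv1)).exists.imp fun _ ↦ le_of_lt)

lemma exists_monotone_transport (hg : Continuous g) (hgi : Integrable g) (hgpos : ∀ y, 0 < g y)
    (hp : Continuous p) (hpi : Integrable p) (hppos : ∀ y, 0 < p y)
    (hmass : ∫ t, g t = ∫ t, p t) :
    ∃ T : ℝ → ℝ, StrictMono T ∧ ∀ z, HasDerivAt T (p z / g (T z)) z := by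
  have hrange : Set.range (cumulative g) = Set.range (cumulative p) := by
    rw [range_cumulative hg hgi hgpos, range_cumulative hp hpi hppos, hmass]
  have hgmono := strictMono_cumulative hg hgi hgpos
  have hpmono := strictMono_cumulative hp hpi hppos
  have hlevel (z : ℝ) : cumulative p z ∈ Set.range (cumulative g) := hrange ▸ Set.mem_range_self z
  choose T hT using hlevel
  have hTmono : StrictMono T := fun x y hxy ↦
    hgmono.lt_iff_lt.1 (by rw [hT, hT]; exact hpmono hxy)
  have hTsurj : Function.Surjective T := fun t ↦ by
    obtain ⟨z, hz⟩ : cumulative g t ∈ Set.range (cumulative p) := hrange ▸ Set.mem_range_self t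
    exact ⟨z, hgmono.injective (by rw [hT, hz])⟩
  have hTcont : Continuous T := hTmono.monotone.continuous_of_surjective hTsurj
  exact ⟨T, hTmono, fun z ↦ (hasDerivAt_cumulative hg hgi _).of_comp_left hTcont.continuousAt
    (hasDerivAt_cumulative hp hpi z) (hgpos _).ne' (.of_forall hT)⟩

lemma integrable_deriv_mul_comp (hΘ : ∀ u, HasDerivAt Θ (Θ' u) u) (hΘ' : ∀ u, 0 ≤ Θ' u)
    (hinj : Function.Injective Θ) (hf : Integrable f) : Integrable fun u ↦ Θ' u * f (Θ u) := by
  have h := (integrableOn_image_iff_integrableOn_abs_deriv_smul MeasurableSet.univ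
    (fun u _ ↦ (hΘ u).hasDerivWithinAt) hinj.injOn f).1 hf.integrableOn
  simpa only [abs_of_nonneg (hΘ' _), smul_eq_mul, integrableOn_univ] using h

lemma integral_deriv_mul_comp_le (hΘ : ∀ u, HasDerivAt Θ (Θ' u) u) (hΘ' : ∀ u, 0 ≤ Θ' u)
    (hinj : Function.Injective Θ) (hf0 : ∀ x, 0 ≤ f x) (hf : Integrable f) :
    ∫ u, Θ' u * f (Θ u) ≤ ∫ x, f x := by
  have h := integral_image_eq_integral_abs_deriv_smul MeasurableSet.univ
    (fun u _ ↦ (hΘ u).hasDerivWithinAt) hinj.injOn f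
  simp only [abs_of_nonneg (hΘ' _), smul_eq_mul, Measure.restrict_univ] at h
  exact h ▸ setIntegral_le_integral hf (.of_forall hf0)

end Transport

section Gibbs

variable {E : Type*} [MeasurableSpace E] {μ ν : Measure E}

lemma integral_pos_of_forall_pos [NeZero μ] {f : E → ℝ} (hf : ∀ x, 0 < f x)
    (hfi : Integrable f μ) : 0 < ∫ x, f x ∂μ := by
  rw [integral_pos_iff_support_of_nonneg (fun x ↦ (hf x).le) hfi,
    Function.support_eq_univ fun x ↦ (hf x).ne']
  exact Measure.measure_univ_pos.2 (NeZero.ne μ)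

lemma integral_le_log_integral_add_integral_log [IsProbabilityMeasure ν] {p u w : E → ℝ}
    (hp : Measurable p) (hppos : ∀ x, 0 < p x)
    (hν : ν = μ.withDensity fun x ↦ ENNReal.ofReal (p x))
    (hplog : Integrable (fun x ↦ Real.log (p x)) ν) (hu : Integrable u μ) (hupos : ∀ x, 0 < u x)
    (hw : Integrable w ν) (hwu : ∀ x, w x ≤ Real.log (u x)) :
    ∫ x, w x ∂ν ≤ Real.log (∫ x, u x ∂μ) + ∫ x, Real.log (p x) ∂ν := by
  have hμ : NeZero μ := ⟨fun h ↦ by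
    simpa [hν, h] using (measure_univ (μ := ν))⟩
  set m := ∫ x, u x ∂μ with hm
  have hmpos : 0 < m := integral_pos_of_forall_pos hupos hu
  have hratio (x : E) : p x * (u x / (m * p x)) = m⁻¹ * u x := by
    have := (hppos x).ne'
    field_simp
  have hri : Integrable (fun x ↦ u x / (m * p x)) ν := by
    rw [hν, integrable_withDensity_iff (by fun_prop) (by simp)]
    refine (hu.const_mul m⁻¹).congr (.of_forall fun x ↦ ?_)
    simp only [ENNReal.toReal_ofReal (hppos x).le]
    rw [← hratio, mul_comm]
  have hr1 : ∫ x, u x / (m * p x) ∂ν = 1 := by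
    rw [hν, integral_withDensity_eq_integral_toReal_smul (by fun_prop) (by simp)]
    simp only [ENNReal.toReal_ofReal (hppos _).le, smul_eq_mul, hratio]
    rw [integral_const_mul, ← hm, inv_mul_cancel₀ hmpos.ne']
  have hle (x : E) : w x ≤ u x / (m * p x) + (Real.log m - 1) + Real.log (p x) := by
    have hmp := mul_pos hmpos (hppos x)
    have hlog := Real.log_le_sub_one_of_pos (div_pos (hupos x) hmp)
    rw [Real.log_div (hupos x).ne' hmp.ne', Real.log_mul hmpos.ne' (hppos x).ne'] at hlog
    linarith [hwu x]
  have hri' : Integrable (fun x ↦ u x / (m * p x) + (Real.log m - 1)) ν :=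
    hri.add (integrable_const _)
  refine (integral_mono hw (hri'.add hplog) hle).trans_eq ?_
  simp only [Pi.add_apply]
  rw [integral_add hri' hplog, integral_add hri (integrable_const _), hr1]
  simp

end Gibbs

section GaussianGrowth

/-- `f` is continuous and positive, and `log f` lies between two functions of the form
`A - B * q` with `B > 0`: up to constants, `f` is squeezed between two Gaussians, `q` being the
relevant squared norm. -/
structure GaussianGrowth {E : Type*} [TopologicalSpace E] (q f : E → ℝ) : Prop where
  continuous : Continuous f
  pos : ∀ x, 0 < f x
  le_log : ∃ A B : ℝ, 0 < B ∧ ∀ x, A - B * q x ≤ Real.log (f x)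
  log_le : ∃ A B : ℝ, 0 < B ∧ ∀ x, Real.log (f x) ≤ A - B * q x

/-- `avgLog ν b c f y` is the average of `log f (b y + c Z)` over `Z` of law `ν`. -/
def avgLog {E : Type*} [AddCommGroup E] [Module ℝ E] [MeasurableSpace E] (ν : Measure E)
    (b c : ℝ) (f : E → ℝ) (y : E) : ℝ :=
  ∫ z, Real.log (f (b • y + c • z)) ∂ν

namespace GaussianGrowth

variable {E Z : Type*} [TopologicalSpace E] {q f : E → ℝ}

@[fun_prop]
lemma continuous_log (hf : GaussianGrowth q f) : Continuous fun x ↦ Real.log (f x) :=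
  hf.continuous.log fun x ↦ (hf.pos x).ne'

lemma exists_abs_log_le (hf : GaussianGrowth q f) (hq : ∀ x, 0 ≤ q x) :
    ∃ K : ℝ, ∀ x, |Real.log (f x)| ≤ K * (1 + q x) := by
  obtain ⟨A, B, hB, hlow⟩ := hf.le_log
  obtain ⟨A', B', hB', hup⟩ := hf.log_le
  refine ⟨|A| + |A'| + B, fun x ↦ abs_le.2 ⟨?_, ?_⟩⟩
  · have := mul_nonneg (add_nonneg (abs_nonneg A) (abs_nonneg A')) (hq x)
    linarith [hlow x, neg_abs_le A, abs_nonneg A']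
  · have := mul_nonneg (add_nonneg (add_nonneg (abs_nonneg A) (abs_nonneg A')) hB.le) (hq x)
    linarith [hup x, le_abs_self A', abs_nonneg A, mul_nonneg hB'.le (hq x)]

lemma integrable_log_comp [MeasurableSpace E] [OpensMeasurableSpace E]
    [MeasurableSpace Z] {ν : Measure Z} [IsFiniteMeasure ν] (hf : GaussianGrowth q f)
    (hq : ∀ x, 0 ≤ q x) {g : Z → E} (hg : Measurable g) (hqg : Integrable (fun z ↦ q (g z)) ν) :
    Integrable (fun z ↦ Real.log (f (g z))) ν := by
  obtain ⟨K, hK⟩ := hf.exists_abs_log_le hq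
  exact (((integrable_const 1).add hqg).const_mul K).mono'
    (hf.continuous_log.measurable.comp hg).aestronglyMeasurable (.of_forall fun z ↦ hK (g z))

lemma exists_le_exp (hf : GaussianGrowth q f) :
    ∃ A B : ℝ, 0 < B ∧ ∀ x, f x ≤ Real.exp (A - B * q x) :=
  let ⟨A, B, hB, h⟩ := hf.log_le
  ⟨A, B, hB, fun x ↦ (Real.log_le_iff_le_exp (hf.pos x)).1 (h x)⟩

lemma exists_exp_le (hf : GaussianGrowth q f) :
    ∃ A B : ℝ, 0 < B ∧ ∀ x, Real.exp (A - B * q x) ≤ f x :=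
  let ⟨A, B, hB, h⟩ := hf.le_log
  ⟨A, B, hB, fun x ↦ (Real.le_log_iff_exp_le (hf.pos x)).1 (h x)⟩

lemma integrable [MeasurableSpace E] [OpensMeasurableSpace E] {μ : Measure E}
    (hf : GaussianGrowth q f) (hq : ∀ B : ℝ, 0 < B → Integrable (fun x ↦ Real.exp (-B * q x)) μ) :
    Integrable f μ := by
  obtain ⟨A, B, hB, hup⟩ := hf.exists_le_exp
  refine ((hq B hB).const_mul (Real.exp A)).mono'
    hf.continuous.measurable.aestronglyMeasurable (.of_forall fun x ↦ ?_)
  rw [Real.norm_of_nonneg (hf.pos x).le, ← Real.exp_add]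
  exact (hup x).trans_eq (by ring_nf)

lemma integrable_mul [MeasurableSpace E] [OpensMeasurableSpace E] {μ : Measure E}
    (hf : GaussianGrowth q f) (hq0 : ∀ x, 0 ≤ q x) (hqm : Measurable q)
    (hq : ∀ B : ℝ, 0 < B → Integrable (fun x ↦ Real.exp (-B * q x)) μ) :
    Integrable (fun x ↦ q x * f x) μ := by
  obtain ⟨A, B, hB, hup⟩ := hf.exists_le_exp
  refine ((hq (B / 2) (half_pos hB)).const_mul (2 / B * Real.exp A)).mono'
    (hqm.mul hf.continuous.measurable).aestronglyMeasurable (.of_forall fun x ↦ ?_)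
  rw [Real.norm_of_nonneg (mul_nonneg (hq0 x) (hf.pos x).le)]
  have hqexp : q x ≤ 2 / B * Real.exp (B / 2 * q x) := by
    rw [div_mul_eq_mul_div, le_div_iff₀ hB]
    linarith [Real.add_one_le_exp (B / 2 * q x)]
  calc q x * f x ≤ 2 / B * Real.exp (B / 2 * q x) * Real.exp (A - B * q x) :=
        mul_le_mul hqexp (hup x) (hf.pos x).le (by positivity)
    _ = 2 / B * Real.exp A * Real.exp (-(B / 2) * q x) := by
        rw [mul_assoc, ← Real.exp_add, mul_assoc, ← Real.exp_add]
        ring_nf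

end GaussianGrowth

end GaussianGrowth

section OneDimensional

/-- The differential entropy of the standard Gaussian law on `ℝ`, in nats. -/
def gaussEntropy : ℝ := 1 / 2 * Real.log (2 * Real.pi) + 1 / 2

/-- The gain `θ log (b / √θ) + (1 - θ) log (c / √(1 - θ))` in the linearised entropy power
inequality for `b X + c Z`; it vanishes when `θ = b ^ 2` and `1 - θ = c ^ 2`. -/
def epiConst (b c θ : ℝ) : ℝ :=
  θ * Real.log (b / √θ) + (1 - θ) * Real.log (c / √(1 - θ))

lemma log_gaussianPDFReal (u : ℝ) :
    Real.log (gaussianPDFReal 0 1 u) = -(1 / 2) * Real.log (2 * Real.pi) - u ^ 2 / 2 := by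
  rw [gaussianPDFReal, Real.log_mul (by positivity) (by positivity), Real.log_exp, Real.log_inv,
    Real.log_sqrt (by positivity)]
  simp only [NNReal.coe_one, mul_one, sub_zero]
  ring

lemma integrable_log_gaussianPDFReal :
    Integrable (fun u ↦ Real.log (gaussianPDFReal 0 1 u)) (gaussianReal 0 1) := by
  simp_rw [log_gaussianPDFReal]
  exact (integrable_const _).sub ((integrable_sq_gaussianReal 1).div_const 2)

lemma integral_log_gaussianPDFReal :
    ∫ u, Real.log (gaussianPDFReal 0 1 u) ∂gaussianReal 0 1 = -gaussEntropy := by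
  simp_rw [log_gaussianPDFReal]
  rw [integral_sub (integrable_const _) ((integrable_sq_gaussianReal 1).div_const 2), integral_div,
    integral_sq_gaussianReal, gaussEntropy]
  simp only [integral_const, probReal_univ, one_smul, NNReal.coe_one]
  ring

lemma continuous_gaussianPDFReal : Continuous (gaussianPDFReal 0 1) := by
  unfold gaussianPDFReal; fun_prop

lemma gaussianPDFReal_std_pos (u : ℝ) : 0 < gaussianPDFReal 0 1 u :=
  gaussianPDFReal_pos 0 1 u one_ne_zero

lemma integrable_sq_add_mul (x c : ℝ) :
    Integrable (fun z ↦ (x + c * z) ^ 2) (gaussianReal 0 1) := by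
  simp only [add_sq, mul_pow]
  exact ((integrable_const _).add (((integrable_id_gaussianReal 1).const_mul c).const_mul _)).add
    ((integrable_sq_gaussianReal 1).const_mul _)

lemma integral_sq_add_mul (x c : ℝ) :
    ∫ z, (x + c * z) ^ 2 ∂gaussianReal 0 1 = x ^ 2 + c ^ 2 := by
  have hlin : Integrable (fun z : ℝ ↦ 2 * x * (c * z)) (gaussianReal 0 1) :=
    ((integrable_id_gaussianReal 1).const_mul c).const_mul _
  have haff : Integrable (fun z : ℝ ↦ x ^ 2 + 2 * x * (c * z)) (gaussianReal 0 1) :=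
    (integrable_const _).add hlin
  simp only [add_sq, mul_pow]
  rw [integral_add haff ((integrable_sq_gaussianReal 1).const_mul _),
    integral_add (integrable_const _) hlin, integral_const_mul, integral_const_mul,
    integral_const_mul, integral_sq_gaussianReal, integral_id_gaussianReal]
  simp

lemma le_log_of_concave {b c θ τ : ℝ} (hb : 0 < b) (hc : 0 < c) (hθ₀ : 0 < θ) (hθ₁ : θ < 1)
    (hτ : 0 < τ) :
    θ * Real.log τ + epiConst b c θ ≤ Real.log (b * √θ * τ + c * √(1 - θ)) := by
  have hθ' : 0 < 1 - θ := sub_pos.2 hθ₁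
  have hconc := strictConcaveOn_log_Ioi.concaveOn.2 (x := b / √θ * τ) (y := c / √(1 - θ))
    (Set.mem_Ioi.2 (by positivity)) (Set.mem_Ioi.2 (by positivity)) hθ₀.le hθ'.le (by ring)
  have harg : θ * (b / √θ * τ) + (1 - θ) * (c / √(1 - θ)) = b * √θ * τ + c * √(1 - θ) := by
    calc _ = b * (θ / √θ) * τ + c * ((1 - θ) / √(1 - θ)) := by ring
      _ = _ := by rw [Real.div_sqrt, Real.div_sqrt]
  simp only [smul_eq_mul] at hconc
  rw [harg, Real.log_mul (by positivity) (by positivity)] at hconc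
  rw [epiConst]
  linarith

namespace GaussianGrowth

variable {f : ℝ → ℝ}

lemma integrable_of_sq (hf : GaussianGrowth (· ^ 2) f) : Integrable f :=
  hf.integrable fun _ hB ↦ integrable_exp_neg_mul_sq hB

lemma integrable_log_affine (hf : GaussianGrowth (· ^ 2) f) (x c : ℝ) :
    Integrable (fun z ↦ Real.log (f (x + c * z))) (gaussianReal 0 1) :=
  hf.integrable_log_comp sq_nonneg (by fun_prop) (integrable_sq_add_mul x c)

lemma continuous_avgLog (hf : GaussianGrowth (· ^ 2) f) (b c : ℝ) :
    Continuous (avgLog (gaussianReal 0 1) b c f) := by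
  obtain ⟨K, hK⟩ := hf.exists_abs_log_le sq_nonneg
  have hK0 : 0 ≤ K := by simpa using (abs_nonneg _).trans (hK 0)
  have hlog := hf.continuous_log
  refine continuous_iff_continuousAt.2 fun y₀ ↦ ?_
  refine continuousAt_of_dominated
    (bound := fun z ↦ K * (1 + (2 * (b ^ 2 * (|y₀| + 1) ^ 2) + 2 * c ^ 2 * z ^ 2)))
    (.of_forall fun y ↦ (hlog.comp (by fun_prop)).aestronglyMeasurable) ?_ ?_
    (.of_forall fun z ↦ (hlog.comp (by fun_prop : Continuous fun y ↦ b • y + c • z)).continuousAt)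
  · filter_upwards [Metric.ball_mem_nhds y₀ one_pos] with y hy
    refine .of_forall fun z ↦ (hK _).trans (mul_le_mul_of_nonneg_left ?_ hK0)
    have hy' : |y| ≤ |y₀| + 1 := by
      rw [Metric.mem_ball, Real.dist_eq] at hy
      linarith [abs_sub_abs_le_abs_sub y y₀]
    have hby : b ^ 2 * y ^ 2 ≤ b ^ 2 * (|y₀| + 1) ^ 2 := by
      rw [← sq_abs y]; gcongr
    simp only [smul_eq_mul]
    nlinarith [sq_nonneg (b * y - c * z)]
  · exact ((integrable_const _).add ((integrable_const _).add
      ((integrable_sq_gaussianReal 1).const_mul _))).const_mul K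

lemma exp_avgLog (hf : GaussianGrowth (· ^ 2) f) {b c θ : ℝ} (hb : b ≠ 0) (hθ : 0 < θ) :
    GaussianGrowth (· ^ 2) fun y ↦ Real.exp (θ⁻¹ * avgLog (gaussianReal 0 1) b c f y) := by
  have hquad (A B y : ℝ) : Integrable (fun z ↦ A - B * (b * y + c * z) ^ 2) (gaussianReal 0 1) :=
    (integrable_const A).sub ((integrable_sq_add_mul _ c).const_mul B)
  have hint (A B y : ℝ) : ∫ z, (A - B * (b * y + c * z) ^ 2) ∂gaussianReal 0 1 =
      A - B * ((b * y) ^ 2 + c ^ 2) := by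
    rw [integral_sub (integrable_const _) ((integrable_sq_add_mul _ c).const_mul B),
      integral_const_mul, integral_sq_add_mul]
    simp
  have hcont := hf.continuous_avgLog b c
  refine ⟨by fun_prop, fun _ ↦ Real.exp_pos _, ?_, ?_⟩
  · obtain ⟨A, B, hB, hlow⟩ := hf.le_log
    refine ⟨θ⁻¹ * (A - B * c ^ 2), θ⁻¹ * B * b ^ 2, by positivity, fun y ↦ ?_⟩
    have h := integral_mono (hquad A B y) (hf.integrable_log_affine (b * y) c) fun z ↦ hlow _
    rw [hint] at h
    rw [Real.log_exp]
    exact le_of_eq_of_le (by ring) (mul_le_mul_of_nonneg_left h (inv_pos.2 hθ).le)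
  · obtain ⟨A, B, hB, hup⟩ := hf.log_le
    refine ⟨θ⁻¹ * (A - B * c ^ 2), θ⁻¹ * B * b ^ 2, by positivity, fun y ↦ ?_⟩
    have h := integral_mono (hf.integrable_log_affine (b * y) c) (hquad A B y) fun z ↦ hup _
    rw [hint] at h
    rw [Real.log_exp]
    exact (mul_le_mul_of_nonneg_left h (inv_pos.2 hθ).le).trans_eq (by ring)

end GaussianGrowth

end OneDimensional

section FunctionalInequality

variable {f g w T Θ Θ' τ : ℝ → ℝ} {b c θ : ℝ}

lemma integral_le_log_integral_sub_gaussEntropy (hΘ : ∀ u, HasDerivAt Θ (Θ' u) u)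
    (hΘ' : ∀ u, 0 < Θ' u) (hf : Integrable f) (hfpos : ∀ x, 0 < f x)
    (hw : Integrable w (gaussianReal 0 1))
    (hwΘ : ∀ u, w u ≤ Real.log (Θ' u) + Real.log (f (Θ u))) :
    ∫ u, w u ∂gaussianReal 0 1 ≤ Real.log (∫ x, f x) - gaussEntropy := by
  have hinj : Function.Injective Θ :=
    (strictMono_of_deriv_pos fun u ↦ (hΘ u).deriv ▸ hΘ' u).injective
  have hu := integrable_deriv_mul_comp hΘ (fun u ↦ (hΘ' u).le) hinj hf
  have hupos (u : ℝ) : 0 < Θ' u * f (Θ u) := mul_pos (hΘ' u) (hfpos _)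
  calc ∫ u, w u ∂gaussianReal 0 1
      ≤ Real.log (∫ u, Θ' u * f (Θ u)) + ∫ u, Real.log (gaussianPDFReal 0 1 u) ∂gaussianReal 0 1 :=
        integral_le_log_integral_add_integral_log (measurable_gaussianPDFReal 0 1)
          gaussianPDFReal_std_pos (gaussianReal_of_var_ne_zero 0 one_ne_zero)
          integrable_log_gaussianPDFReal hu hupos hw fun u ↦
            (hwΘ u).trans_eq (Real.log_mul (hΘ' u).ne' (hfpos _).ne').symm
    _ ≤ Real.log (∫ x, f x) - gaussEntropy := by
        rw [integral_log_gaussianPDFReal, ← sub_eq_add_neg]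
        exact sub_le_sub_right (Real.log_le_log (integral_pos_of_forall_pos hupos hu)
          (integral_deriv_mul_comp_le hΘ (fun u ↦ (hΘ' u).le) hinj (fun x ↦ (hfpos x).le) hf)) _

lemma exists_gaussian_transport (hg : GaussianGrowth (· ^ 2) g) :
    ∃ T τ : ℝ → ℝ, (∀ z, HasDerivAt T (τ z) z) ∧ (∀ z, 0 < τ z) ∧
      (∀ z, Real.log (τ z) =
        Real.log (∫ y, g y) + Real.log (gaussianPDFReal 0 1 z) - Real.log (g (T z))) ∧
      Integrable (fun z ↦ T z ^ 2) (gaussianReal 0 1) := by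
  have hgi := hg.integrable_of_sq
  set I := ∫ y, g y
  have hIpos : 0 < I := integral_pos_of_forall_pos hg.pos hgi
  have hppos (z : ℝ) : 0 < I * gaussianPDFReal 0 1 z := mul_pos hIpos (gaussianPDFReal_std_pos z)
  obtain ⟨T, hTmono, hT⟩ := exists_monotone_transport hg.continuous hgi hg.pos
    (continuous_gaussianPDFReal.const_mul I) ((integrable_gaussianPDFReal 0 1).const_mul I) hppos
    (by rw [integral_const_mul, integral_gaussianPDFReal_eq_one 0 one_ne_zero, mul_one])
  have hτpos (z : ℝ) : 0 < I * gaussianPDFReal 0 1 z / g (T z) := div_pos (hppos z) (hg.pos _)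
  refine ⟨T, _, hT, hτpos, fun z ↦ ?_, ?_⟩
  · rw [Real.log_div (hppos z).ne' (hg.pos _).ne',
      Real.log_mul hIpos.ne' (gaussianPDFReal_std_pos z).ne']
  · have hsq : Integrable fun y ↦ y ^ 2 * g y :=
      hg.integrable_mul sq_nonneg (by fun_prop) fun _ hB ↦ integrable_exp_neg_mul_sq hB
    rw [integrable_gaussianReal_iff one_ne_zero]
    refine ((integrable_deriv_mul_comp hT (fun z ↦ (hτpos z).le) hTmono.injective hsq).const_mul
      I⁻¹).congr (.of_forall fun z ↦ ?_)
    have := (hg.pos (T z)).ne'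
    beta_reduce
    field_simp

lemma integral_gaussian_prod_le_of_rotated_slices {A : ℝ × ℝ → ℝ} {s t M : ℝ} (ht : 0 ≤ t)
    (hst : s ^ 2 + t ^ 2 = 1) (hA : Integrable A ((gaussianReal 0 1).prod (gaussianReal 0 1)))
    (hslice : ∀ v, Integrable (fun u ↦ A (s * u - t * v, t * u + s * v)) (gaussianReal 0 1) →
      ∫ u, A (s * u - t * v, t * u + s * v) ∂gaussianReal 0 1 ≤ M) :
    ∫ p, A p ∂(gaussianReal 0 1).prod (gaussianReal 0 1) ≤ M := by
  have hrot : MeasurePreserving (fun q : ℝ × ℝ ↦ (s * q.1 - t * q.2, t * q.1 + s * q.2))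
      ((gaussianReal 0 1).prod (gaussianReal 0 1))
      ((gaussianReal 0 1).prod (gaussianReal 0 1)) := by
    convert (Measure.measurePreserving_swap.comp
      (measurePreserving_gaussianReal_rotation ht hst)).comp Measure.measurePreserving_swap using 1
    ext q <;> simp <;> ring
  have hAr : Integrable (fun q : ℝ × ℝ ↦ A (s * q.1 - t * q.2, t * q.1 + s * q.2))
      ((gaussianReal 0 1).prod (gaussianReal 0 1)) := hrot.integrable_comp_of_integrable hA
  rw [← hrot.map_eq, integral_map hrot.aemeasurable (hrot.map_eq.symm ▸ hA.aestronglyMeasurable),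
    integral_prod_symm _ hAr]
  refine (integral_mono_ae hAr.integral_prod_right (integrable_const M)
    (hAr.prod_left_ae.mono fun v hv ↦ hslice v hv)).trans_eq (by simp)

lemma rotated_slice_le (hf : GaussianGrowth (· ^ 2) f) (hb : 0 < b) (hc : 0 < c) (hθ₀ : 0 < θ)
    (hθ₁ : θ < 1) (hT : ∀ z, HasDerivAt T (τ z) z) (hτ : ∀ z, 0 < τ z) (v : ℝ)
    (hw : Integrable (fun u ↦ Real.log (f (b * T (√θ * u - √(1 - θ) * v) +
      c * (√(1 - θ) * u + √θ * v))) + θ * Real.log (τ (√θ * u - √(1 - θ) * v)))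
      (gaussianReal 0 1)) :
    ∫ u, (Real.log (f (b * T (√θ * u - √(1 - θ) * v) + c * (√(1 - θ) * u + √θ * v))) +
      θ * Real.log (τ (√θ * u - √(1 - θ) * v))) ∂gaussianReal 0 1 ≤
      Real.log (∫ x, f x) - gaussEntropy - epiConst b c θ := by
  have hΘ (u : ℝ) : HasDerivAt
      (fun u ↦ b * T (√θ * u - √(1 - θ) * v) + c * (√(1 - θ) * u + √θ * v))
      (b * √θ * τ (√θ * u - √(1 - θ) * v) + c * √(1 - θ)) u := by
    have hx : HasDerivAt (fun u ↦ √θ * u - √(1 - θ) * v) (√θ) u := by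
      simpa using ((hasDerivAt_id u).const_mul √θ).sub_const (√(1 - θ) * v)
    have hy : HasDerivAt (fun u ↦ √(1 - θ) * u + √θ * v) (√(1 - θ)) u := by
      simpa using ((hasDerivAt_id u).const_mul √(1 - θ)).add_const (√θ * v)
    exact ((((hT _).comp u hx).const_mul b).add (hy.const_mul c)).congr_deriv (by ring)
  have hΘ' (u : ℝ) : 0 < b * √θ * τ (√θ * u - √(1 - θ) * v) + c * √(1 - θ) := by
    have := hτ (√θ * u - √(1 - θ) * v)
    have := sub_pos.2 hθ₁
    positivity
  have h := integral_le_log_integral_sub_gaussEntropy hΘ hΘ' hf.integrable_of_sq hf.pos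
    (hw.add (integrable_const (epiConst b c θ))) fun u ↦ by
      have := le_log_of_concave hb hc hθ₀ hθ₁ (hτ (√θ * u - √(1 - θ) * v))
      simp only [Pi.add_apply]
      linarith
  simp only [Pi.add_apply] at h
  rw [integral_add hw (integrable_const _)] at h
  simp only [integral_const, probReal_univ, one_smul] at h
  linarith

lemma integrable_log_comp_transport (hf : GaussianGrowth (· ^ 2) f) (hT : Continuous T)
    (hT2 : Integrable (fun z ↦ T z ^ 2) (gaussianReal 0 1)) :
    Integrable (fun p : ℝ × ℝ ↦ Real.log (f (b * T p.1 + c * p.2)))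
      ((gaussianReal 0 1).prod (gaussianReal 0 1)) := by
  refine hf.integrable_log_comp sq_nonneg (by fun_prop) ?_
  refine (((hT2.comp_fst _).const_mul (2 * b ^ 2)).add
    (((integrable_sq_gaussianReal 1).comp_snd _).const_mul (2 * c ^ 2))).mono' (by fun_prop)
    (.of_forall fun p ↦ ?_)
  simp only [Real.norm_of_nonneg (sq_nonneg _), Pi.add_apply]
  nlinarith [sq_nonneg (b * T p.1 - c * p.2)]

lemma GaussianGrowth.log_integral_exp_avgLog_le (hf : GaussianGrowth (· ^ 2) f) (hb : 0 < b)
    (hc : 0 < c) (hθ₀ : 0 < θ) (hθ₁ : θ < 1) :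
    θ * Real.log (∫ y, Real.exp (θ⁻¹ * avgLog (gaussianReal 0 1) b c f y)) ≤
      Real.log (∫ x, f x) - (epiConst b c θ + (1 - θ) * gaussEntropy) := by
  obtain ⟨T, τ, hT, hτ, hlogτ, hT2⟩ := exists_gaussian_transport (hf.exp_avgLog (c := c) hb.ne' hθ₀)
  set I := ∫ y, Real.exp (θ⁻¹ * avgLog (gaussianReal 0 1) b c f y)
  have hTc : Continuous T := continuous_iff_continuousAt.2 fun z ↦ (hT z).continuousAt
  have hA := integrable_log_comp_transport (b := b) (c := c) hf hTc hT2
  have hL : Integrable (fun z ↦ avgLog (gaussianReal 0 1) b c f (T z)) (gaussianReal 0 1) :=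
    hA.integral_prod_left
  have hθlog (z : ℝ) : θ * Real.log (τ z) = θ * Real.log I +
      θ * Real.log (gaussianPDFReal 0 1 z) - avgLog (gaussianReal 0 1) b c f (T z) := by
    rw [hlogτ, Real.log_exp]
    field_simp
  have hpdf : Integrable (fun z ↦ θ * Real.log I + θ * Real.log (gaussianPDFReal 0 1 z))
      (gaussianReal 0 1) := (integrable_const _).add (integrable_log_gaussianPDFReal.const_mul θ)
  have hτi : Integrable (fun z ↦ θ * Real.log (τ z)) (gaussianReal 0 1) := by
    simp only [hθlog]
    exact hpdf.sub hL
  have hvalue : ∫ p : ℝ × ℝ, (Real.log (f (b * T p.1 + c * p.2)) + θ * Real.log (τ p.1))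
      ∂(gaussianReal 0 1).prod (gaussianReal 0 1) = θ * Real.log I - θ * gaussEntropy := by
    have hτint : ∫ z, θ * Real.log (τ z) ∂gaussianReal 0 1 = θ * Real.log I - θ * gaussEntropy -
        ∫ z, avgLog (gaussianReal 0 1) b c f (T z) ∂gaussianReal 0 1 := by
      simp_rw [hθlog]
      rw [integral_sub hpdf hL, integral_add (integrable_const _)
        (integrable_log_gaussianPDFReal.const_mul θ), integral_const_mul θ
        fun z ↦ Real.log (gaussianPDFReal 0 1 z), integral_log_gaussianPDFReal]
      simp only [integral_const, probReal_univ, one_smul]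
      ring
    rw [integral_add hA (hτi.comp_fst _), integral_prod _ hA,
      integral_fun_fst (μ := gaussianReal 0 1) fun z ↦ θ * Real.log (τ z), hτint]
    simp [avgLog]
  have hst : √θ ^ 2 + √(1 - θ) ^ 2 = 1 := by
    rw [Real.sq_sqrt hθ₀.le, Real.sq_sqrt (sub_pos.2 hθ₁).le, add_sub_cancel]
  have h := integral_gaussian_prod_le_of_rotated_slices (Real.sqrt_nonneg _) hst
    (hA.add (hτi.comp_fst _)) fun v hv ↦ rotated_slice_le hf hb hc hθ₀ hθ₁ hT hτ v hv
  simp only [Pi.add_apply] at h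
  rw [hvalue] at h
  linarith

end FunctionalInequality

section Tensorization

lemma measurePreserving_finCons {n : ℕ} {α : Type*} [MeasurableSpace α] (μ : Measure α)
    [SigmaFinite μ] :
    MeasurePreserving (fun p : α × (Fin n → α) ↦ (Fin.cons p.1 p.2 : Fin (n + 1) → α))
      (μ.prod (Measure.pi fun _ ↦ μ)) (Measure.pi fun _ ↦ μ) := by
  convert (measurePreserving_piFinSuccAbove (fun _ : Fin (n + 1) ↦ μ) 0).symm
  simp [MeasurableEquiv.piFinSuccAbove, Fin.insertNthEquiv]

lemma ofReal_exp_integral_le_lintegral {α : Type*} [MeasurableSpace α] {μ : Measure α}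
    [IsProbabilityMeasure μ] {g : α → ℝ} (hg : Integrable g μ) :
    ENNReal.ofReal (Real.exp (∫ x, g x ∂μ)) ≤ ∫⁻ x, ENNReal.ofReal (Real.exp (g x)) ∂μ := by
  have hpos : 0 ≤ᵐ[μ] fun x ↦ Real.exp (g x) := .of_forall fun x ↦ (Real.exp_pos _).le
  by_cases htop : ∫⁻ x, ENNReal.ofReal (Real.exp (g x)) ∂μ = ⊤
  · exact htop ▸ le_top
  have hexp : Integrable (fun x ↦ Real.exp (g x)) μ :=
    ⟨Real.continuous_exp.comp_aestronglyMeasurable hg.1,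
      (hasFiniteIntegral_iff_ofReal hpos).2 (lt_top_iff_ne_top.2 htop)⟩
  rw [← ofReal_integral_eq_lintegral_ofReal hexp hpos]
  exact ENNReal.ofReal_le_ofReal (convexOn_exp.map_integral_le Real.continuous_exp.continuousOn
    isClosed_univ (.of_forall fun _ ↦ Set.mem_univ _) hg hexp)

lemma lintegral_exp_integral_le_one {α β : Type*} [MeasurableSpace α] [MeasurableSpace β]
    {μ : Measure α} [IsProbabilityMeasure μ] {ν : Measure β} [SFinite ν] {h : α → β → ℝ}
    (hm : Measurable fun p : α × β ↦ h p.1 p.2) (hi : ∀ y, Integrable (h · y) μ)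
    (hle : ∀ x, ∫⁻ y, ENNReal.ofReal (Real.exp (h x y)) ∂ν ≤ 1) :
    ∫⁻ y, ENNReal.ofReal (Real.exp (∫ x, h x y ∂μ)) ∂ν ≤ 1 :=
  calc ∫⁻ y, ENNReal.ofReal (Real.exp (∫ x, h x y ∂μ)) ∂ν
      ≤ ∫⁻ y, ∫⁻ x, ENNReal.ofReal (Real.exp (h x y)) ∂μ ∂ν :=
        lintegral_mono fun y ↦ ofReal_exp_integral_le_lintegral (hi y)
    _ = ∫⁻ x, ∫⁻ y, ENNReal.ofReal (Real.exp (h x y)) ∂ν ∂μ :=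
        (lintegral_lintegral_swap hm.exp.ennreal_ofReal.aemeasurable).symm
    _ ≤ ∫⁻ _, 1 ∂μ := lintegral_mono hle
    _ = 1 := by simp

namespace GaussianGrowth

variable {n : ℕ} {f : (Fin n → ℝ) → ℝ} {b c θ : ℝ}

lemma integrable_of_sqNorm (hf : GaussianGrowth sqNorm f) : Integrable f :=
  hf.integrable fun _ ↦ integrable_exp_neg_mul_sqNorm

lemma measurable_avgLog (hf : GaussianGrowth sqNorm f) (b c : ℝ) :
    Measurable (avgLog (stdGaussN n) b c f) := by
  have h : Continuous fun q : (Fin n → ℝ) × (Fin n → ℝ) ↦ Real.log (f (b • q.1 + c • q.2)) :=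
    hf.continuous_log.comp (by fun_prop)
  exact (h.stronglyMeasurable.integral_prod_right' (ν := stdGaussN n)).measurable

lemma lintegral_exp_avgLog_le_one_real {f : ℝ → ℝ} (hf : GaussianGrowth (· ^ 2) f) (hb : 0 < b)
    (hc : 0 < c) (hθ₀ : 0 < θ) (hθ₁ : θ < 1) :
    ∫⁻ y, ENNReal.ofReal (Real.exp (θ⁻¹ * (avgLog (gaussianReal 0 1) b c f y -
      (Real.log (∫ x, f x) - (epiConst b c θ + (1 - θ) * gaussEntropy))))) ≤ 1 := by
  have hG := hf.exp_avgLog (c := c) hb.ne' hθ₀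
  have hlog := hf.log_integral_exp_avgLog_le hb hc hθ₀ hθ₁
  have hpos := integral_pos_of_forall_pos hG.pos hG.integrable_of_sq
  set k := Real.log (∫ x, f x) - (epiConst b c θ + (1 - θ) * gaussEntropy)
  simp_rw [mul_sub, Real.exp_sub]
  rw [← ofReal_integral_eq_lintegral_ofReal (hG.integrable_of_sq.div_const _)
    (.of_forall fun y ↦ by positivity), integral_div, ENNReal.ofReal_le_one,
    div_le_one (Real.exp_pos _), ← Real.log_le_iff_le_exp hpos, ← div_eq_inv_mul, le_div_iff₀' hθ₀]
  exact hlog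

end GaussianGrowth

namespace GaussianGrowth

variable {n : ℕ} {f : (Fin (n + 1) → ℝ) → ℝ}

lemma slice (hf : GaussianGrowth sqNorm f) (x₀ : ℝ) :
    GaussianGrowth sqNorm fun x ↦ f (Fin.cons x₀ x) := by
  refine ⟨hf.continuous.comp (continuous_const.finCons continuous_id), fun x ↦ hf.pos _, ?_, ?_⟩
  · obtain ⟨A, B, hB, h⟩ := hf.le_log
    refine ⟨A - B * x₀ ^ 2, B, hB, fun x ↦ le_of_eq_of_le ?_ (h _)⟩
    rw [sqNorm_cons]
    ring
  · obtain ⟨A, B, hB, h⟩ := hf.log_le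
    refine ⟨A - B * x₀ ^ 2, B, hB, fun x ↦ (h _).trans_eq ?_⟩
    rw [sqNorm_cons]
    ring

lemma continuous_marginal (hf : GaussianGrowth sqNorm f) :
    Continuous fun x₀ ↦ ∫ x, f (Fin.cons x₀ x) := by
  obtain ⟨A, B, hB, hup⟩ := hf.exists_le_exp
  refine continuous_of_dominated (bound := fun x ↦ Real.exp A * Real.exp (-B * sqNorm x))
    (fun x₀ ↦ (hf.slice x₀).continuous.aestronglyMeasurable) (fun x₀ ↦ .of_forall fun x ↦ ?_)
    ((integrable_exp_neg_mul_sqNorm hB).const_mul _)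
    (.of_forall fun x ↦ hf.continuous.comp (Continuous.finCons (by fun_prop) (by fun_prop)))
  rw [Real.norm_of_nonneg (hf.pos _).le, ← Real.exp_add]
  refine (hup _).trans (Real.exp_le_exp.2 ?_)
  rw [sqNorm_cons]
  linarith [mul_nonneg hB.le (sq_nonneg x₀)]

lemma marginal (hf : GaussianGrowth sqNorm f) :
    GaussianGrowth (· ^ 2) fun x₀ ↦ ∫ x, f (Fin.cons x₀ x) := by
  have hpos (x₀ : ℝ) : 0 < ∫ x, f (Fin.cons x₀ x) :=
    integral_pos_of_forall_pos (hf.slice x₀).pos (hf.slice x₀).integrable_of_sqNorm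
  have hsplit (A B x₀ : ℝ) (x : Fin n → ℝ) : Real.exp (A - B * sqNorm (Fin.cons x₀ x)) =
      Real.exp (A - B * x₀ ^ 2) * Real.exp (-B * sqNorm x) := by
    rw [sqNorm_cons, ← Real.exp_add]
    ring_nf
  have hlog (A : ℝ) {B : ℝ} (hB : 0 < B) (x₀ : ℝ) :
      Real.log (∫ x : Fin n → ℝ, Real.exp (A - B * x₀ ^ 2) * Real.exp (-B * sqNorm x)) =
        A + Real.log (∫ x : Fin n → ℝ, Real.exp (-B * sqNorm x)) - B * x₀ ^ 2 := by
    rw [integral_const_mul, Real.log_mul (Real.exp_pos _).ne' (integral_pos_of_forall_pos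
      (fun _ ↦ Real.exp_pos _) (integrable_exp_neg_mul_sqNorm hB)).ne', Real.log_exp]
    ring
  have hexp {B : ℝ} (hB : 0 < B) (C : ℝ) :
      Integrable fun x : Fin n → ℝ ↦ C * Real.exp (-B * sqNorm x) :=
    (integrable_exp_neg_mul_sqNorm hB).const_mul C
  refine ⟨hf.continuous_marginal, hpos, ?_, ?_⟩
  · obtain ⟨A, B, hB, hlow⟩ := hf.exists_exp_le
    refine ⟨_, B, hB, fun x₀ ↦ (hlog A hB x₀).symm.trans_le (Real.log_le_log
      (integral_pos_of_forall_pos (fun x ↦ by positivity) (hexp hB _))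
      (integral_mono (hexp hB _) (hf.slice x₀).integrable_of_sqNorm fun x ↦ ?_))⟩
    exact (hsplit A B x₀ x).symm.trans_le (hlow _)
  · obtain ⟨A, B, hB, hup⟩ := hf.exists_le_exp
    refine ⟨_, B, hB, fun x₀ ↦ (Real.log_le_log (hpos x₀)
      (integral_mono (hf.slice x₀).integrable_of_sqNorm (hexp hB _) fun x ↦ ?_)).trans_eq
      (hlog A hB x₀)⟩
    exact (hup _).trans_eq (hsplit A B x₀ x)

lemma integral_eq_integral_marginal (hf : GaussianGrowth sqNorm f) :
    ∫ x, f x = ∫ x₀, ∫ x, f (Fin.cons x₀ x) := by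
  have hcons := measurePreserving_finCons (n := n) (volume : Measure ℝ)
  rw [volume_pi, ← hcons.map_eq,
    integral_map hcons.aemeasurable hf.continuous.aestronglyMeasurable]
  exact integral_prod _ (hcons.integrable_comp_of_integrable hf.integrable_of_sqNorm)

variable {b c θ : ℝ}

lemma measurable_avgLog_slice (hf : GaussianGrowth sqNorm f) :
    Measurable fun p : ℝ × (Fin n → ℝ) ↦
      avgLog (stdGaussN n) b c (fun x ↦ f (Fin.cons p.1 x)) p.2 := by
  have h : Continuous fun q : (ℝ × (Fin n → ℝ)) × (Fin n → ℝ) ↦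
      Real.log (f (Fin.cons q.1.1 (b • q.1.2 + c • q.2))) :=
    hf.continuous_log.comp (Continuous.finCons (by fun_prop) (by fun_prop))
  exact (h.stronglyMeasurable.integral_prod_right' (ν := stdGaussN n)).measurable

lemma integrable_log_cons (hf : GaussianGrowth sqNorm f) (y₀ : ℝ) (y : Fin n → ℝ) :
    Integrable (fun p : ℝ × (Fin n → ℝ) ↦
      Real.log (f (Fin.cons (b * y₀ + c * p.1) (b • y + c • p.2))))
      ((gaussianReal 0 1).prod (stdGaussN n)) := by
  have hcont : Continuous fun p : ℝ × (Fin n → ℝ) ↦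
      (Fin.cons (b * y₀ + c * p.1) (b • y + c • p.2) : Fin (n + 1) → ℝ) :=
    Continuous.finCons (by fun_prop) (by fun_prop)
  refine hf.integrable_log_comp sqNorm_nonneg hcont.measurable ?_
  simp only [sqNorm_cons]
  exact ((integrable_sq_add_mul _ c).comp_fst _).add ((integrable_sqNorm_add_smul c _).comp_snd _)

lemma avgLog_cons (hf : GaussianGrowth sqNorm f) (y₀ : ℝ) (y : Fin n → ℝ) :
    avgLog (stdGaussN (n + 1)) b c f (Fin.cons y₀ y) =
      ∫ z₀, avgLog (stdGaussN n) b c (fun x ↦ f (Fin.cons (b * y₀ + c * z₀) x)) y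
        ∂gaussianReal 0 1 := by
  have hcons := measurePreserving_finCons (n := n) (gaussianReal 0 1)
  have hadd (p : ℝ × (Fin n → ℝ)) :
      b • (Fin.cons y₀ y : Fin (n + 1) → ℝ) + c • (Fin.cons p.1 p.2 : Fin (n + 1) → ℝ) =
        Fin.cons (b * y₀ + c * p.1) (b • y + c • p.2) := by
    ext i
    refine Fin.cases ?_ (fun j ↦ ?_) i <;> simp
  have hlog : Continuous fun z ↦ Real.log (f (b • Fin.cons y₀ y + c • z)) :=
    hf.continuous_log.comp (by fun_prop)
  rw [avgLog, stdGaussN, ← hcons.map_eq,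
    integral_map hcons.aemeasurable hlog.aestronglyMeasurable]
  simp_rw [hadd]
  exact integral_prod _ (hf.integrable_log_cons y₀ y)

lemma lintegral_exp_avgLog_cons_le_one (hf : GaussianGrowth sqNorm f) {K : ℝ}
    (hslice : ∀ x₀, ∫⁻ y, ENNReal.ofReal (Real.exp (θ⁻¹ *
      (avgLog (stdGaussN n) b c (fun x ↦ f (Fin.cons x₀ x)) y -
        (Real.log (∫ x, f (Fin.cons x₀ x)) - K)))) ≤ 1) (y₀ : ℝ) :
    ∫⁻ y, ENNReal.ofReal (Real.exp (θ⁻¹ * (avgLog (stdGaussN (n + 1)) b c f (Fin.cons y₀ y) -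
      (avgLog (gaussianReal 0 1) b c (fun x₀ ↦ ∫ x, f (Fin.cons x₀ x)) y₀ - K)))) ≤ 1 := by
  have hF := hf.marginal
  set F : ℝ → ℝ := fun x₀ ↦ ∫ x, f (Fin.cons x₀ x)
  set h : ℝ → (Fin n → ℝ) → ℝ := fun x₀ y ↦
    θ⁻¹ * (avgLog (stdGaussN n) b c (fun x ↦ f (Fin.cons x₀ x)) y - (Real.log (F x₀) - K))
  have hlogF := hF.integrable_log_affine (b * y₀) c
  have hlogFK : Integrable (fun z₀ ↦ Real.log (F (b * y₀ + c * z₀)) - K) (gaussianReal 0 1) :=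
    hlogF.sub (integrable_const K)
  have hslices (y : Fin n → ℝ) : Integrable (fun z₀ ↦
      avgLog (stdGaussN n) b c (fun x ↦ f (Fin.cons (b * y₀ + c * z₀) x)) y)
      (gaussianReal 0 1) := (hf.integrable_log_cons y₀ y).integral_prod_left
  have hmeas : Measurable fun p : ℝ × (Fin n → ℝ) ↦ h (b * y₀ + c * p.1) p.2 := by
    have hshift : Measurable fun p : ℝ × (Fin n → ℝ) ↦ (b * y₀ + c * p.1, p.2) := by fun_prop
    exact (((hf.measurable_avgLog_slice.sub ((hF.continuous_log.measurable.comp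
      measurable_fst).sub_const K)).const_mul θ⁻¹).comp hshift)
  have hint (y : Fin n → ℝ) : ∫ z₀, h (b * y₀ + c * z₀) y ∂gaussianReal 0 1 =
      θ⁻¹ * (avgLog (stdGaussN (n + 1)) b c f (Fin.cons y₀ y) -
        (avgLog (gaussianReal 0 1) b c F y₀ - K)) := by
    rw [integral_const_mul, integral_sub (hslices y) hlogFK,
      ← hf.avgLog_cons, integral_sub hlogF (integrable_const K)]
    simp [avgLog]
  simp_rw [← hint]
  exact lintegral_exp_integral_le_one hmeas
    (fun y ↦ ((hslices y).sub hlogFK).const_mul _)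
    fun z₀ ↦ hslice (b * y₀ + c * z₀)

end GaussianGrowth

lemma lintegral_eq_lintegral_cons {n : ℕ} {g : (Fin (n + 1) → ℝ) → ENNReal} (hg : Measurable g) :
    ∫⁻ x, g x = ∫⁻ x₀, ∫⁻ x, g (Fin.cons x₀ x) := by
  have hcons := measurePreserving_finCons (n := n) (volume : Measure ℝ)
  rw [volume_pi, ← hcons.map_eq, lintegral_map hg hcons.measurable]
  exact lintegral_prod _ (hg.comp hcons.measurable).aemeasurable

lemma GaussianGrowth.lintegral_exp_avgLog_le_one {b c θ : ℝ} (hb : 0 < b) (hc : 0 < c)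
    (hθ₀ : 0 < θ) (hθ₁ : θ < 1) {n : ℕ} {f : (Fin n → ℝ) → ℝ} (hf : GaussianGrowth sqNorm f) :
    ∫⁻ y, ENNReal.ofReal (Real.exp (θ⁻¹ * (avgLog (stdGaussN n) b c f y -
      (Real.log (∫ x, f x) - n * (epiConst b c θ + (1 - θ) * gaussEntropy))))) ≤ 1 := by
  induction n with
  | zero =>
    have hconst (x : Fin 0 → ℝ) : f x = f 0 := congrArg f (Subsingleton.elim _ _)
    simp_rw [avgLog, hconst]
    simp [volume_pi, Measure.real]
  | succ n ih =>
    set κ := epiConst b c θ + (1 - θ) * gaussEntropy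
    set F : ℝ → ℝ := fun x₀ ↦ ∫ x, f (Fin.cons x₀ x)
    have hF : ∫ x, f x = ∫ x₀, F x₀ := hf.integral_eq_integral_marginal
    have hsplit (y₀ : ℝ) (y : Fin n → ℝ) :
        ENNReal.ofReal (Real.exp (θ⁻¹ * (avgLog (stdGaussN (n + 1)) b c f (Fin.cons y₀ y) -
          (Real.log (∫ x₀, F x₀) - (n + 1 : ℕ) * κ)))) =
        ENNReal.ofReal (Real.exp (θ⁻¹ * (avgLog (gaussianReal 0 1) b c F y₀ -
          (Real.log (∫ x₀, F x₀) - κ)))) *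
        ENNReal.ofReal (Real.exp (θ⁻¹ * (avgLog (stdGaussN (n + 1)) b c f (Fin.cons y₀ y) -
          (avgLog (gaussianReal 0 1) b c F y₀ - n * κ)))) := by
      rw [← ENNReal.ofReal_mul (Real.exp_pos _).le, ← Real.exp_add, ← mul_add]
      congr 3
      push_cast
      ring
    rw [hF, lintegral_eq_lintegral_cons
      (((hf.measurable_avgLog b c).sub_const _).const_mul _).exp.ennreal_ofReal]
    simp_rw [hsplit, lintegral_const_mul' _ _ ENNReal.ofReal_ne_top]
    calc _ ≤ ∫⁻ y₀, ENNReal.ofReal (Real.exp (θ⁻¹ * (avgLog (gaussianReal 0 1) b c F y₀ -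
          (Real.log (∫ x₀, F x₀) - κ)))) :=
        lintegral_mono fun y₀ ↦ mul_le_of_le_one_right' <|
          hf.lintegral_exp_avgLog_cons_le_one (fun x₀ ↦ ih (hf.slice x₀)) y₀
      _ ≤ 1 := hf.marginal.lintegral_exp_avgLog_le_one_real hb hc hθ₀ hθ₁

end Tensorization

section GaussianMixture

lemma map_add_left_stdGaussN {n : ℕ} (x : Fin n → ℝ) :
    (stdGaussN n).map (x + ·) =
      volume.withDensity fun y ↦ ENNReal.ofReal (gaussDensity 1 (y - x)) := by
  ext s hs
  rw [Measure.map_apply (measurable_const_add x) hs, stdGaussN_eq_withDensity,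
    withDensity_apply _ (measurable_const_add x hs), withDensity_apply _ hs,
    ← (measurePreserving_add_left volume x).setLIntegral_comp_preimage hs (by fun_prop)]
  simp only [add_sub_cancel_left]

variable {ι : Type*} [Fintype ι] {n : ℕ}

/-- The law of `X m + Z`, where `m` is uniform on `ι` and `Z` is standard Gaussian noise: the
channel output when the codewords `X m` are sent equiprobably. -/
def gaussMixture (X : ι → Fin n → ℝ) : Measure (Fin n → ℝ) :=
  (Fintype.card ι : ENNReal)⁻¹ • ∑ m, (stdGaussN n).map (X m + ·)

/-- The Lebesgue density of `gaussMixture X`. -/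
def mixDensity (X : ι → Fin n → ℝ) (y : Fin n → ℝ) : ℝ :=
  𝔼 m, gaussDensity 1 (y - X m)

/-- The differential entropy, in nats, of `gaussMixture X`. -/
def mixEntropy (X : ι → Fin n → ℝ) : ℝ :=
  -∫ y, Real.log (mixDensity X y) ∂gaussMixture X

lemma continuous_mixDensity (X : ι → Fin n → ℝ) : Continuous (mixDensity X) := by
  unfold mixDensity
  simp_rw [Fintype.expect_eq_sum_div_card]
  fun_prop

lemma gaussMixture_eq_withDensity (X : ι → Fin n → ℝ) :
    gaussMixture X = volume.withDensity fun y ↦ ENNReal.ofReal (mixDensity X y) := by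
  ext s hs
  have hdensity (y : Fin n → ℝ) : ENNReal.ofReal (mixDensity X y) =
      (Fintype.card ι : ENNReal)⁻¹ * ∑ m, ENNReal.ofReal (gaussDensity 1 (y - X m)) := by
    rcases isEmpty_or_nonempty ι with h | h
    · simp [mixDensity]
    rw [mixDensity, Fintype.expect_eq_sum_div_card, ENNReal.ofReal_div_of_pos (by positivity),
      ENNReal.ofReal_sum_of_nonneg fun m _ ↦ (gaussDensity_pos one_pos _).le,
      ENNReal.ofReal_natCast, ENNReal.div_eq_inv_mul]
  simp_rw [gaussMixture, map_add_left_stdGaussN, Measure.smul_apply, Measure.finsetSum_apply,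
    withDensity_apply _ hs, hdensity, smul_eq_mul]
  rw [lintegral_const_mul _ (by fun_prop), lintegral_finsetSum _ (by fun_prop)]

lemma integral_gaussMixture {X : ι → Fin n → ℝ} {f : (Fin n → ℝ) → ℝ}
    (hf : ∀ m, Integrable (fun z ↦ f (X m + z)) (stdGaussN n)) :
    ∫ y, f y ∂gaussMixture X = 𝔼 m, ∫ z, f (X m + z) ∂stdGaussN n := by
  rw [gaussMixture, integral_smul_measure, integral_finsetSum_measure fun m _ ↦
    (measurableEmbedding_addLeft (X m)).integrable_map_iff.2 (hf m),
    Fintype.expect_eq_sum_div_card, div_eq_inv_mul]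
  simp only [(measurableEmbedding_addLeft _).integral_map, ENNReal.toReal_inv,
    ENNReal.toReal_natCast, smul_eq_mul]

variable [Nonempty ι]

instance (X : ι → Fin n → ℝ) : IsProbabilityMeasure (gaussMixture X) := by
  have hmap (m : ι) : (stdGaussN n).map (X m + ·) Set.univ = 1 := by
    rw [Measure.map_apply (measurable_const_add _) .univ, Set.preimage_univ, measure_univ]
  refine ⟨?_⟩
  simp only [gaussMixture, Measure.smul_apply, Measure.finsetSum_apply, hmap, Finset.sum_const,
    Finset.card_univ, nsmul_eq_mul, mul_one, smul_eq_mul]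
  exact ENNReal.inv_mul_cancel (by simp) (by simp)

lemma integrable_gaussMixture_iff {X : ι → Fin n → ℝ} {f : (Fin n → ℝ) → ℝ} :
    Integrable f (gaussMixture X) ↔ ∀ m, Integrable (fun z ↦ f (X m + z)) (stdGaussN n) := by
  rw [gaussMixture, integrable_smul_measure (by simp) (by simp), integrable_finsetSum_measure]
  simp only [Finset.mem_univ, forall_const,
    (measurableEmbedding_addLeft _).integrable_map_iff, Function.comp_def]

lemma gaussianGrowth_mixDensity (X : ι → Fin n → ℝ) : GaussianGrowth sqNorm (mixDensity X) := by
  set S := ∑ m, sqNorm (X m)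
  set A := n / 2 * Real.log (2 * Real.pi * 1) with hA
  have hS (m : ι) : sqNorm (X m) ≤ S :=
    Finset.single_le_sum (fun m _ ↦ sqNorm_nonneg (X m)) (Finset.mem_univ m)
  have hlow (m : ι) (y : Fin n → ℝ) :
      Real.exp (-(A + S) - 1 * sqNorm y) ≤ gaussDensity 1 (y - X m) := by
    rw [← Real.le_log_iff_exp_le (gaussDensity_pos one_pos _), log_gaussDensity one_pos, ← hA]
    have := sqNorm_add_le y (-X m)
    rw [sqNorm_neg, ← sub_eq_add_neg] at this
    linarith [hS m]
  have hup (m : ι) (y : Fin n → ℝ) :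
      gaussDensity 1 (y - X m) ≤ Real.exp (-A + S / 2 - 1 / 4 * sqNorm y) := by
    rw [← Real.log_le_iff_le_exp (gaussDensity_pos one_pos _), log_gaussDensity one_pos, ← hA]
    have := sqNorm_add_le (y - X m) (X m)
    rw [sub_add_cancel] at this
    linarith [hS m]
  have hpos (y : Fin n → ℝ) : 0 < mixDensity X y :=
    Finset.expect_pos (fun m _ ↦ gaussDensity_pos one_pos _) Finset.univ_nonempty
  refine ⟨continuous_mixDensity X, hpos, ⟨-(A + S), 1, one_pos, fun y ↦ ?_⟩,
    ⟨-A + S / 2, 1 / 4, by norm_num, fun y ↦ ?_⟩⟩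
  · rw [Real.le_log_iff_exp_le (hpos y)]
    exact Finset.le_expect Finset.univ_nonempty fun m _ ↦ hlow m y
  · rw [Real.log_le_iff_le_exp (hpos y)]
    exact Finset.expect_le Finset.univ_nonempty fun m _ ↦ hup m y

lemma integrable_sqNorm_gaussMixture (X : ι → Fin n → ℝ) :
    Integrable sqNorm (gaussMixture X) :=
  integrable_gaussMixture_iff.2 fun m ↦ by simpa using integrable_sqNorm_add_smul 1 (X m)

lemma integral_sqNorm_gaussMixture (X : ι → Fin n → ℝ) :
    ∫ y, sqNorm y ∂gaussMixture X = 𝔼 m, sqNorm (X m) + n := by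
  have h (m : ι) : ∫ z, sqNorm (X m + z) ∂stdGaussN n = sqNorm (X m) + n := by
    simpa using integral_sqNorm_add_smul 1 (X m)
  rw [integral_gaussMixture (integrable_gaussMixture_iff.1 (integrable_sqNorm_gaussMixture X))]
  simp_rw [h]
  rw [Finset.expect_add_distrib, Fintype.expect_const]

lemma integrable_log_mixDensity {κ : Type*} [Fintype κ] [Nonempty κ] (X : ι → Fin n → ℝ)
    (X' : κ → Fin n → ℝ) :
    Integrable (fun y ↦ Real.log (mixDensity X y)) (gaussMixture X') :=
  (gaussianGrowth_mixDensity X).integrable_log_comp sqNorm_nonneg measurable_id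
    (integrable_sqNorm_gaussMixture X')

lemma integrable_mul_mixDensity_iff {X : ι → Fin n → ℝ} {f : (Fin n → ℝ) → ℝ} :
    Integrable (fun y ↦ f y * mixDensity X y) ↔ Integrable f (gaussMixture X) := by
  rw [gaussMixture_eq_withDensity,
    integrable_withDensity_iff (continuous_mixDensity X).measurable.ennreal_ofReal (by simp)]
  simp only [ENNReal.toReal_ofReal ((gaussianGrowth_mixDensity X).pos _).le]

lemma integral_mul_mixDensity (X : ι → Fin n → ℝ) (f : (Fin n → ℝ) → ℝ) :
    ∫ y, f y * mixDensity X y = ∫ y, f y ∂gaussMixture X := by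
  rw [gaussMixture_eq_withDensity, integral_withDensity_eq_integral_toReal_smul
    (continuous_mixDensity X).measurable.ennreal_ofReal (by simp)]
  simp only [ENNReal.toReal_ofReal ((gaussianGrowth_mixDensity X).pos _).le, smul_eq_mul, mul_comm]

lemma integral_mixDensity (X : ι → Fin n → ℝ) : ∫ y, mixDensity X y = 1 := by
  simpa using integral_mul_mixDensity X fun _ ↦ 1

lemma integral_le_log_integral_sub_mixEntropy (X : ι → Fin n → ℝ) {u w : (Fin n → ℝ) → ℝ}
    (hu : Integrable u) (hupos : ∀ y, 0 < u y) (hw : Integrable w (gaussMixture X))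
    (hwu : ∀ y, w y ≤ Real.log (u y)) :
    ∫ y, w y ∂gaussMixture X ≤ Real.log (∫ y, u y) - mixEntropy X := by
  rw [mixEntropy, sub_neg_eq_add]
  exact integral_le_log_integral_add_integral_log (continuous_mixDensity X).measurable
    (gaussianGrowth_mixDensity X).pos (gaussMixture_eq_withDensity X)
    (integrable_log_mixDensity X X) hu hupos hw hwu

lemma mixEntropy_eq_expect (X : ι → Fin n → ℝ) :
    mixEntropy X = -𝔼 m, ∫ z, Real.log (mixDensity X (X m + z)) ∂stdGaussN n := by
  rw [mixEntropy, integral_gaussMixture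
    (integrable_gaussMixture_iff.1 (integrable_log_mixDensity X X))]

lemma mixEntropy_add_const (X : ι → Fin n → ℝ) (d : Fin n → ℝ) :
    mixEntropy (fun m ↦ X m + d) = mixEntropy X := by
  have h (m : ι) (z : Fin n → ℝ) :
      mixDensity (fun m ↦ X m + d) (X m + d + z) = mixDensity X (X m + z) :=
    Finset.expect_congr rfl fun k _ ↦ by rw [add_right_comm, add_sub_add_right_eq_sub]
  simp_rw [mixEntropy_eq_expect, h]

lemma mixEntropy_neg (X : ι → Fin n → ℝ) : mixEntropy (fun m ↦ -X m) = mixEntropy X := by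
  have h (m : ι) (z : Fin n → ℝ) : mixDensity (fun m ↦ -X m) (-X m + -z) = mixDensity X (X m + z) :=
    Finset.expect_congr rfl fun k _ ↦ by
      rw [← gaussDensity_neg 1 (X m + z - X k)]
      exact congrArg _ (by beta_reduce; abel)
  simp_rw [mixEntropy_eq_expect, integral_stdGaussN,
    ← integral_neg_eq_self fun z : Fin n → ℝ ↦
      gaussDensity 1 z * Real.log (mixDensity (fun m ↦ -X m) (_ + z)), h, gaussDensity_neg]

lemma mixDensity_const (x y : Fin n → ℝ) :
    mixDensity (fun _ : ι ↦ x) y = gaussDensity 1 (y - x) :=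
  Fintype.expect_const _

lemma mixEntropy_const (x : Fin n → ℝ) : mixEntropy (fun _ : ι ↦ x) = n * gaussEntropy := by
  simp_rw [mixEntropy_eq_expect, mixDensity_const, add_sub_cancel_left, Fintype.expect_const,
    log_gaussDensity one_pos]
  rw [integral_sub (integrable_const _) (integrable_sqNorm.div_const _), integral_div,
    integral_sqNorm, gaussEntropy]
  simp only [integral_const, probReal_univ, smul_eq_mul]
  ring_nf

lemma mixEntropy_le (X : ι → Fin n → ℝ) {v : ℝ} (hv : 0 < v) :
    mixEntropy X ≤ n / 2 * Real.log (2 * Real.pi * v) + (𝔼 m, sqNorm (X m) + n) / (2 * v) := by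
  lift v to NNReal using hv.le
  have hv' : v ≠ 0 := by simpa using hv.ne'
  have hw : Integrable (fun y ↦ Real.log (gaussDensity v y)) (gaussMixture X) := by
    simp_rw [log_gaussDensity hv]
    exact (integrable_const _).sub ((integrable_sqNorm_gaussMixture X).div_const _)
  have h := integral_le_log_integral_sub_mixEntropy X (integrable_gaussDensity v)
    (gaussDensity_pos hv) hw fun _ ↦ le_rfl
  simp_rw [log_gaussDensity hv] at h
  rw [integral_sub (integrable_const _) ((integrable_sqNorm_gaussMixture X).div_const _),
    integral_div, integral_sqNorm_gaussMixture, integral_gaussDensity hv', Real.log_one] at h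
  simp only [integral_const, probReal_univ, one_smul] at h
  linarith

lemma mul_gaussEntropy_le_mixEntropy (X : ι → Fin n → ℝ) : n * gaussEntropy ≤ mixEntropy X := by
  have h (m : ι) : ∫ z, Real.log (mixDensity X (X m + z)) ∂stdGaussN n ≤ -(n * gaussEntropy) := by
    have hlog := integrable_log_mixDensity X fun _ : Unit ↦ X m
    have := integral_le_log_integral_sub_mixEntropy (fun _ : Unit ↦ X m)
      (gaussianGrowth_mixDensity X).integrable_of_sqNorm (gaussianGrowth_mixDensity X).pos hlog
      fun _ ↦ le_rfl
    rwa [integral_gaussMixture (integrable_gaussMixture_iff.1 hlog), Fintype.expect_const,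
      integral_mixDensity, Real.log_one, mixEntropy_const, zero_sub] at this
  rw [mixEntropy_eq_expect, le_neg]
  exact Finset.expect_le Finset.univ_nonempty fun m _ ↦ h m

lemma integrable_avgLog_add (X : ι → Fin n → ℝ) {b c : ℝ} (hc : 0 ≤ c) (hbc : b ^ 2 + c ^ 2 = 1)
    (x : Fin n → ℝ) :
    Integrable (fun z ↦ avgLog (stdGaussN n) b c (mixDensity X) (x + z)) (stdGaussN n) ∧
      ∫ z, avgLog (stdGaussN n) b c (mixDensity X) (x + z) ∂stdGaussN n =
        ∫ z, Real.log (mixDensity X (b • x + z)) ∂stdGaussN n := by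
  have hrot := measurePreserving_stdGaussN_combination (n := n) hc hbc
  have hlog : Integrable (fun z ↦ Real.log (mixDensity X (b • x + z))) (stdGaussN n) :=
    integrable_gaussMixture_iff.1 (integrable_log_mixDensity X fun _ : Unit ↦ b • x) ()
  have hadd (p : (Fin n → ℝ) × (Fin n → ℝ)) :
      b • x + (b • p.1 + c • p.2) = b • (x + p.1) + c • p.2 := by
    rw [smul_add, add_assoc]
  have hprod : Integrable (fun p : (Fin n → ℝ) × (Fin n → ℝ) ↦
      Real.log (mixDensity X (b • (x + p.1) + c • p.2))) ((stdGaussN n).prod (stdGaussN n)) := by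
    simpa only [Function.comp_def, hadd] using (hrot.integrable_comp hlog.1).2 hlog
  refine ⟨hprod.integral_prod_left, ?_⟩
  conv_rhs => rw [← hrot.map_eq]
  rw [integral_map hrot.aemeasurable (hrot.map_eq.symm ▸ hlog.1)]
  simp_rw [hadd]
  exact (integral_prod _ hprod).symm

lemma le_mixEntropy_smul (X : ι → Fin n → ℝ) {b c θ : ℝ} (hb : 0 < b) (hc : 0 < c)
    (hbc : b ^ 2 + c ^ 2 = 1) (hθ₀ : 0 < θ) (hθ₁ : θ < 1) :
    θ * mixEntropy X + n * (epiConst b c θ + (1 - θ) * gaussEntropy) ≤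
      mixEntropy fun m ↦ b • X m := by
  set q := mixDensity fun m ↦ b • X m
  have hq : GaussianGrowth sqNorm q := gaussianGrowth_mixDensity _
  set K := Real.log (∫ x, q x) - n * (epiConst b c θ + (1 - θ) * gaussEntropy) with hK
  set G : (Fin n → ℝ) → ℝ := fun y ↦ Real.exp (θ⁻¹ * (avgLog (stdGaussN n) b c q y - K))
  have hG : Integrable G ∧ ∫ y, G y ≤ 1 := by
    have hnonneg : 0 ≤ᵐ[volume] G := .of_forall fun y ↦ (Real.exp_pos _).le
    have hle : ∫⁻ y, ENNReal.ofReal (G y) ≤ 1 := hq.lintegral_exp_avgLog_le_one hb hc hθ₀ hθ₁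
    have hmeas : Measurable G := (((hq.measurable_avgLog b c).sub_const K).const_mul _).exp
    refine ⟨⟨hmeas.aestronglyMeasurable,
      (hasFiniteIntegral_iff_ofReal hnonneg).2 (hle.trans_lt ENNReal.one_lt_top)⟩, ?_⟩
    rw [integral_eq_lintegral_of_nonneg_ae hnonneg hmeas.aestronglyMeasurable]
    exact ENNReal.toReal_le_of_le_ofReal zero_le_one (by simpa using hle)
  have hL (m : ι) := integrable_avgLog_add (fun m ↦ b • X m) hc.le hbc (X m)
  have hLmix : Integrable (avgLog (stdGaussN n) b c q) (gaussMixture X) :=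
    integrable_gaussMixture_iff.2 fun m ↦ (hL m).1
  have hLint : ∫ y, avgLog (stdGaussN n) b c q y ∂gaussMixture X =
      -mixEntropy fun m ↦ b • X m := by
    rw [integral_gaussMixture fun m ↦ (hL m).1, mixEntropy_eq_expect, neg_neg]
    exact Finset.expect_congr rfl fun m _ ↦ (hL m).2
  have hgibbs := integral_le_log_integral_sub_mixEntropy X hG.1 (fun y ↦ Real.exp_pos _)
    ((hLmix.sub (integrable_const K)).const_mul θ⁻¹) fun y ↦ (Real.log_exp _).ge
  have hlogG : Real.log (∫ y, G y) ≤ 0 :=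
    Real.log_nonpos (integral_nonneg fun y ↦ (Real.exp_pos _).le) hG.2
  simp only [Pi.sub_apply] at hgibbs
  rw [integral_const_mul, integral_sub hLmix (integrable_const K), hLint] at hgibbs
  simp only [integral_const, probReal_univ, one_smul] at hgibbs
  have hθ : θ⁻¹ * ((-mixEntropy fun m ↦ b • X m) - K) ≤ -mixEntropy X := by linarith
  rw [inv_mul_le_iff₀ hθ₀, hK, integral_mixDensity, Real.log_one] at hθ
  linarith

end GaussianMixture

section Fano

lemma measureReal_mul_log_le_integral_log_indicator {E : Type*} [MeasurableSpace E]
    {μ : Measure E} [IsFiniteMeasure μ] {C : Set E} (hC : MeasurableSet C) {K s : ℝ}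
    (hK : 0 < K) (hs : 0 < s) :
    Integrable (fun y ↦ Real.log (C.indicator (fun _ ↦ K) y + s)) μ ∧
      μ.real C * Real.log K + μ.real Cᶜ * Real.log s ≤
        ∫ y, Real.log (C.indicator (fun _ ↦ K) y + s) ∂μ := by
  have hlog : (fun y ↦ Real.log (C.indicator (fun _ ↦ K) y + s)) = fun y ↦
      C.indicator (fun _ ↦ Real.log (K + s)) y + Cᶜ.indicator (fun _ ↦ Real.log s) y := by
    ext y
    by_cases hy : y ∈ C <;> simp [hy]
  have hint (D : Set E) (hD : MeasurableSet D) (r : ℝ) :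
      Integrable (D.indicator fun _ ↦ r) μ := (integrable_const r).indicator hD
  rw [hlog]
  refine ⟨(hint C hC _).add (hint Cᶜ hC.compl _), ?_⟩
  rw [integral_add (hint C hC _) (hint Cᶜ hC.compl _), integral_indicator_const _ hC,
    integral_indicator_const _ hC.compl, smul_eq_mul, smul_eq_mul]
  gcongr
  exact le_add_of_nonneg_right hs.le

variable {A B : Type*} [Fintype A] [Fintype B] {n : ℕ}

lemma gaussMixture_real_apply (X : A → Fin n → ℝ) (s : Set (Fin n → ℝ)) :
    (gaussMixture X).real s = 𝔼 m, (stdGaussN n).real {z | X m + z ∈ s} := by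
  simp only [gaussMixture, Measure.real, Measure.smul_apply, Measure.finsetSum_apply, smul_eq_mul,
    ENNReal.toReal_mul, (measurableEmbedding_addLeft _).map_apply]
  rw [ENNReal.toReal_sum fun _ _ ↦ measure_ne_top _ _, Fintype.expect_eq_sum_div_card,
    ENNReal.toReal_inv, ENNReal.toReal_natCast, div_eq_inv_mul]
  rfl

lemma sum_measureReal_le_one_of_pairwise_disjoint {E : Type*} [MeasurableSpace E]
    {μ : Measure E} [IsProbabilityMeasure μ] {C : A → Set E} (hC : ∀ w, MeasurableSet (C w))
    (hdisj : Pairwise (Function.onFun Disjoint C)) : ∑ w, μ.real (C w) ≤ 1 := by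
  rw [← measureReal_iUnion_fintype hdisj hC]
  exact measureReal_le_one

lemma integral_gaussMixture_prod (X : A → B → Fin n → ℝ) {f : (Fin n → ℝ) → ℝ} [Nonempty B]
    (hf : ∀ w, Integrable f (gaussMixture (X w))) :
    ∫ y, f y ∂gaussMixture (fun p : A × B ↦ X p.1 p.2) =
      𝔼 w, ∫ y, f y ∂gaussMixture (X w) := by
  rw [integral_gaussMixture (X := fun p : A × B ↦ X p.1 p.2)
    fun p ↦ integrable_gaussMixture_iff.1 (hf p.1) p.2,
    ← Finset.univ_product_univ, Finset.expect_product]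
  exact Finset.expect_congr rfl fun w _ ↦
    (integral_gaussMixture (integrable_gaussMixture_iff.1 (hf w))).symm

variable [Nonempty A] [Nonempty B]

lemma measureReal_mul_log_add_integral_log_mixDensity_le (Y : A → Fin n → ℝ) (X : B → Fin n → ℝ)
    {C : Set (Fin n → ℝ)} (hC : MeasurableSet C) {K s : ℝ} (hK : 0 < K) (hs : 0 < s) :
    (gaussMixture X).real C * Real.log K + (gaussMixture X).real Cᶜ * Real.log s +
        ∫ y, Real.log (mixDensity Y y) ∂gaussMixture X ≤
      K * (gaussMixture Y).real C + s - 1 - mixEntropy X := by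
  set t : (Fin n → ℝ) → ℝ := fun y ↦ C.indicator (fun _ ↦ K) y + s
  have ht (y : Fin n → ℝ) : 0 < t y :=
    add_pos_of_nonneg_of_pos (Set.indicator_nonneg (fun _ _ ↦ hK.le) y) hs
  have hq (y : Fin n → ℝ) : 0 < mixDensity Y y := (gaussianGrowth_mixDensity Y).pos y
  have hind : Integrable (C.indicator fun _ ↦ K) (gaussMixture Y) :=
    (integrable_const K).indicator hC
  have hint : ∫ y, t y * mixDensity Y y = K * (gaussMixture Y).real C + s := by
    rw [integral_mul_mixDensity, integral_add hind (integrable_const s),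
      integral_indicator_const _ hC, integral_const, probReal_univ, one_smul, smul_eq_mul, mul_comm]
  obtain ⟨hlog, hle⟩ :=
    measureReal_mul_log_le_integral_log_indicator (μ := gaussMixture X) hC hK hs
  have hlogY := integrable_log_mixDensity Y X
  have hgibbs := integral_le_log_integral_sub_mixEntropy X
    (integrable_mul_mixDensity_iff.2 (hind.add (integrable_const s)))
    (fun y ↦ mul_pos (ht y) (hq y)) (hlog.add hlogY)
    fun y ↦ (Real.log_mul (ht y).ne' (hq y).ne').ge
  have hpos : 0 < K * (gaussMixture Y).real C + s := by positivity
  simp only [Pi.add_apply] at hgibbs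
  rw [integral_add hlog hlogY] at hgibbs
  have hsub := Real.log_le_sub_one_of_pos hpos
  rw [← hint] at hsub ⊢
  linarith

/-- The rate sacrifice `1 - s` in `log (M (1 - s))` keeps the test function
`M (1 - s) 1_{C w} + s` of total mass at most one on average and bounded below by `s`. -/
lemma fano_of_pairwise_disjoint (X : A → B → Fin n → ℝ) {C : A → Set (Fin n → ℝ)}
    (hC : ∀ w, MeasurableSet (C w)) (hdisj : Pairwise (Function.onFun Disjoint C)) {s : ℝ}
    (hs₀ : 0 < s) (hs₁ : s < 1) :
    (1 - 𝔼 w, (gaussMixture (X w)).real (C w)ᶜ) * Real.log (Fintype.card A * (1 - s)) +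
        (𝔼 w, (gaussMixture (X w)).real (C w)ᶜ) * Real.log s ≤
      mixEntropy (fun p : A × B ↦ X p.1 p.2) - 𝔼 w, mixEntropy (X w) := by
  set Y : A × B → Fin n → ℝ := fun p ↦ X p.1 p.2
  set K := Fintype.card A * (1 - s) with hKdef
  have hK : 0 < K := mul_pos (by positivity) (sub_pos.2 hs₁)
  have h := Finset.expect_le_expect fun w (_ : w ∈ Finset.univ) ↦
    measureReal_mul_log_add_integral_log_mixDensity_le Y (X w) (hC w) hK hs₀
  have hmass : 𝔼 w, K * (gaussMixture Y).real (C w) ≤ 1 - s := by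
    rw [← Finset.mul_expect, hKdef, mul_right_comm, Fintype.card_mul_expect]
    exact mul_le_of_le_one_left (sub_nonneg.2 hs₁.le)
      (sum_measureReal_le_one_of_pairwise_disjoint hC hdisj)
  have hY : mixEntropy Y = -𝔼 w, ∫ y, Real.log (mixDensity Y y) ∂gaussMixture (X w) := by
    rw [mixEntropy, integral_gaussMixture_prod X fun w ↦ integrable_log_mixDensity Y (X w)]
  have hcompl (w : A) :
      (gaussMixture (X w)).real (C w) = 1 - (gaussMixture (X w)).real (C w)ᶜ := by
    rw [probReal_compl_eq_one_sub (hC w), sub_sub_cancel]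
  simp only [hcompl, Finset.expect_add_distrib, Finset.expect_sub_distrib, ← Finset.expect_mul,
    Fintype.expect_const] at h
  linarith

lemma fano (X : A → B → Fin n → ℝ) (g : (Fin n → ℝ) → A) {s : ℝ} (hs₀ : 0 < s) (hs₁ : s < 1) :
    (1 - 𝔼 w, (gaussMixture (X w)).real {y | g y ≠ w}) * Real.log (Fintype.card A * (1 - s)) +
        (𝔼 w, (gaussMixture (X w)).real {y | g y ≠ w}) * Real.log s ≤
      mixEntropy (fun p : A × B ↦ X p.1 p.2) - 𝔼 w, mixEntropy (X w) := by
  have hdecode {w : A} {y : Fin n → ℝ}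
      (hy : y ∉ toMeasurable (gaussMixture (X w)) {y | g y ≠ w}) : g y = w :=
    not_not.1 fun h ↦ hy (subset_toMeasurable _ _ h)
  have h := fano_of_pairwise_disjoint X
    (C := fun w ↦ (toMeasurable (gaussMixture (X w)) {y | g y ≠ w})ᶜ)
    (fun w ↦ (measurableSet_toMeasurable _ _).compl)
    (fun w w' hne ↦ Set.disjoint_left.2 fun y hy hy' ↦ hne ((hdecode hy).symm.trans (hdecode hy')))
    hs₀ hs₁
  simpa only [compl_compl, Measure.real, measure_toMeasurable] using h

end Fano

section EntropyPower

lemma exists_mul_log_add_epiConst_eq {b c N : ℝ} (hb : 0 < b) (hc : 0 < c) (hN : 0 < N) :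
    ∃ θ, 0 < θ ∧ θ < 1 ∧
      θ * (1 / 2 * Real.log N) + epiConst b c θ = 1 / 2 * Real.log (b ^ 2 * N + c ^ 2) := by
  set S := b ^ 2 * N + c ^ 2 with hS
  have hSpos : 0 < S := by positivity
  have hcompl : 1 - b ^ 2 * N / S = c ^ 2 / S := by
    rw [one_sub_div hSpos.ne', hS, add_sub_cancel_left]
  have hlogb : Real.log (b / √(b ^ 2 * N / S)) = 1 / 2 * Real.log S - 1 / 2 * Real.log N := by
    rw [Real.log_div hb.ne' (by positivity), Real.log_sqrt (by positivity),
      Real.log_div (by positivity) hSpos.ne', Real.log_mul (by positivity) hN.ne', Real.log_pow]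
    push_cast
    ring
  have hlogc : Real.log (c / √(c ^ 2 / S)) = 1 / 2 * Real.log S := by
    rw [Real.log_div hc.ne' (by positivity), Real.log_sqrt (by positivity),
      Real.log_div (by positivity) hSpos.ne', Real.log_pow]
    push_cast
    ring
  refine ⟨b ^ 2 * N / S, by positivity, ?_, ?_⟩
  · rw [← sub_pos, hcompl]
    positivity
  · rw [epiConst, hcompl, hlogb, hlogc]
    linear_combination (1 / 2 * Real.log S) * (-hcompl)

variable {ι A B : Type*} [Fintype ι] [Fintype A] [Fintype B] {n : ℕ}

lemma mixEntropy_comp_equiv [Nonempty ι] [Nonempty A] (X : ι → Fin n → ℝ) (e : A ≃ ι) :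
    mixEntropy (fun m ↦ X (e m)) = mixEntropy X := by
  have hq : mixDensity (fun m ↦ X (e m)) = mixDensity X :=
    funext fun y ↦ Fintype.expect_equiv e _ _ fun _ ↦ rfl
  rw [mixEntropy_eq_expect, mixEntropy_eq_expect, hq,
    Fintype.expect_equiv e _ (fun m ↦ ∫ z, Real.log (mixDensity X (X m + z)) ∂stdGaussN n)
      fun _ ↦ rfl]

lemma dotProduct_self_eq_sqNorm (x : Fin n → ℝ) : x ⬝ᵥ x = sqNorm x := by
  simp only [dotProduct, sqNorm, sq]

lemma expect_sqNorm_smul_add [Nonempty ι] (x : ι → Fin n → ℝ) (b : ℝ) (y : Fin n → ℝ) :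
    𝔼 m, sqNorm (b • x m + y) =
      b ^ 2 * 𝔼 m, sqNorm (x m) + 2 * b * ((𝔼 m, x m) ⬝ᵥ y) + sqNorm y := by
  have hdot : 𝔼 m, x m ⬝ᵥ y = (𝔼 m, x m) ⬝ᵥ y := by
    simp only [dotProduct, Finset.expect_apply, Finset.expect_mul, Finset.expect_sum_comm]
  simp only [sqNorm_add, sqNorm_smul, smul_dotProduct, Finset.expect_add_distrib,
    Fintype.expect_const, smul_eq_mul, ← Finset.mul_expect, hdot]
  ring

lemma expect_sqNorm_sub_expect [Nonempty ι] (x : ι → Fin n → ℝ) :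
    𝔼 m, sqNorm (x m - 𝔼 k, x k) = 𝔼 m, sqNorm (x m) - sqNorm (𝔼 k, x k) := by
  have h := expect_sqNorm_smul_add x 1 (-𝔼 k, x k)
  simp only [one_smul, ← sub_eq_add_neg, dotProduct_neg, sqNorm_neg] at h
  rw [h, dotProduct_self_eq_sqNorm]
  ring

lemma expect_dotProduct_sq_le (x y : ι → Fin n → ℝ) :
    (𝔼 m, x m ⬝ᵥ y m) ^ 2 ≤ (𝔼 m, sqNorm (x m)) * 𝔼 m, sqNorm (y m) := by
  have h := Finset.sum_mul_sq_le_sq_mul_sq (Finset.univ : Finset (ι × Fin n))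
    (fun p ↦ x p.1 p.2) (fun p ↦ y p.1 p.2)
  simp only [Fintype.sum_prod_type] at h
  simp only [Fintype.expect_eq_sum_div_card, div_pow, div_mul_div_comm, ← sq]
  gcongr
  exact h

/-- The conditional entropy power of `X w m + Z` given `w`, for `(w, m)` uniform and `Z` standard
Gaussian noise, normalised so that the noise alone has entropy power one. -/
def condEntropyPower (X : B → A → Fin n → ℝ) : ℝ :=
  Real.exp (2 * ((𝔼 w, mixEntropy (X w)) / n - gaussEntropy))

lemma condEntropyPower_pos (X : B → A → Fin n → ℝ) : 0 < condEntropyPower X := Real.exp_pos _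

lemma expect_mixEntropy_eq (hn : 0 < n) (X : B → A → Fin n → ℝ) :
    𝔼 w, mixEntropy (X w) = n * (gaussEntropy + 1 / 2 * Real.log (condEntropyPower X)) := by
  rw [condEntropyPower, Real.log_exp]
  field_simp
  ring

variable [Nonempty A]

lemma condEntropyPower_smul_abs (X : B → A → Fin n → ℝ) (b : ℝ) :
    condEntropyPower (fun w m ↦ |b| • X w m) = condEntropyPower fun w m ↦ b • X w m := by
  rcases abs_choice b with h | h
  · rw [h]
  · simp only [condEntropyPower, h, neg_smul, mixEntropy_neg]

variable [Nonempty B]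

lemma expect_mixEntropy_le (X : B → A → Fin n → ℝ) {v : ℝ} (hv : 0 < v)
    (hX : 𝔼 w, 𝔼 m, sqNorm (X w m) ≤ n * (v - 1)) :
    𝔼 w, mixEntropy (X w) ≤ n * (gaussEntropy + 1 / 2 * Real.log v) := by
  calc 𝔼 w, mixEntropy (X w)
      ≤ 𝔼 w, (n / 2 * Real.log (2 * Real.pi * v) + (𝔼 m, sqNorm (X w m) + n) / (2 * v)) :=
        Finset.expect_le_expect fun w _ ↦ mixEntropy_le (X w) hv
    _ = n / 2 * Real.log (2 * Real.pi * v) + (𝔼 w, 𝔼 m, sqNorm (X w m) + n) / (2 * v) := by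
        rw [Finset.expect_add_distrib, ← Finset.expect_div, Finset.expect_add_distrib,
          Fintype.expect_const, Fintype.expect_const]
    _ ≤ n / 2 * Real.log (2 * Real.pi * v) + (n * (v - 1) + n) / (2 * v) := by gcongr
    _ = n * (gaussEntropy + 1 / 2 * Real.log v) := by
        rw [Real.log_mul (by positivity) hv.ne', gaussEntropy]
        field_simp
        ring

lemma one_le_condEntropyPower (hn : 0 < n) (X : B → A → Fin n → ℝ) : 1 ≤ condEntropyPower X := by
  have h : n * gaussEntropy ≤ 𝔼 w, mixEntropy (X w) :=
    Finset.le_expect Finset.univ_nonempty fun w _ ↦ mul_gaussEntropy_le_mixEntropy (X w)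
  refine Real.one_le_exp (mul_nonneg zero_le_two (sub_nonneg.2 ?_))
  rwa [le_div_iff₀ (by positivity), mul_comm]

lemma condEntropyPower_le (hn : 0 < n) (X : B → A → Fin n → ℝ) :
    condEntropyPower X ≤
      1 + (𝔼 w, 𝔼 m, sqNorm (X w m) - 𝔼 w, sqNorm (𝔼 m, X w m)) / n := by
  have hvar : 𝔼 w, 𝔼 m, sqNorm (X w m - 𝔼 k, X w k) =
      𝔼 w, 𝔼 m, sqNorm (X w m) - 𝔼 w, sqNorm (𝔼 m, X w m) := by
    simp_rw [expect_sqNorm_sub_expect, Finset.expect_sub_distrib]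
  have hvar₀ : 0 ≤ 𝔼 w, 𝔼 m, sqNorm (X w m - 𝔼 k, X w k) :=
    Finset.expect_nonneg fun w _ ↦ Finset.expect_nonneg fun m _ ↦ sqNorm_nonneg _
  rw [← hvar]
  have hv : 0 < 1 + (𝔼 w, 𝔼 m, sqNorm (X w m - 𝔼 k, X w k)) / n := by positivity
  have h := expect_mixEntropy_le (fun w m ↦ X w m - 𝔼 k, X w k) hv
    (by rw [add_sub_cancel_left, mul_div_cancel₀ _ (by positivity)])
  simp only [sub_eq_add_neg, mixEntropy_add_const] at h
  rw [expect_mixEntropy_eq hn, mul_le_mul_iff_right₀ (by positivity), add_le_add_iff_left,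
    mul_le_mul_iff_right₀ (by positivity),
    Real.log_le_log_iff (condEntropyPower_pos X) (by simpa only [sub_eq_add_neg] using hv)] at h
  simpa only [sub_eq_add_neg] using h

/-- Conditional entropy power inequality; the noise of variance `1 - b ^ 2` added to
`b (X + Z)` restores unit variance. -/
lemma le_condEntropyPower_smul (hn : 0 < n) (X : B → A → Fin n → ℝ) {b : ℝ} (hb : |b| ≤ 1) :
    1 + b ^ 2 * (condEntropyPower X - 1) ≤ condEntropyPower fun w m ↦ b • X w m := by
  rw [← condEntropyPower_smul_abs, ← sq_abs]
  rcases (abs_nonneg b).eq_or_lt with h₀ | hb₀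
  · simpa [← h₀] using one_le_condEntropyPower hn _
  rcases hb.eq_or_lt with h₁ | hb₁
  · simp [h₁]
  generalize |b| = β at *
  have hβ : 0 < 1 - β ^ 2 := by nlinarith
  have hc : 0 < √(1 - β ^ 2) := Real.sqrt_pos.2 hβ
  have hc2 : √(1 - β ^ 2) ^ 2 = 1 - β ^ 2 := Real.sq_sqrt hβ.le
  set N := condEntropyPower X
  have hN : 0 < N := condEntropyPower_pos X
  obtain ⟨θ, hθ₀, hθ₁, hθ⟩ := exists_mul_log_add_epiConst_eq hb₀ hc hN
  have h := Finset.expect_le_expect fun w (_ : w ∈ Finset.univ) ↦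
    le_mixEntropy_smul (X w) hb₀ hc (by rw [hc2]; ring) hθ₀ hθ₁
  rw [Finset.expect_add_distrib, ← Finset.mul_expect, Fintype.expect_const,
    expect_mixEntropy_eq hn, expect_mixEntropy_eq hn (fun w m ↦ β • X w m)] at h
  rw [show 1 + β ^ 2 * (N - 1) = β ^ 2 * N + √(1 - β ^ 2) ^ 2 by rw [hc2]; ring,
    ← Real.log_le_log_iff (by positivity) (condEntropyPower_pos _)]
  have h' := le_of_mul_le_mul_left (h.trans_eq' (by ring) :
    n * (θ * (1 / 2 * Real.log N) + epiConst β (√(1 - β ^ 2)) θ + gaussEntropy) ≤ _)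
    (by positivity)
  rw [hθ] at h'
  linarith

end EntropyPower

section ConverseForCodes

variable {A B : Type*} [Fintype A] [Fintype B] [Nonempty A] {n : ℕ}

lemma fano_of_encoder (X : A → Fin n → ℝ) (g : (Fin n → ℝ) → A) {s : ℝ} (hs₀ : 0 < s)
    (hs₁ : s < 1) :
    (1 - 𝔼 w, (stdGaussN n).real {z | g (X w + z) ≠ w}) *
          Real.log (Fintype.card A * (1 - s)) +
        (𝔼 w, (stdGaussN n).real {z | g (X w + z) ≠ w}) * Real.log s ≤
      mixEntropy X - n * gaussEntropy := by
  have h := fano (fun w (_ : Unit) ↦ X w) g hs₀ hs₁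
  have hunit : mixEntropy (fun p : A × Unit ↦ X p.1) = mixEntropy X :=
    mixEntropy_comp_equiv X (Equiv.prodPUnit A)
  rw [hunit] at h
  simpa only [gaussMixture_real_apply, mixEntropy_const, Fintype.expect_const,
    Set.mem_ofPred_eq] using h

lemma expect_sqNorm_smul_add_le (x : B → A → Fin n → ℝ) (y : B → Fin n → ℝ) {b P Q P' : ℝ}
    (hx : 𝔼 w, 𝔼 m, sqNorm (x w m) ≤ n * P) (hmean : 𝔼 w, sqNorm (𝔼 m, x w m) ≤ n * Q)
    (hy : 𝔼 w, sqNorm (y w) ≤ n * P') :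
    𝔼 w, 𝔼 m, sqNorm (b • x w m + y w) ≤ n * (b ^ 2 * P + 2 * |b| * √(Q * P') + P') := by
  have hmean₀ : 0 ≤ 𝔼 w, sqNorm (𝔼 m, x w m) := Finset.expect_nonneg fun w _ ↦ sqNorm_nonneg _
  have hy₀ : 0 ≤ 𝔼 w, sqNorm (y w) := Finset.expect_nonneg fun w _ ↦ sqNorm_nonneg _
  have hcorr : |𝔼 w, (𝔼 m, x w m) ⬝ᵥ y w| ≤ n * √(Q * P') := by
    rw [← Real.sqrt_sq n.cast_nonneg, ← Real.sqrt_mul (sq_nonneg _)]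
    refine Real.abs_le_sqrt ((expect_dotProduct_sq_le _ y).trans ?_)
    calc _ ≤ n * Q * (n * P') := mul_le_mul hmean hy hy₀ (hmean₀.trans hmean)
      _ = n ^ 2 * (Q * P') := by ring
  have hcross : b * 𝔼 w, (𝔼 m, x w m) ⬝ᵥ y w ≤ |b| * (n * √(Q * P')) :=
    (le_abs_self _).trans ((abs_mul _ _).trans_le (by gcongr))
  simp only [expect_sqNorm_smul_add, Finset.expect_add_distrib, ← Finset.mul_expect]
  linarith [mul_le_mul_of_nonneg_left hx (sq_nonneg b)]

variable [Nonempty B]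

lemma le_log_condEntropyPower (hn : 0 < n) (x : B → A → Fin n → ℝ) (d : B → Fin n → ℝ)
    (g : (Fin n → ℝ) → A) {s ε : ℝ} (hs₀ : 0 < s) (hs₁ : s < 1)
    (hε : ε = 𝔼 w, 𝔼 m, (stdGaussN n).real {z | g (x w m + d w + z) ≠ m}) :
    (1 - ε) * Real.log (Fintype.card A * (1 - s)) + ε * Real.log s ≤
      n * (1 / 2 * Real.log (condEntropyPower x)) := by
  have h := Finset.expect_le_expect fun w (_ : w ∈ Finset.univ) ↦
    fano_of_encoder (fun m ↦ x w m + d w) g hs₀ hs₁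
  simp only [Finset.expect_add_distrib, ← Finset.expect_mul, Finset.expect_sub_distrib,
    Fintype.expect_const, mixEntropy_add_const, ← hε] at h
  rw [expect_mixEntropy_eq hn] at h
  linarith

lemma fano_le_log_div (hn : 0 < n) (x : B → A → Fin n → ℝ) (y : B → Fin n → ℝ) {b σ : ℝ}
    (hb : |b| ≤ 1) (hσ : 0 < σ) (hpow : 𝔼 w, 𝔼 m, sqNorm (b • x w m + y w) ≤ n * (σ - 1))
    (g : (Fin n → ℝ) → B) {s ε : ℝ} (hs₀ : 0 < s) (hs₁ : s < 1)
    (hε : ε = 𝔼 w, 𝔼 m, (stdGaussN n).real {z | g (b • x w m + y w + z) ≠ w}) :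
    (1 - ε) * Real.log (Fintype.card B * (1 - s)) + ε * Real.log s ≤
      n * (1 / 2 * Real.log (σ / (1 + b ^ 2 * (condEntropyPower x - 1)))) := by
  have h := fano (fun w m ↦ b • x w m + y w) g hs₀ hs₁
  simp only [gaussMixture_real_apply, Set.mem_ofPred_eq, ← hε, mixEntropy_add_const] at h
  rw [expect_mixEntropy_eq hn fun w m ↦ b • x w m] at h
  have hN := one_le_condEntropyPower hn x
  have hden : 0 < 1 + b ^ 2 * (condEntropyPower x - 1) := by nlinarith [sq_nonneg b]
  have hepi := Real.log_le_log hden (le_condEntropyPower_smul hn x hb)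
  have hjoint := expect_mixEntropy_le (fun (_ : Unit) (p : B × A) ↦ b • x p.1 p.2 + y p.1) hσ
    (by rwa [Fintype.expect_const, ← Finset.univ_product_univ, Finset.expect_product])
  rw [Fintype.expect_const] at hjoint
  rw [Real.log_div hσ.ne' hden.ne']
  have : (0 : ℝ) < n := by positivity
  nlinarith

lemma exists_mul_eq_condEntropyPower_sub_one (hn : 0 < n) (x : B → A → Fin n → ℝ) {P : ℝ}
    (hx : 𝔼 w, 𝔼 m, sqNorm (x w m) ≤ n * P) :
    ∃ α, 0 ≤ α ∧ α ≤ 1 ∧ α * P = condEntropyPower x - 1 ∧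
      𝔼 w, sqNorm (𝔼 m, x w m) ≤ n * ((1 - α) * P) := by
  have hn' : (0 : ℝ) < n := by positivity
  set N := condEntropyPower x
  set S := 𝔼 w, sqNorm (𝔼 m, x w m)
  have hN : 0 ≤ N - 1 := sub_nonneg.2 (one_le_condEntropyPower hn x)
  have hS : 0 ≤ S := Finset.expect_nonneg fun w _ ↦ sqNorm_nonneg _
  have hNS : n * (N - 1) + S ≤ n * P := by
    have := condEntropyPower_le hn x
    rw [← sub_le_iff_le_add', le_div_iff₀' hn'] at this
    linarith
  have hNP : N - 1 ≤ P := le_of_mul_le_mul_left (by linarith) hn'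
  have hP : 0 ≤ P := hN.trans hNP
  have hα : (N - 1) / P * P = N - 1 :=
    div_mul_cancel_of_imp fun h ↦ le_antisymm (h ▸ hNP) hN
  refine ⟨(N - 1) / P, div_nonneg hN hP, div_le_one_of_le₀ hNP hP, hα, ?_⟩
  rw [sub_mul, hα]
  linarith

lemma exists_rate_bounds_of_code (hn : 0 < n) (x : B → A → Fin n → ℝ) (y : B → Fin n → ℝ)
    (g₁ : (Fin n → ℝ) → A) (g₂ : (Fin n → ℝ) → B) {a b P₁ P₂ s ε₁ ε₂ : ℝ} (hb : |b| ≤ 1)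
    (hs₀ : 0 < s) (hs₁ : s < 1) (hx : 𝔼 w, 𝔼 m, sqNorm (x w m) ≤ n * P₁)
    (hy : 𝔼 w, sqNorm (y w) ≤ n * P₂)
    (hε₁ : ε₁ = 𝔼 w, 𝔼 m, (stdGaussN n).real {z | g₁ (x w m + a • y w + z) ≠ m})
    (hε₂ : ε₂ = 𝔼 w, 𝔼 m, (stdGaussN n).real {z | g₂ (b • x w m + y w + z) ≠ w}) :
    ∃ α, 0 ≤ α ∧ α ≤ 1 ∧
      (1 - ε₁) * Real.log (Fintype.card A * (1 - s)) + ε₁ * Real.log s ≤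
        n * (1 / 2 * Real.log (1 + α * P₁)) ∧
      (1 - ε₂) * Real.log (Fintype.card B * (1 - s)) + ε₂ * Real.log s ≤
        n * (1 / 2 * Real.log
          ((1 + b ^ 2 * P₁ + 2 * |b| * √((1 - α) * P₁ * P₂) + P₂) / (1 + b ^ 2 * α * P₁))) := by
  obtain ⟨α, hα₀, hα₁, hα, hmean⟩ := exists_mul_eq_condEntropyPower_sub_one hn x hx
  have hn' : (0 : ℝ) < n := by positivity
  have hP₁ : 0 ≤ P₁ := nonneg_of_mul_nonneg_right (hx.trans' <|
    Finset.expect_nonneg fun w _ ↦ Finset.expect_nonneg fun m _ ↦ sqNorm_nonneg _) hn'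
  have hP₂ : 0 ≤ P₂ := nonneg_of_mul_nonneg_right
    (hy.trans' <| Finset.expect_nonneg fun w _ ↦ sqNorm_nonneg _) hn'
  refine ⟨α, hα₀, hα₁, ?_, ?_⟩
  · rw [hα, add_sub_cancel]
    exact le_log_condEntropyPower hn x (fun w ↦ a • y w) g₁ hs₀ hs₁ hε₁
  · rw [mul_assoc (b ^ 2) α, hα]
    refine fano_le_log_div hn x y hb (by positivity) ?_ g₂ hs₀ hs₁ hε₂
    exact (expect_sqNorm_smul_add_le x y hx hmean hy).trans_eq (by ring)

end ConverseForCodes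

section Converse

lemma one_div_mul_sum_sum_eq_expect {M₁ M₂ : ℕ} (φ : Fin M₁ → Fin M₂ → ℝ) :
    (1 / (M₁ * M₂) : ℝ) * ∑ w₁, ∑ w₂, φ w₁ w₂ = 𝔼 w₂, 𝔼 w₁, φ w₁ w₂ := by
  simp only [Fintype.expect_eq_sum_div_card, Fintype.card_fin, ← Finset.sum_div]
  rw [Finset.sum_comm, div_div, one_div, inv_mul_eq_div]

lemma achievableGT1_iff {a b P₁ P₂ R₁ R₂ : ℝ} :
    AchievableGT1 a b P₁ P₂ R₁ R₂ ↔
      ∀ ε : ℝ, 0 < ε → ∃ (n M₁ M₂ : ℕ) (f₁ : Fin M₁ → Fin M₂ → Fin n → ℝ)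
        (f₂ : Fin M₂ → Fin n → ℝ) (g₁ : (Fin n → ℝ) → Fin M₁) (g₂ : (Fin n → ℝ) → Fin M₂),
        0 < n ∧ 0 < M₁ ∧ 0 < M₂ ∧
        𝔼 w₂, 𝔼 w₁, sqNorm (f₁ w₁ w₂) ≤ n * P₁ ∧ 𝔼 w₂, sqNorm (f₂ w₂) ≤ n * P₂ ∧
        R₁ - ε ≤ Real.logb 2 M₁ / n ∧ R₂ - ε ≤ Real.logb 2 M₂ / n ∧
        𝔼 w₂, 𝔼 w₁, (stdGaussN n).real {z | g₁ (f₁ w₁ w₂ + a • f₂ w₂ + z) ≠ w₁} ≤ ε ∧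
        𝔼 w₂, 𝔼 w₁, (stdGaussN n).real {z | g₂ (b • f₁ w₁ w₂ + f₂ w₂ + z) ≠ w₂} ≤ ε := by
  refine forall₂_congr fun ε _ ↦ exists₄_congr fun n M₁ M₂ f₁ ↦ exists₃_congr fun f₂ g₁ g₂ ↦
    and_congr_right fun hn ↦ and_congr_right fun _ ↦ and_congr_right fun _ ↦ ?_
  have hn' : (0 : ℝ) < n := by positivity
  have hpow (c P : ℝ) : 1 / n * c ≤ P ↔ c ≤ n * P := by
    rw [one_div_mul_eq_div, div_le_iff₀' hn']
  refine and_congr ?_ (and_congr ?_ (and_congr_right fun _ ↦ and_congr_right fun _ ↦ ?_))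
  · rw [one_div_mul_sum_sum_eq_expect]
    simp only [← Finset.mul_expect]
    exact hpow _ _
  · rw [← Finset.mul_sum, mul_left_comm, hpow, Fintype.expect_eq_sum_div_card, Fintype.card_fin,
      one_div_mul_eq_div]
    rfl
  · rw [peG1T1, peG2T1, one_div_mul_sum_sum_eq_expect, one_div_mul_sum_sum_eq_expect]
    rfl

lemma isClosed_DPC12 {b P₁ P₂ : ℝ} (hP₁ : 0 ≤ P₁) (hP₂ : 0 ≤ P₂) : IsClosed (DPC12 b P₁ P₂) := by
  have hproj : DPC12 b P₁ P₂ = Prod.fst '' {p : (ℝ × ℝ) × Set.Icc (0 : ℝ) 1 |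
      p.1.1 ≤ 1 / 2 * (Real.log (1 + p.2 * P₁) / Real.log 2) ∧
      p.1.2 ≤ 1 / 2 * (Real.log ((1 + b ^ 2 * P₁ + 2 * |b| * √((1 - p.2) * P₁ * P₂) + P₂)
        / (1 + b ^ 2 * p.2 * P₁)) / Real.log 2)} := by
    ext R
    constructor
    · rintro ⟨α, hα₀, hα₁, hR₁, hR₂⟩
      exact ⟨(R, ⟨α, hα₀, hα₁⟩), ⟨hR₁, hR₂⟩, rfl⟩
    · rintro ⟨⟨R', α⟩, ⟨hR₁, hR₂⟩, rfl⟩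
      exact ⟨α, α.2.1, α.2.2, hR₁, hR₂⟩
  rw [hproj]
  refine isClosedMap_fst_of_compactSpace _ (IsClosed.inter ?_ ?_)
  · refine isClosed_le (by fun_prop)
      (continuous_const.mul (Continuous.div_const (Continuous.log (by fun_prop) ?_) _))
    intro p
    have := p.2.2.1
    positivity
  · have hden (p : (ℝ × ℝ) × Set.Icc (0 : ℝ) 1) : 0 < 1 + b ^ 2 * (p.2 : ℝ) * P₁ := by
      have := p.2.2.1
      positivity
    refine isClosed_le (by fun_prop) (continuous_const.mul (Continuous.div_const
      (Continuous.log (Continuous.div (by fun_prop) (by fun_prop) ?_) ?_) _))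
    · exact fun p ↦ (hden p).ne'
    · exact fun p ↦ (div_pos (by positivity) (hden p)).ne'

/-- What Fano's inequality, applied with error probability at most `ε`, leaves of a rate that
falls short of `R` by at most `ε`. -/
def fanoRate (R ε : ℝ) : ℝ :=
  (1 - ε) * (R - ε) - (-Real.log (1 - ε) - ε * Real.log ε) / Real.log 2

lemma tendsto_fanoRate (R : ℝ) :
    Filter.Tendsto (fanoRate R) (nhdsWithin 0 (Set.Ioi 0)) (nhds R) := by
  have hcont : ContinuousAt (fanoRate R) 0 := by
    have hlog : ContinuousAt (fun ε : ℝ ↦ Real.log (1 - ε)) 0 :=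
      ContinuousAt.log (by fun_prop) (by norm_num)
    have hmul := Real.continuous_mul_log.continuousAt (x := 0)
    exact ContinuousAt.sub (by fun_prop) ((hlog.neg.sub hmul).div_const _)
  have h₀ : fanoRate R 0 = R := by simp [fanoRate]
  simpa only [h₀] using hcont.tendsto.mono_left nhdsWithin_le_nhds

lemma fanoRate_le {ε e T R : ℝ} {n M : ℕ} (hn : 0 < n) (hM : 0 < M) (hε₀ : 0 < ε) (hε₁ : ε < 1)
    (he₀ : 0 ≤ e) (he : e ≤ ε) (hR : R - ε ≤ Real.logb 2 M / n)
    (h : (1 - e) * Real.log (M * (1 - ε)) + e * Real.log ε ≤ n * (1 / 2 * Real.log T)) :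
    fanoRate R ε ≤ 1 / 2 * Real.logb 2 T := by
  have hn' : (0 : ℝ) < n := by exact_mod_cast hn
  have hM' : (1 : ℝ) ≤ M := by exact_mod_cast hM
  have hlog2 : 0 < Real.log 2 := Real.log_pos one_lt_two
  have hlogM : 0 ≤ Real.log M := Real.log_nonneg hM'
  have hlog1ε : Real.log (1 - ε) ≤ 0 := Real.log_nonpos (by linarith) (by linarith)
  have hlogε : Real.log ε ≤ 0 := Real.log_nonpos hε₀.le hε₁.le
  rw [Real.log_mul (by linarith) (by linarith)] at h
  rw [Real.logb, div_div, le_div_iff₀ (by positivity)] at hR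
  set c := -Real.log (1 - ε) - ε * Real.log ε with hc
  have hc₀ : 0 ≤ c := by nlinarith
  have hM_le : (1 - ε) * Real.log M - c ≤ n * (1 / 2 * Real.log T) := by nlinarith
  have hR_le : (1 - ε) * ((R - ε) * (Real.log 2 * n)) ≤ (1 - ε) * Real.log M :=
    mul_le_mul_of_nonneg_left hR (by linarith)
  have hn_mul : n * ((1 - ε) * (R - ε) * Real.log 2 - c) ≤ n * (1 / 2 * Real.log T) := by
    have : (1 : ℝ) ≤ n := by exact_mod_cast hn
    nlinarith
  calc fanoRate R ε = ((1 - ε) * (R - ε) * Real.log 2 - c) / Real.log 2 := by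
        rw [fanoRate, ← hc]; field_simp
    _ ≤ (1 / 2 * Real.log T) / Real.log 2 := by
        gcongr; exact le_of_mul_le_mul_left hn_mul hn'
    _ = 1 / 2 * Real.logb 2 T := mul_div_assoc _ _ _

lemma AchievableGT1.fanoRate_mem_DPC12 {a b P₁ P₂ R₁ R₂ ε : ℝ} (hb : |b| ≤ 1)
    (h : AchievableGT1 a b P₁ P₂ R₁ R₂) (hε₀ : 0 < ε) (hε₁ : ε < 1) :
    (fanoRate R₁ ε, fanoRate R₂ ε) ∈ DPC12 b P₁ P₂ := by
  obtain ⟨n, M₁, M₂, f₁, f₂, g₁, g₂, hn, hM₁, hM₂, hpow₁, hpow₂, hR₁, hR₂, he₁, he₂⟩ :=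
    achievableGT1_iff.1 h ε hε₀
  have : Nonempty (Fin M₁) := ⟨⟨0, hM₁⟩⟩
  have : Nonempty (Fin M₂) := ⟨⟨0, hM₂⟩⟩
  obtain ⟨α, hα₀, hα₁, hrate₁, hrate₂⟩ := exists_rate_bounds_of_code hn
    (fun w₂ w₁ ↦ f₁ w₁ w₂) f₂ g₁ g₂ hb hε₀ hε₁ hpow₁ hpow₂ rfl rfl
  rw [Fintype.card_fin] at hrate₁ hrate₂
  have expect_nonneg₂ {φ : Fin M₂ → Fin M₁ → ℝ} (hφ : ∀ i j, 0 ≤ φ i j) : 0 ≤ 𝔼 i, 𝔼 j, φ i j :=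
    Finset.expect_nonneg fun i _ ↦ Finset.expect_nonneg fun j _ ↦ hφ i j
  exact ⟨α, hα₀, hα₁,
    fanoRate_le hn hM₁ hε₀ hε₁ (expect_nonneg₂ fun _ _ ↦ measureReal_nonneg) he₁ hR₁ hrate₁,
    fanoRate_le hn hM₂ hε₀ hε₁ (expect_nonneg₂ fun _ _ ↦ measureReal_nonneg) he₂ hR₂ hrate₂⟩

theorem capacityGT1_subset_DPC12 {a b P₁ P₂ : ℝ} (hb : |b| ≤ 1) (hP₁ : 0 ≤ P₁) (hP₂ : 0 ≤ P₂) :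
    CapacityGT1 a b P₁ P₂ ⊆ DPC12 b P₁ P₂ := by
  refine closure_minimal (fun R hR ↦ ?_) (isClosed_DPC12 hP₁ hP₂)
  refine (isClosed_DPC12 hP₁ hP₂).mem_of_tendsto
    ((tendsto_fanoRate R.1).prodMk_nhds (tendsto_fanoRate R.2)) ?_
  filter_upwards [Ioo_mem_nhdsGT (zero_lt_one (α := ℝ))] with ε hε
  exact AchievableGT1.fanoRate_mem_DPC12 hb hR hε.1 hε.2

end Converse

section RandomCoding

section Selection

variable {Ω X Y : Type*} [MeasurableSpace Ω] [MeasurableSpace X] [MeasurableSpace Y]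

lemma exists_measurable_selection {L : ℕ} {φ : X → Y} (hφ : Measurable φ) {G : Set X}
    (hG : MeasurableSet G) {r : Fin L → Ω → X} (hr : ∀ l, Measurable (r l)) (y₀ : Y) :
    ∃ f : Ω → Y, Measurable f ∧
      ∀ ω, (∃ l, r l ω ∈ G ∧ f ω = φ (r l ω)) ∨ ((∀ l, r l ω ∉ G) ∧ f ω = y₀) := by
  classical
  let p (k : ℕ) (ω : Ω) : Prop := ∀ h : k < L, r ⟨k, h⟩ ω ∈ G
  let f (k : ℕ) (ω : Ω) : Y := if h : k < L then φ (r ⟨k, h⟩ ω) else y₀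
  have hp (k : ℕ) : MeasurableSet {ω | p k ω} := by
    simp only [p, Set.ofPred_forall]
    exact MeasurableSet.iInter fun h ↦ hr _ hG
  have hf (k : ℕ) : Measurable (f k) := by
    by_cases h : k < L
    · simp only [f, h, dite_true]
      exact hφ.comp (hr _)
    · simp only [f, h, dite_false, measurable_const]
  have hex (ω : Ω) : ∃ k, p k ω := ⟨L, fun h ↦ absurd h (lt_irrefl L)⟩
  refine ⟨fun ω ↦ f (Nat.find (hex ω)) ω, Measurable.find hf hp hex, fun ω ↦ ?_⟩
  by_cases h : Nat.find (hex ω) < L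
  · exact .inl ⟨⟨_, h⟩, Nat.find_spec (hex ω) h, dif_pos h⟩
  · refine .inr ⟨fun l hl ↦ h ((Nat.find_min' (hex ω) ?_).trans_lt l.2), dif_neg h⟩
    exact fun _ ↦ hl

end Selection

section Decoder

variable {W K X : Type*} [Fintype W] [Fintype K] {n : ℕ}

open scoped Classical in
/-- Decoding by a test `A`: message `w`, carried by any of the codewords `c w k`, is declared when
one of these passes the test against the received vector. -/
def testDecoder [Nonempty W] (A : Set (X × (Fin n → ℝ))) (c : W → K → X) (y : Fin n → ℝ) : W :=
  if h : ∃ w k, (c w k, y) ∈ A then h.choose else Classical.arbitrary W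

open scoped Classical in
/-- The union bound on the probability that, when message `w` produces the noiseless output `s`,
a codeword of some other message passes the test `A`. -/
def falseAlarm (A : Set (X × (Fin n → ℝ))) (c : W → K → X) (w : W) (s : Fin n → ℝ) : ENNReal :=
  ∑ w' ∈ Finset.univ.erase w, ∑ k, stdGaussN n {z | (c w' k, s + z) ∈ A}

lemma measure_testDecoder_ne_le [Nonempty W] (A : Set (X × (Fin n → ℝ))) (c : W → K → X) (w : W)
    (k : K) (s : Fin n → ℝ) :
    stdGaussN n {z | testDecoder A c (s + z) ≠ w} ≤
      stdGaussN n {z | (c w k, s + z) ∉ A} + falseAlarm A c w s := by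
  classical
  have hsub : {z | testDecoder A c (s + z) ≠ w} ⊆ {z | (c w k, s + z) ∉ A} ∪
      ⋃ w' ∈ Finset.univ.erase w, ⋃ k, {z | (c w' k, s + z) ∈ A} := by
    intro z hz
    by_cases h : ∃ w k, (c w k, s + z) ∈ A
    · have hdec : testDecoder A c (s + z) = h.choose := dif_pos h
      obtain ⟨k', hk'⟩ := h.choose_spec
      simp only [Set.mem_union, Set.mem_iUnion]
      exact .inr ⟨h.choose, by simpa [← hdec] using hz, k', hk'⟩
    · exact .inl fun hk ↦ h ⟨w, k, hk⟩
  refine (measure_mono hsub).trans ((measure_union_le _ _).trans (add_le_add_right ?_ _))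
  exact (measure_biUnion_finset_le _ _).trans
    (Finset.sum_le_sum fun w' _ ↦ measure_iUnion_fintype_le _ _)

variable [MeasurableSpace X] {Ω : Type*} [MeasurableSpace Ω]

lemma measurable_stdGaussN_section {u : Ω → X} (hu : Measurable u) {s : Ω → Fin n → ℝ}
    (hs : Measurable s) {A : Set (X × (Fin n → ℝ))} (hA : MeasurableSet A) :
    Measurable fun ω ↦ stdGaussN n {z | (u ω, s ω + z) ∈ A} := by
  have hmap : Measurable fun q : Ω × (Fin n → ℝ) ↦ (u q.1, s q.1 + q.2) := by fun_prop
  exact measurable_measure_prodMk_left (hmap hA)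

lemma measurable_falseAlarm {A : Set (X × (Fin n → ℝ))} (hA : MeasurableSet A) {c : Ω → W → K → X}
    (hc : ∀ w k, Measurable fun ω ↦ c ω w k) {s : Ω → Fin n → ℝ} (hs : Measurable s) (w : W) :
    Measurable fun ω ↦ falseAlarm A (c ω) w (s ω) :=
  Finset.measurable_fun_sum _ fun w' _ ↦ Finset.measurable_fun_sum _ fun k _ ↦
    measurable_stdGaussN_section (hc w' k) hs hA

lemma lintegral_falseAlarm_le {P : Measure Ω} {A : Set (X × (Fin n → ℝ))} (hA : MeasurableSet A)
    {c : Ω → W → K → X} (hc : ∀ w k, Measurable fun ω ↦ c ω w k) {s : Ω → Fin n → ℝ}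
    (hs : Measurable s) {w : W} {p : ENNReal}
    (hp : ∀ w' ≠ w, ∀ k, ∫⁻ ω, stdGaussN n {z | (c ω w' k, s ω + z) ∈ A} ∂P ≤ p) :
    ∫⁻ ω, falseAlarm A (c ω) w (s ω) ∂P ≤
      ((Fintype.card W - 1 : ℕ) : ENNReal) * (Fintype.card K * p) := by
  classical
  have hsec (w' : W) (k : K) := measurable_stdGaussN_section (hc w' k) hs hA
  simp only [falseAlarm]
  rw [lintegral_finsetSum _ fun w' _ ↦ Finset.measurable_fun_sum _ fun k _ ↦ hsec w' k,
    ← Finset.card_univ, ← Finset.card_erase_of_mem (Finset.mem_univ w), ← nsmul_eq_mul]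
  refine Finset.sum_le_card_nsmul _ _ _ fun w' hw' ↦ ?_
  rw [lintegral_finsetSum _ fun k _ ↦ hsec w' k, ← Finset.card_univ, ← nsmul_eq_mul]
  exact Finset.sum_le_card_nsmul _ _ _ fun k _ ↦ hp w' (Finset.ne_of_mem_erase hw') k

/-- If, outside the event `N`, some codeword of the true message `w` passes the test with
probability at least `1 - δ`, and a codeword of another message passes it with probability at most
`p`, then the mean error probability of `testDecoder` is at most
`δ + P(N) + (|W| - 1) |K| p`. A measurable majorant is exhibited because `testDecoder` depends on
the codebook through an arbitrary choice. -/
lemma exists_majorant_testDecoder_error [Nonempty W] {P : Measure Ω} [IsProbabilityMeasure P]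
    {A : Set (X × (Fin n → ℝ))} (hA : MeasurableSet A) {c : Ω → W → K → X}
    (hc : ∀ w k, Measurable fun ω ↦ c ω w k) {s : Ω → Fin n → ℝ} (hs : Measurable s) {w : W}
    {N : Set Ω} (hN : MeasurableSet N) {δ η p : ℝ} (hδ₀ : 0 ≤ δ) (hη₀ : 0 ≤ η) (hp₀ : 0 ≤ p)
    (hPN : P N ≤ ENNReal.ofReal η)
    (hδ : ∀ ω ∉ N, ∃ k, stdGaussN n {z | (c ω w k, s ω + z) ∉ A} ≤ ENNReal.ofReal δ)
    (hp : ∀ w' ≠ w, ∀ k,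
      ∫⁻ ω, stdGaussN n {z | (c ω w' k, s ω + z) ∈ A} ∂P ≤ ENNReal.ofReal p) :
    ∃ e : Ω → ENNReal, Measurable e ∧
      (∀ ω, stdGaussN n {z | testDecoder A (c ω) (s ω + z) ≠ w} ≤ e ω) ∧
      ∫⁻ ω, e ω ∂P ≤
        ENNReal.ofReal (δ + η + ((Fintype.card W - 1 : ℕ) : ℝ) * (Fintype.card K * p)) := by
  have hfa := measurable_falseAlarm hA hc hs w
  have hind : Measurable (N.indicator (1 : Ω → ENNReal)) := measurable_one.indicator hN
  refine ⟨fun ω ↦ ENNReal.ofReal δ + N.indicator 1 ω + falseAlarm A (c ω) w (s ω),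
    by fun_prop, fun ω ↦ ?_, ?_⟩
  · beta_reduce
    by_cases hω : ω ∈ N
    · rw [Set.indicator_of_mem hω, Pi.one_apply]
      exact prob_le_one.trans (le_add_self.trans le_self_add)
    · obtain ⟨k, hk⟩ := hδ ω hω
      refine (measure_testDecoder_ne_le A (c ω) w k (s ω)).trans ?_
      exact add_le_add_left (hk.trans le_self_add) _
  · have hfaP := lintegral_falseAlarm_le hA hc hs hp
    rw [lintegral_add_right _ hfa, lintegral_add_right _ hind, lintegral_const, measure_univ,
      mul_one, lintegral_indicator_one hN, ENNReal.ofReal_add (by positivity) (by positivity),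
      ENNReal.ofReal_add hδ₀ hη₀, ENNReal.ofReal_mul (by positivity),
      ENNReal.ofReal_mul (by positivity), ENNReal.ofReal_natCast, ENNReal.ofReal_natCast]
    gcongr

end Decoder

section Independence

variable {U V : Type*} [MeasurableSpace U] [MeasurableSpace V] (α : Measure U) (β : Measure V)
  [IsProbabilityMeasure α] [IsProbabilityMeasure β] {ι κ : Type*} [Fintype ι] [Fintype κ]

lemma measurePreserving_eval_pair {i j : ι} (h : i ≠ j) :
    MeasurePreserving (fun c : ι → U ↦ (c i, c j)) (Measure.pi fun _ ↦ α) (α.prod α) := by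
  have hind : iIndepFun (fun i (c : ι → U) ↦ c i) (Measure.pi fun _ ↦ α) :=
    iIndepFun_pi (X := fun _ x ↦ x) fun _ ↦ aemeasurable_id
  have hij := (indepFun_iff_map_prod_eq_prod_map_map (measurable_pi_apply i).aemeasurable
    (measurable_pi_apply j).aemeasurable).1 (hind.indepFun h)
  rw [(measurePreserving_eval (fun _ ↦ α) i).map_eq,
    (measurePreserving_eval (fun _ ↦ α) j).map_eq] at hij
  exact ⟨by fun_prop, hij⟩

lemma measurePreserving_eval_pair_prod {i j : ι} (h : i ≠ j) (k : κ) :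
    MeasurePreserving (fun ω : (ι → U) × (κ → V) ↦ (ω.1 i, (ω.1 j, ω.2 k)))
      ((Measure.pi fun _ ↦ α).prod (Measure.pi fun _ ↦ β)) (α.prod (α.prod β)) :=
  (measurePreserving_prodAssoc α α β).comp
    ((measurePreserving_eval_pair α h).prod (measurePreserving_eval (fun _ ↦ β) k))

lemma measurePreserving_eval_prod (i : ι) (k : κ) :
    MeasurePreserving (fun ω : (ι → U) × (κ → V) ↦ (ω.1 i, ω.2 k))
      ((Measure.pi fun _ ↦ α).prod (Measure.pi fun _ ↦ β)) (α.prod β) :=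
  (measurePreserving_eval (fun _ ↦ α) i).prod (measurePreserving_eval (fun _ ↦ β) k)

lemma lintegral_stdGaussN_section_le {n : ℕ} {Ω : Type*} [MeasurableSpace Ω] {P : Measure Ω}
    {ξ : Ω → U} {υ : Ω → V} (h : MeasurePreserving (fun ω ↦ (ξ ω, υ ω)) P (α.prod β))
    {s : V → Fin n → ℝ} (hs : Measurable s) {A : Set (U × (Fin n → ℝ))} (hA : MeasurableSet A)
    {p : ENNReal} (hp : ∀ y, α {u | (u, y) ∈ A} ≤ p) :
    ∫⁻ ω, stdGaussN n {z | (ξ ω, s (υ ω) + z) ∈ A} ∂P ≤ p := by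
  have hsec : Measurable fun q : U × V ↦ stdGaussN n {z | (q.1, s q.2 + z) ∈ A} :=
    measurable_stdGaussN_section measurable_fst (hs.comp measurable_snd) hA
  have hswap (v : V) : ∫⁻ u, stdGaussN n {z | (u, s v + z) ∈ A} ∂α =
      ∫⁻ z, α {u | (u, s v + z) ∈ A} ∂stdGaussN n := by
    have hmap : Measurable fun q : U × (Fin n → ℝ) ↦ (q.1, s v + q.2) := by fun_prop
    exact (Measure.prod_apply (hmap hA)).symm.trans (Measure.prod_apply_symm (hmap hA))
  calc ∫⁻ ω, stdGaussN n {z | (ξ ω, s (υ ω) + z) ∈ A} ∂P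
      = ∫⁻ v, ∫⁻ u, stdGaussN n {z | (u, s v + z) ∈ A} ∂α ∂β := by
        rw [h.lintegral_comp hsec, lintegral_prod_symm _ hsec.aemeasurable]
    _ ≤ ∫⁻ _, p ∂β := lintegral_mono fun v ↦ by
        rw [hswap]
        exact (lintegral_mono fun z ↦ hp _).trans_eq (by simp)
    _ = p := by simp

lemma prod_pi_forall_notMem {L : ℕ} {G : Set (U × V)} (hG : MeasurableSet G) :
    MeasurableSet {q : (Fin L → U) × V | ∀ l, (q.1 l, q.2) ∉ G} ∧
      ((Measure.pi fun _ : Fin L ↦ α).prod β) {q | ∀ l, (q.1 l, q.2) ∉ G} =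
        ∫⁻ t, α {u | (u, t) ∉ G} ^ L ∂β := by
  have hN : MeasurableSet {q : (Fin L → U) × V | ∀ l, (q.1 l, q.2) ∉ G} := by
    rw [Set.ofPred_forall]
    refine MeasurableSet.iInter fun l ↦ ?_
    have hmap : Measurable fun q : (Fin L → U) × V ↦ (q.1 l, q.2) := by fun_prop
    exact hmap hG.compl
  refine ⟨hN, (Measure.prod_apply_symm hN).trans (lintegral_congr fun t ↦ ?_)⟩
  have hpi : (fun r ↦ (r, t)) ⁻¹' {q : (Fin L → U) × V | ∀ l, (q.1 l, q.2) ∉ G} =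
      Set.univ.pi fun _ ↦ {u | (u, t) ∉ G} := by
    ext r
    simp
  rw [hpi, Measure.pi_pi, Finset.prod_const, Finset.card_univ, Fintype.card_fin]

lemma exists_majorant_randomCodebook_error {W K X : Type*} [Fintype W] [Nonempty W] [Fintype K]
    [MeasurableSpace X] {n : ℕ} {word : K → U → X} (hword : ∀ k, Measurable (word k))
    {s : U × V → Fin n → ℝ} (hs : Measurable s) {A : Set (X × (Fin n → ℝ))} (hA : MeasurableSet A)
    {N : Set (U × V)} (hN : MeasurableSet N) {δ η p : ℝ} (hδ₀ : 0 ≤ δ) (hη₀ : 0 ≤ η) (hp₀ : 0 ≤ p)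
    (hη : (α.prod β) N ≤ ENNReal.ofReal η)
    (hδ : ∀ q ∉ N, ∃ k, stdGaussN n {z | (word k q.1, s q + z) ∉ A} ≤ ENNReal.ofReal δ)
    (hp : ∀ k y, α {u | (word k u, y) ∈ A} ≤ ENNReal.ofReal p) (w : W) (v : κ) :
    ∃ e : (W → U) × (κ → V) → ENNReal, Measurable e ∧
      (∀ ω, stdGaussN n {z | testDecoder A (fun w k ↦ word k (ω.1 w))
        (s (ω.1 w, ω.2 v) + z) ≠ w} ≤ e ω) ∧
      ∫⁻ ω, e ω ∂(Measure.pi fun _ ↦ α).prod (Measure.pi fun _ ↦ β) ≤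
        ENNReal.ofReal (δ + η + ((Fintype.card W - 1 : ℕ) : ℝ) * (Fintype.card K * p)) := by
  have heval := measurePreserving_eval_prod (ι := W) α β w v
  refine exists_majorant_testDecoder_error hA (c := fun ω w k ↦ word k (ω.1 w))
    (fun w k ↦ by fun_prop) (s := fun ω ↦ s (ω.1 w, ω.2 v)) (by fun_prop)
    (heval.measurable hN) hδ₀ hη₀ hp₀
    ((heval.measure_preimage hN.nullMeasurableSet).trans_le hη) (fun ω hω ↦ hδ _ hω) ?_
  intro w' hw' k
  have hmap : Measurable fun q : U × (Fin n → ℝ) ↦ (word k q.1, q.2) := by fun_prop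
  exact lintegral_stdGaussN_section_le α (α.prod β)
    (measurePreserving_eval_pair_prod α β hw' v) hs (hmap hA) (hp k)

end Independence

lemma exists_expect_le_of_lintegral_le {Ω W : Type*} [MeasurableSpace Ω] {P : Measure Ω}
    [IsProbabilityMeasure P] [Fintype W] [Nonempty W] {e : W → Ω → ENNReal}
    (he : ∀ w, Measurable (e w)) {B : ℝ} (hB₀ : 0 ≤ B)
    (hB : ∀ w, ∫⁻ ω, e w ω ∂P ≤ ENNReal.ofReal B) :
    ∃ ω, ∀ err : W → ℝ, (∀ w, ENNReal.ofReal (err w) ≤ e w ω) → 𝔼 w, err w ≤ B := by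
  obtain ⟨ω, hω⟩ := exists_le_lintegral (μ := P) (f := fun ω ↦ ∑ w, e w ω)
    (Finset.measurable_fun_sum _ fun w _ ↦ he w).aemeasurable
  refine ⟨ω, fun err herr ↦ ?_⟩
  have hsum : ENNReal.ofReal (∑ w, err w) ≤ ENNReal.ofReal (Fintype.card W * B) := calc
    ENNReal.ofReal (∑ w, err w) ≤ ∑ w, ENNReal.ofReal (err w) :=
        Finset.le_sum_of_subadditive _ ENNReal.ofReal_zero.le (fun _ _ ↦ ENNReal.ofReal_add_le) _ _
    _ ≤ ∑ w, ∫⁻ ω, e w ω ∂P := by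
        rw [← lintegral_finsetSum _ fun w _ ↦ he w]
        exact (Finset.sum_le_sum fun w _ ↦ herr w).trans hω
    _ ≤ ∑ _w : W, ENNReal.ofReal B := Finset.sum_le_sum fun w _ ↦ hB w
    _ = ENNReal.ofReal (Fintype.card W * B) := by
        rw [Finset.sum_const, Finset.card_univ, nsmul_eq_mul, ENNReal.ofReal_mul (by positivity),
          ENNReal.ofReal_natCast]
  rw [Fintype.expect_eq_sum_div_card, div_le_iff₀' (by positivity)]
  exact (ENNReal.ofReal_le_ofReal_iff (by positivity)).1 hsum

section Binning

variable {n L : ℕ}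

lemma exists_binning_encoders {P₁ P₂ : ℝ} (hP₁ : 0 ≤ P₁) (hP₂ : 0 ≤ P₂)
    {φ₁ : (Fin n → ℝ) × (Fin n → ℝ) → Fin n → ℝ} (hφ₁ : Measurable φ₁)
    {φ₂ : (Fin n → ℝ) → Fin n → ℝ} (hφ₂ : Measurable φ₂)
    {G : Set ((Fin n → ℝ) × (Fin n → ℝ))} (hG : MeasurableSet G)
    (hG₁ : ∀ q ∈ G, sqNorm (φ₁ q) ≤ n * P₁) (hG₂ : ∀ q ∈ G, sqNorm (φ₂ q.2) ≤ n * P₂) :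
    ∃ (x₁ : (Fin L → Fin n → ℝ) × (Fin n → ℝ) → Fin n → ℝ) (x₂ : (Fin n → ℝ) → Fin n → ℝ),
      Measurable x₁ ∧ Measurable x₂ ∧
      (∀ q, sqNorm (x₁ q) ≤ n * P₁) ∧ (∀ t, sqNorm (x₂ t) ≤ n * P₂) ∧
      ∀ q, (∃ l, (q.1 l, q.2) ∈ G ∧ x₁ q = φ₁ (q.1 l, q.2) ∧ x₂ q.2 = φ₂ q.2) ∨
        ∀ l, (q.1 l, q.2) ∉ G := by
  classical
  obtain ⟨x₁, hx₁, hsel⟩ := exists_measurable_selection (L := L) hφ₁ hG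
    (r := fun l (q : (Fin L → Fin n → ℝ) × (Fin n → ℝ)) ↦ (q.1 l, q.2)) (fun l ↦ by fun_prop) 0
  have hzero : sqNorm (0 : Fin n → ℝ) = 0 := by simp [sqNorm]
  refine ⟨x₁, fun t ↦ if sqNorm (φ₂ t) ≤ n * P₂ then φ₂ t else 0, hx₁,
    Measurable.ite (measurableSet_le (by fun_prop) measurable_const) hφ₂ measurable_const,
    fun q ↦ ?_, fun t ↦ ?_, fun q ↦ ?_⟩
  · rcases hsel q with ⟨l, hl, hq⟩ | ⟨-, hq⟩
    · exact hq ▸ hG₁ _ hl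
    · rw [hq, hzero]
      positivity
  · beta_reduce
    split_ifs with h
    · exact h
    · rw [hzero]
      positivity
  · exact (hsel q).imp (fun ⟨l, hl, hq⟩ ↦ ⟨l, hl, hq, if_pos (hG₂ _ hl)⟩) And.left

/-- Random binning for the informed transmitter. Each `w₁` owns a bin of `L` auxiliary words drawn
from `ρ`, each `w₂` a cloud center drawn from `π`; the encoders look for a bin element forming a
good pair with the cloud center, and both receivers decode by a test. -/
theorem exists_binning_code (a b : ℝ) {P₁ P₂ : ℝ} (hP₁ : 0 ≤ P₁) (hP₂ : 0 ≤ P₂)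
    (ρ π : Measure (Fin n → ℝ)) [IsProbabilityMeasure ρ] [IsProbabilityMeasure π]
    {φ₁ : (Fin n → ℝ) × (Fin n → ℝ) → Fin n → ℝ} (hφ₁ : Measurable φ₁)
    {φ₂ : (Fin n → ℝ) → Fin n → ℝ} (hφ₂ : Measurable φ₂)
    {G A₁ A₂ : Set ((Fin n → ℝ) × (Fin n → ℝ))} (hG : MeasurableSet G)
    (hA₁ : MeasurableSet A₁) (hA₂ : MeasurableSet A₂)
    (hG₁ : ∀ q ∈ G, sqNorm (φ₁ q) ≤ n * P₁) (hG₂ : ∀ q ∈ G, sqNorm (φ₂ q.2) ≤ n * P₂)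
    {δ η p₁ p₂ : ℝ} (hδ₀ : 0 ≤ δ) (hη₀ : 0 ≤ η) (hp₁₀ : 0 ≤ p₁) (hp₂₀ : 0 ≤ p₂)
    (hδ₁ : ∀ q ∈ G, stdGaussN n {z | (q.1, φ₁ q + a • φ₂ q.2 + z) ∉ A₁} ≤ ENNReal.ofReal δ)
    (hδ₂ : ∀ q ∈ G, stdGaussN n {z | (q.2, b • φ₁ q + φ₂ q.2 + z) ∉ A₂} ≤ ENNReal.ofReal δ)
    (hη : ∫⁻ t, ρ {u | (u, t) ∉ G} ^ L ∂π ≤ ENNReal.ofReal η)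
    (hp₁ : ∀ y, ρ {u | (u, y) ∈ A₁} ≤ ENNReal.ofReal p₁)
    (hp₂ : ∀ y, π {u | (u, y) ∈ A₂} ≤ ENNReal.ofReal p₂)
    {M₁ M₂ : ℕ} (hM₁ : 0 < M₁) (hM₂ : 0 < M₂) {B : ℝ}
    (hB : 2 * (δ + η) + ((M₁ - 1 : ℕ) : ℝ) * (L * p₁) + ((M₂ - 1 : ℕ) : ℝ) * p₂ ≤ B) :
    ∃ (f₁ : Fin M₁ → Fin M₂ → Fin n → ℝ) (f₂ : Fin M₂ → Fin n → ℝ)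
      (g₁ : (Fin n → ℝ) → Fin M₁) (g₂ : (Fin n → ℝ) → Fin M₂),
      (∀ w₁ w₂, sqNorm (f₁ w₁ w₂) ≤ n * P₁) ∧ (∀ w₂, sqNorm (f₂ w₂) ≤ n * P₂) ∧
      𝔼 w₂, 𝔼 w₁, (stdGaussN n).real {z | g₁ (f₁ w₁ w₂ + a • f₂ w₂ + z) ≠ w₁} ≤ B ∧
      𝔼 w₂, 𝔼 w₁, (stdGaussN n).real {z | g₂ (b • f₁ w₁ w₂ + f₂ w₂ + z) ≠ w₂} ≤ B := by
  have := Fin.pos_iff_nonempty.1 hM₁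
  have := Fin.pos_iff_nonempty.1 hM₂
  obtain ⟨x₁, x₂, hx₁, hx₂, hpow₁, hpow₂, hsel⟩ :=
    exists_binning_encoders (L := L) hP₁ hP₂ hφ₁ hφ₂ hG hG₁ hG₂
  let bins : Measure (Fin L → Fin n → ℝ) := Measure.pi fun _ ↦ ρ
  let P := (Measure.pi fun _ : Fin M₁ ↦ bins).prod (Measure.pi fun _ : Fin M₂ ↦ π)
  obtain ⟨hN, hPN⟩ := prod_pi_forall_notMem (L := L) ρ π hG
  rw [← hPN] at hη
  have hmaj₁ (w : Fin M₂ × Fin M₁) := exists_majorant_randomCodebook_error bins π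
    (word := fun (l : Fin L) r ↦ r l) (fun l ↦ by fun_prop)
    (s := fun q ↦ x₁ q + a • x₂ q.2) (by fun_prop) hA₁ hN hδ₀ hη₀ hp₁₀ hη
    (fun q hq ↦ by
      obtain ⟨l, hl, hq₁, hq₂⟩ := (hsel q).resolve_right hq
      exact ⟨l, by simpa only [hq₁, hq₂] using hδ₁ _ hl⟩)
    (fun l y ↦ ((measurePreserving_eval (fun _ ↦ ρ) l).measure_preimage
      (measurable_prodMk_right hA₁).nullMeasurableSet).trans_le (hp₁ y)) w.2 w.1
  have hmaj₂ (w : Fin M₂ × Fin M₁) := exists_majorant_randomCodebook_error π bins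
    (word := fun (_ : Unit) t ↦ t) (fun _ ↦ measurable_id)
    (s := fun q ↦ b • x₁ q.swap + x₂ q.1) (by fun_prop) hA₂ (measurable_swap hN) hδ₀ hη₀ hp₂₀
    ((Measure.measurePreserving_swap.measure_preimage hN.nullMeasurableSet).trans_le hη)
    (fun q hq ↦ by
      obtain ⟨l, hl, hq₁, hq₂⟩ := (hsel q.swap).resolve_right hq
      rw [Prod.snd_swap] at hq₂
      exact ⟨(), by rw [hq₁, hq₂]; exact hδ₂ _ hl⟩)
    (fun _ ↦ hp₂) w.1 w.2
  choose e₁ he₁ herr₁ hint₁ using hmaj₁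
  choose e₂ he₂ herr₂ hint₂ using hmaj₂
  obtain ⟨ω, hω⟩ := exists_expect_le_of_lintegral_le (P := P)
    (e := fun w ω ↦ e₁ w ω + e₂ w ω.swap) (fun w ↦ (he₁ w).add ((he₂ w).comp measurable_swap))
    (B := B) (le_trans (by positivity) hB) fun w ↦ by
      rw [lintegral_add_left (he₁ w), Measure.measurePreserving_swap.lintegral_comp (he₂ w)]
      refine (add_le_add (hint₁ w) (hint₂ w)).trans ?_
      rw [← ENNReal.ofReal_add (by positivity) (by positivity)]
      refine ENNReal.ofReal_le_ofReal (hB.trans' (le_of_eq ?_))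
      simp only [Fintype.card_fin, Fintype.card_unit, Nat.cast_one]
      ring
  simp only [← Finset.univ_product_univ, Finset.expect_product] at hω
  refine ⟨fun w₁ w₂ ↦ x₁ (ω.1 w₁, ω.2 w₂), fun w₂ ↦ x₂ (ω.2 w₂), testDecoder A₁ ω.1,
    testDecoder A₂ fun w (_ : Unit) ↦ ω.2 w, fun _ _ ↦ hpow₁ _, fun _ ↦ hpow₂ _,
    hω (fun w ↦ (stdGaussN n).real {z | testDecoder A₁ ω.1
      (x₁ (ω.1 w.2, ω.2 w.1) + a • x₂ (ω.2 w.1) + z) ≠ w.2}) fun w ↦ ?_,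
    hω (fun w ↦ (stdGaussN n).real {z | testDecoder A₂ (fun w (_ : Unit) ↦ ω.2 w)
      (b • x₁ (ω.1 w.2, ω.2 w.1) + x₂ (ω.2 w.1) + z) ≠ w.1}) fun w ↦ ?_⟩
  · exact (ofReal_measureReal (by finiteness)).trans_le ((herr₁ w ω).trans le_self_add)
  · exact (ofReal_measureReal (by finiteness)).trans_le ((herr₂ w ω.swap).trans le_add_self)

end Binning

end RandomCoding

section GaussianVector

variable {n : ℕ}

/-- The Gaussian law on `Fin n → ℝ` with mean `x` and covariance `v • 1`. -/
def gaussVec (x : Fin n → ℝ) (v : ℝ) : Measure (Fin n → ℝ) :=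
  (stdGaussN n).map fun z ↦ x + √v • z

instance (x : Fin n → ℝ) (v : ℝ) : IsProbabilityMeasure (gaussVec x v) :=
  Measure.isProbabilityMeasure_map (by fun_prop)

lemma gaussVec_zero_one : gaussVec (0 : Fin n → ℝ) 1 = stdGaussN n := by
  simp [gaussVec]

lemma map_smul_stdGaussN (c : ℝ) :
    (stdGaussN n).map (c • ·) = Measure.pi fun _ ↦ gaussianReal 0 (.mk (c ^ 2) (sq_nonneg c)) := by
  have hcoord : (gaussianReal 0 1).map (c * ·) = gaussianReal 0 (.mk (c ^ 2) (sq_nonneg c)) := by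
    rw [gaussianReal_map_const_mul, mul_zero, mul_one]
  rw [← hcoord]
  exact Measure.pi_map_pi (f := fun _ x ↦ c * x) fun _ ↦ by fun_prop

lemma measurePreserving_smul_stdGaussN {c v : ℝ} (h : c ^ 2 = v) :
    MeasurePreserving (c • ·) (stdGaussN n) (gaussVec 0 v) := by
  subst h
  refine ⟨by fun_prop, ?_⟩
  simp only [gaussVec, zero_add, map_smul_stdGaussN, Real.sqrt_sq_eq_abs, sq_abs]

lemma measurePreserving_smul_gaussVec {v : ℝ} (hv : 0 ≤ v) (c : ℝ) :
    MeasurePreserving (c • ·) (gaussVec (0 : Fin n → ℝ) v) (gaussVec 0 (c ^ 2 * v)) := by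
  refine ⟨by fun_prop, ?_⟩
  rw [← (measurePreserving_smul_stdGaussN (Real.sq_sqrt hv)).map_eq,
    Measure.map_map (by fun_prop) (by fun_prop),
    ← (measurePreserving_smul_stdGaussN (c := c * √v) (by rw [mul_pow, Real.sq_sqrt hv])).map_eq]
  simp only [Function.comp_def, smul_smul]

lemma map_add_gaussVec (x : Fin n → ℝ) (v : ℝ) : (gaussVec 0 v).map (x + ·) = gaussVec x v := by
  rw [gaussVec, gaussVec, Measure.map_map (by fun_prop) (by fun_prop)]
  simp only [Function.comp_def, zero_add]

lemma gaussVec_eq_withDensity (x : Fin n → ℝ) {v : ℝ} (hv : 0 < v) :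
    gaussVec x v = volume.withDensity fun u ↦ ENNReal.ofReal (gaussDensity v (u - x)) := by
  have hcentred : gaussVec (0 : Fin n → ℝ) v =
      volume.withDensity fun u ↦ ENNReal.ofReal (gaussDensity v u) := by
    lift v to NNReal using hv.le
    rw [← (measurePreserving_smul_stdGaussN (Real.sq_sqrt hv.le)).map_eq, map_smul_stdGaussN,
      ← pi_gaussianReal_eq_withDensity (NNReal.coe_pos.1 hv).ne']
    simp only [Real.sq_sqrt hv.le, NNReal.mk_coe]
  have htranslate : MeasurePreserving (MeasurableEquiv.addLeft x)
      (volume : Measure (Fin n → ℝ)) volume :=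
    measurePreserving_add_left volume x
  ext S hS
  rw [← map_add_gaussVec, hcentred, Measure.map_apply (by fun_prop) hS,
    withDensity_apply _ hS, withDensity_apply _ (measurable_const_add x hS)]
  simpa using htranslate.setLIntegral_comp_preimage_emb
    (MeasurableEquiv.measurableEmbedding _) (fun u ↦ ENNReal.ofReal (gaussDensity v (u - x))) S

/-- On a set of points at normalized squared distance at most `w` from `x` and at least `v` from
`x'`, the density ratio of the two Gaussian laws is exponentially small. -/
lemma gaussVec_le_exp_mul_gaussVec (x x' : Fin n → ℝ) {v w η : ℝ} (hv : 0 < v) (hw : 0 < w)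
    {S : Set (Fin n → ℝ)} (hS : MeasurableSet S)
    (hx : ∀ u ∈ S, sqNorm (u - x) ≤ n * w * (1 + η))
    (hx' : ∀ u ∈ S, n * v * (1 - η) ≤ sqNorm (u - x')) :
    gaussVec x' v S ≤
      ENNReal.ofReal (Real.exp (-(n * (1 / 2 * Real.log (v / w) - η)))) * gaussVec x w S := by
  rw [gaussVec_eq_withDensity _ hv, gaussVec_eq_withDensity _ hw, withDensity_apply _ hS,
    withDensity_apply _ hS, ← lintegral_const_mul _ (by fun_prop)]
  refine setLIntegral_mono' hS fun u hu ↦ ?_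
  rw [← ENNReal.ofReal_mul (Real.exp_nonneg _)]
  refine ENNReal.ofReal_le_ofReal ?_
  rw [← Real.log_le_log_iff (gaussDensity_pos hv _)
      (mul_pos (Real.exp_pos _) (gaussDensity_pos hw _)),
    Real.log_mul (Real.exp_pos _).ne' (gaussDensity_pos hw _).ne', Real.log_exp,
    log_gaussDensity hv, log_gaussDensity hw, Real.log_mul (by positivity) hv.ne',
    Real.log_mul (by positivity) hw.ne', Real.log_div hv.ne' hw.ne']
  have hupper : sqNorm (u - x) / (2 * w) ≤ n * (1 + η) / 2 := by
    rw [div_le_div_iff₀ (by positivity) (by positivity)]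
    linarith [hx u hu]
  have hlower : n * (1 - η) / 2 ≤ sqNorm (u - x') / (2 * v) := by
    rw [div_le_div_iff₀ (by positivity) (by positivity)]
    linarith [hx' u hu]
  linarith

lemma map_combination_stdGaussN (p q : ℝ) :
    ((stdGaussN n).prod (stdGaussN n)).map (fun w ↦ p • w.1 + q • w.2) =
      gaussVec 0 (p ^ 2 + q ^ 2) := by
  obtain ⟨c, hc, hqc⟩ : ∃ c : ℝ, c ^ 2 = p ^ 2 + q ^ 2 ∧ 0 ≤ q / c := by
    have hsq : √(p ^ 2 + q ^ 2) ^ 2 = p ^ 2 + q ^ 2 := Real.sq_sqrt (by positivity)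
    rcases le_total 0 q with hq | hq
    · exact ⟨_, hsq, div_nonneg hq (Real.sqrt_nonneg _)⟩
    · exact ⟨_, (neg_sq _).trans hsq, div_nonneg_of_nonpos hq (neg_nonpos.2 (Real.sqrt_nonneg _))⟩
  rcases eq_or_ne c 0 with rfl | hc₀
  · obtain ⟨rfl, rfl⟩ : p = 0 ∧ q = 0 := by constructor <;> nlinarith
    simp [gaussVec]
  have hunit : (p / c) ^ 2 + (q / c) ^ 2 = 1 := by field_simp; exact hc.symm
  have hcomp := (measurePreserving_smul_stdGaussN (n := n) hc).comp
    (measurePreserving_stdGaussN_combination hqc hunit)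
  rw [← hcomp.map_eq]
  congr 1 with w : 1
  simp only [Function.comp_apply, smul_add, smul_smul, mul_div_cancel₀ _ hc₀]

lemma measurePreserving_add_smul_stdGaussN {Ω : Type*} [MeasurableSpace Ω] {P : Measure Ω}
    [SFinite P] {X : Ω → Fin n → ℝ} {v : ℝ} (hX : MeasurePreserving X P (gaussVec 0 v))
    (hv : 0 ≤ v) (r : ℝ) :
    MeasurePreserving (fun w ↦ X w.1 + r • w.2) (P.prod (stdGaussN n))
      (gaussVec 0 (v + r ^ 2)) := by
  have hroot := (measurePreserving_smul_stdGaussN (n := n) (Real.sq_sqrt hv)).prod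
    (.id (stdGaussN n))
  have hsum : MeasurePreserving (fun w : (Fin n → ℝ) × (Fin n → ℝ) ↦ w.1 + r • w.2)
      ((gaussVec 0 v).prod (stdGaussN n)) (gaussVec 0 (v + r ^ 2)) := by
    refine ⟨by fun_prop, ?_⟩
    rw [← hroot.map_eq, Measure.map_map (by fun_prop) hroot.measurable]
    simpa only [Real.sq_sqrt hv, Function.comp_def, Prod.map_fst, Prod.map_snd, id_eq] using
      map_combination_stdGaussN (n := n) √v r
  exact hsum.comp (hX.prod (.id (stdGaussN n)))

lemma measurePreserving_combination₃ {Q : ℝ} (hQ : 0 ≤ Q) (p q r : ℝ) :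
    MeasurePreserving
      (fun w : ((Fin n → ℝ) × (Fin n → ℝ)) × (Fin n → ℝ) ↦ p • w.1.1 + q • w.1.2 + r • w.2)
      (((gaussVec 0 Q).prod (stdGaussN n)).prod (stdGaussN n))
      (gaussVec 0 (p ^ 2 * Q + q ^ 2 + r ^ 2)) :=
  measurePreserving_add_smul_stdGaussN (measurePreserving_add_smul_stdGaussN
    (measurePreserving_smul_gaussVec hQ p) (by positivity) q) (by positivity) r

end GaussianVector

section Typicality

variable {n : ℕ}

/-- `x` has normalized squared norm within a factor `1 ± η` of `s`. -/
def IsTypical (s η : ℝ) (x : Fin n → ℝ) : Prop :=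
  n * s * (1 - η) ≤ sqNorm x ∧ sqNorm x ≤ n * s * (1 + η)

lemma measurableSet_not_isTypical (s η : ℝ) :
    MeasurableSet {x : Fin n → ℝ | ¬ IsTypical s η x} :=
  ((measurableSet_le measurable_const measurable_sqNorm).inter
    (measurableSet_le measurable_sqNorm measurable_const)).compl

lemma memLp_sq_gaussianReal : MemLp (fun x : ℝ ↦ x ^ 2) 2 (gaussianReal 0 1) := by
  refine (memLp_two_iff_integrable_sq (by fun_prop)).2 ?_
  have hfour := (memLp_id_gaussianReal (μ := 0) (v := 1) 4).integrable_norm_pow (by norm_num)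
  refine hfour.congr (.of_forall fun x ↦ ?_)
  simp [← pow_mul, Even.pow_abs (by decide : Even 4)]

lemma memLp_sqNorm : MemLp (sqNorm (n := n)) 2 (stdGaussN n) :=
  memLp_finsetSum _ fun i _ ↦
    memLp_sq_gaussianReal.comp_measurePreserving (measurePreserving_eval _ i)

lemma variance_sqNorm :
    Var[sqNorm (n := n); stdGaussN n] = n * Var[fun x ↦ x ^ 2; gaussianReal 0 1] := by
  have hsum := variance_sum_pi (μ := fun _ : Fin n ↦ gaussianReal 0 1) (X := fun _ x ↦ x ^ 2)
    fun _ ↦ memLp_sq_gaussianReal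
  rw [Finset.sum_const, Finset.card_univ, Fintype.card_fin, nsmul_eq_mul] at hsum
  rw [← hsum]
  congr 1 with x
  simp [sqNorm]

/-- Chebyshev's bound on the probability that a white Gaussian vector is atypical. -/
def atypicalBound (η : ℝ) (n : ℕ) : ℝ := Var[fun x ↦ x ^ 2; gaussianReal 0 1] / η ^ 2 / n

lemma atypicalBound_nonneg (η : ℝ) (n : ℕ) : 0 ≤ atypicalBound η n := by
  have := variance_nonneg (fun x : ℝ ↦ x ^ 2) (gaussianReal 0 1)
  unfold atypicalBound
  positivity

lemma tendsto_atypicalBound (η : ℝ) :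
    Filter.Tendsto (atypicalBound η) Filter.atTop (nhds 0) :=
  tendsto_const_div_atTop_nhds_zero_nat _

lemma stdGaussN_not_isTypical_le {η : ℝ} (hη : 0 < η) (hn : 0 < n) :
    stdGaussN n {z | ¬ IsTypical 1 η z} ≤ ENNReal.ofReal (atypicalBound η n) := by
  have hcheb := meas_ge_le_variance_div_sq (memLp_sqNorm (n := n)) (c := n * η) (by positivity)
  rw [variance_sqNorm, integral_sqNorm] at hcheb
  refine (measure_mono fun z hz ↦ ?_).trans (hcheb.trans_eq (congrArg _ ?_))
  · refine le_of_not_gt fun (hlt : |sqNorm z - n| < n * η) ↦ hz ?_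
    rw [abs_lt] at hlt
    constructor <;> linarith
  · rw [atypicalBound]
    field_simp

lemma gaussVec_not_isTypical_le {s η : ℝ} (hs : 0 ≤ s) (hη : 0 < η) (hn : 0 < n) :
    gaussVec (0 : Fin n → ℝ) s {x | ¬ IsTypical s η x} ≤ ENNReal.ofReal (atypicalBound η n) := by
  rw [gaussVec, Measure.map_apply (by fun_prop) (measurableSet_not_isTypical s η)]
  have hscale (z : Fin n → ℝ) (hz : IsTypical 1 η z) : IsTypical s η (0 + √s • z) := by
    obtain ⟨hlow, hupp⟩ := hz
    simp only [IsTypical, zero_add, sqNorm_smul, Real.sq_sqrt hs]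
    constructor <;> nlinarith
  exact (measure_mono fun z hz ↦ mt (hscale z) hz).trans (stdGaussN_not_isTypical_le hη hn)

/-- Joint typicality of the independent triple `(v, t, z)`, of variances `Q`, `1` and `1`, with
respect to the linear combinations listed in `c`. -/
def JointlyTypical {ι : Type*} (Q η : ℝ) (c : ι → ℝ × ℝ × ℝ) (v t z : Fin n → ℝ) : Prop :=
  ∀ k, IsTypical ((c k).1 ^ 2 * Q + (c k).2.1 ^ 2 + (c k).2.2 ^ 2) η
    ((c k).1 • v + (c k).2.1 • t + (c k).2.2 • z)

lemma measurableSet_not_jointlyTypical {ι α : Type*} [Countable ι] [MeasurableSpace α] (Q η : ℝ)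
    (c : ι → ℝ × ℝ × ℝ) {v t z : α → Fin n → ℝ} (hv : Measurable v) (ht : Measurable t)
    (hz : Measurable z) : MeasurableSet {x | ¬ JointlyTypical Q η c (v x) (t x) (z x)} := by
  simp only [JointlyTypical, not_forall, Set.ofPred_exists]
  refine .iUnion fun k ↦ ?_
  exact (by fun_prop : Measurable fun x ↦
    (c k).1 • v x + (c k).2.1 • t x + (c k).2.2 • z x) (measurableSet_not_isTypical _ η)

variable {ι : Type*} [Fintype ι]

lemma measure_not_jointlyTypical_le {Q η : ℝ} (hQ : 0 ≤ Q) (hη : 0 < η) (hn : 0 < n)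
    (c : ι → ℝ × ℝ × ℝ) :
    (((gaussVec 0 Q).prod (stdGaussN n)).prod (stdGaussN n))
        {w | ¬ JointlyTypical Q η c w.1.1 w.1.2 w.2} ≤
      ENNReal.ofReal (Fintype.card ι * atypicalBound η n) := by
  simp only [JointlyTypical, not_forall, Set.ofPred_exists]
  refine (measure_iUnion_fintype_le _ _).trans ((Finset.sum_le_sum
    (g := fun _ ↦ ENNReal.ofReal (atypicalBound η n)) fun k _ ↦ ?_).trans_eq ?_)
  · exact ((measurePreserving_combination₃ hQ _ _ _).measure_preimage
      (measurableSet_not_isTypical _ η).nullMeasurableSet).trans_le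
        (gaussVec_not_isTypical_le (by positivity) hη hn)
  · rw [Finset.sum_const, Finset.card_univ, nsmul_eq_mul, ENNReal.ofReal_mul (Nat.cast_nonneg _),
      ENNReal.ofReal_natCast]

/-- By Markov's inequality most pairs `(v, t)` leave the triple jointly typical for most `z`. -/
lemma measure_not_le_measure_not_jointlyTypical_le {Q η δ : ℝ} (hQ : 0 ≤ Q) (hη : 0 < η)
    (hδ : 0 < δ) (hn : 0 < n) (c : ι → ℝ × ℝ × ℝ) :
    ((gaussVec 0 Q).prod (stdGaussN n))
        {w | ¬ stdGaussN n {z | ¬ JointlyTypical Q η c w.1 w.2 z} ≤ ENNReal.ofReal δ} ≤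
      ENNReal.ofReal (Fintype.card ι * atypicalBound η n / δ) := by
  have hmeas := measurableSet_not_jointlyTypical (n := n) Q η c
    (v := fun w : ((Fin n → ℝ) × (Fin n → ℝ)) × (Fin n → ℝ) ↦ w.1.1) (t := fun w ↦ w.1.2)
    (z := fun w ↦ w.2) (by fun_prop) (by fun_prop) (by fun_prop)
  have hmarkov := meas_ge_le_lintegral_div (μ := (gaussVec 0 Q).prod (stdGaussN n))
    (measurable_measure_prodMk_left (ν := stdGaussN n) hmeas).aemeasurable
    (ENNReal.ofReal_pos.2 hδ).ne' ENNReal.ofReal_ne_top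
  rw [← Measure.prod_apply hmeas] at hmarkov
  refine (measure_mono fun w hw ↦ (not_le.1 hw).le).trans (hmarkov.trans ?_)
  rw [ENNReal.ofReal_div_of_pos hδ]
  gcongr
  exact measure_not_jointlyTypical_le hQ hη hn c

end Typicality

section Covering

/-- If `J` has density at most `K` with respect to `ρ` on `S`, then `L ≫ K` independent draws from
`ρ` are unlikely to all miss `S`. -/
lemma measure_compl_pow_le_add_exp {U : Type*} [MeasurableSpace U] (J ρ : Measure U)
    [IsProbabilityMeasure J] [IsProbabilityMeasure ρ] {S : Set U} (hS : MeasurableSet S) {K : ℝ}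
    (hK : 0 < K) (h : J S ≤ ENNReal.ofReal K * ρ S) (L : ℕ) :
    ρ Sᶜ ^ L ≤ J Sᶜ + ENNReal.ofReal (Real.exp (-(L / K))) := by
  have hratio : J.real S ≤ K * ρ.real S := by
    simpa [Measure.real, hK.le] using ENNReal.toReal_mono (by finiteness) h
  rw [← ofReal_measureReal (μ := ρ) (by finiteness), ← ofReal_measureReal (μ := J) (by finiteness),
    ← ENNReal.ofReal_pow measureReal_nonneg,
    ← ENNReal.ofReal_add measureReal_nonneg (Real.exp_nonneg _),
    probReal_compl_eq_one_sub hS, probReal_compl_eq_one_sub hS]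
  refine ENNReal.ofReal_le_ofReal ?_
  have hρ : 0 ≤ 1 - ρ.real S := sub_nonneg.2 measureReal_le_one
  have hJ : 0 ≤ 1 - J.real S := sub_nonneg.2 measureReal_le_one
  have hJ₀ : 0 ≤ J.real S := measureReal_nonneg
  calc (1 - ρ.real S) ^ L
    _ ≤ Real.exp (-ρ.real S) ^ L := by
        gcongr
        exact Real.one_sub_le_exp_neg _
    _ = Real.exp (-(ρ.real S * L)) := by rw [← Real.exp_nat_mul]; ring_nf
    _ ≤ Real.exp (J.real S * -(L / K)) := by
        have : J.real S / K * L ≤ ρ.real S * L := by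
          gcongr
          rw [div_le_iff₀ hK]
          linarith
        refine Real.exp_le_exp.2 ?_
        linarith [mul_div_assoc (J.real S) L K, div_mul_eq_mul_div (J.real S) K L]
    _ ≤ 1 - J.real S + J.real S * Real.exp (-(L / K)) := by
        simpa using convexOn_exp.2 (Set.mem_univ 0) (Set.mem_univ (-(L / K) : ℝ)) hJ hJ₀ (by ring)
    _ ≤ 1 - J.real S + Real.exp (-(L / K)) := by
        gcongr
        exact mul_le_of_le_one_left (Real.exp_nonneg _) measureReal_le_one

end Covering

section LinearTest

variable {n : ℕ} {β w σ η : ℝ}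

/-- The decoding test accepting a word `p.1` of variance `σ` for the output `p.2` when its linear
estimate `β • p.2` leaves a residual of variance `w`. -/
def linearTest (n : ℕ) (β w σ η : ℝ) : Set ((Fin n → ℝ) × (Fin n → ℝ)) :=
  {p | sqNorm (p.1 - β • p.2) ≤ n * w * (1 + η) ∧ n * σ * (1 - η) ≤ sqNorm p.1}

lemma measurableSet_linearTest : MeasurableSet (linearTest n β w σ η) :=
  .inter
    (measurableSet_le
      (by fun_prop : Measurable fun p : (Fin n → ℝ) × (Fin n → ℝ) ↦ sqNorm (p.1 - β • p.2))
      measurable_const)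
    (measurableSet_le measurable_const (measurable_sqNorm.comp measurable_fst))

lemma gaussVec_linearTest_le (hw : 0 < w) (hσ : 0 < σ) (y : Fin n → ℝ) :
    gaussVec 0 σ {u | (u, y) ∈ linearTest n β w σ η} ≤
      ENNReal.ofReal (Real.exp (-(n * (1 / 2 * Real.log (σ / w) - η)))) := by
  refine (gaussVec_le_exp_mul_gaussVec (β • y) 0 hσ hw
    (measurable_prodMk_right measurableSet_linearTest) (fun u hu ↦ hu.1) fun u hu ↦ ?_).trans
    (mul_le_of_le_one_right' prob_le_one)
  simpa only [sub_zero] using hu.2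

end LinearTest

/-- Parameters of the dirty paper coding scheme. Given the cloud center `t` of the second message,
a white Gaussian vector, transmitter 2 sends `c₂ • t` and transmitter 1 sends `v + κ₁ • t`, where
`v` has variance `Q` and carries the first message. -/
structure DirtyPaperScheme where
  /-- The gain of the interference at receiver 1. -/
  a : ℝ
  /-- The gain of the interference at receiver 2. -/
  b : ℝ
  /-- The power spent on the first message. -/
  Q : ℝ
  /-- The amplitude of the cloud center in the first input. -/
  κ₁ : ℝ
  /-- The amplitude of the cloud center in the second input. -/
  c₂ : ℝ
  Q_pos : 0 < Q

namespace DirtyPaperScheme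

variable (S : DirtyPaperScheme) {n : ℕ} {η δ : ℝ}

/-- Costa's coefficient, the linear estimator of `v` from `v + z`. -/
def costaCoeff : ℝ := S.Q / (S.Q + 1)

/-- The coefficient of the cloud center in the auxiliary word `u = v + auxGain • t`, namely
Costa's coefficient times the amplitude at which receiver 1 sees the cloud center. -/
def auxGain : ℝ := S.costaCoeff * (S.κ₁ + S.a * S.c₂)

/-- The variance of the auxiliary word. -/
def auxVar : ℝ := S.Q + S.auxGain ^ 2

/-- The amplitude at which receiver 2 sees the cloud center. -/
def cloudGain : ℝ := S.b * S.κ₁ + S.c₂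

/-- The variance of the noise `b • v + z` at receiver 2. -/
def noiseVar : ℝ := 1 + S.b ^ 2 * S.Q

/-- The linear estimator of the cloud center from the output of receiver 2. -/
def cloudCoeff : ℝ := S.cloudGain / (S.cloudGain ^ 2 + S.noiseVar)

/-- The residual variance of the estimate of the cloud center. -/
def cloudResidualVar : ℝ := S.noiseVar / (S.cloudGain ^ 2 + S.noiseVar)

/-- The input of transmitter 1, from the auxiliary word and the cloud center. -/
def input₁ (q : (Fin n → ℝ) × (Fin n → ℝ)) : Fin n → ℝ := q.1 + (S.κ₁ - S.auxGain) • q.2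

/-- The input of transmitter 2, from the cloud center. -/
def input₂ (t : Fin n → ℝ) : Fin n → ℝ := S.c₂ • t

/-- The combinations of `(v, t, z)` whose norms are controlled: the two inputs, the auxiliary word,
`v`, the residual of receiver 1, the cloud center, and the residual of receiver 2. -/
def observables : Fin 7 → ℝ × ℝ × ℝ :=
  ![(1, S.κ₁, 0), (0, S.c₂, 0), (1, S.auxGain, 0), (1, 0, 0),
    (1 - S.costaCoeff, 0, -S.costaCoeff), (0, 1, 0),
    (-(S.cloudCoeff * S.b), 1 - S.cloudCoeff * S.cloudGain, -S.cloudCoeff)]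

/-- Joint typicality of an auxiliary word, a cloud center and a noise vector. -/
def Typical (η : ℝ) (q : (Fin n → ℝ) × (Fin n → ℝ)) (z : Fin n → ℝ) : Prop :=
  JointlyTypical S.Q η S.observables (q.1 - S.auxGain • q.2) q.2 z

/-- The pairs of an auxiliary word and a cloud center that are typical with most noise vectors. -/
def goodPairs (n : ℕ) (η δ : ℝ) : Set ((Fin n → ℝ) × (Fin n → ℝ)) :=
  {q | stdGaussN n {z | ¬ S.Typical η q z} ≤ ENNReal.ofReal δ}

/-- The test by which receiver 1 accepts an auxiliary word. -/
def test₁ (n : ℕ) (η : ℝ) : Set ((Fin n → ℝ) × (Fin n → ℝ)) :=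
  linearTest n S.costaCoeff S.costaCoeff S.auxVar η

/-- The test by which receiver 2 accepts a cloud center. -/
def test₂ (n : ℕ) (η : ℝ) : Set ((Fin n → ℝ) × (Fin n → ℝ)) :=
  linearTest n S.cloudCoeff S.cloudResidualVar 1 η

lemma costaCoeff_pos : 0 < S.costaCoeff := by
  have := S.Q_pos
  unfold costaCoeff
  positivity

lemma auxVar_pos : 0 < S.auxVar := by
  have := S.Q_pos
  unfold auxVar
  positivity

lemma noiseVar_pos : 0 < S.noiseVar := by
  have := S.Q_pos
  unfold noiseVar
  positivity

lemma cloudResidualVar_pos : 0 < S.cloudResidualVar := by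
  have := S.noiseVar_pos
  unfold cloudResidualVar
  positivity

lemma measurable_input₁ : Measurable (S.input₁ (n := n)) := by
  unfold input₁
  fun_prop

lemma measurable_input₂ : Measurable (S.input₂ (n := n)) := by
  unfold input₂
  fun_prop

lemma measurableSet_goodPairs : MeasurableSet (S.goodPairs n η δ) :=
  measurableSet_le (measurable_measure_prodMk_left (ν := stdGaussN n)
    (measurableSet_not_jointlyTypical S.Q η S.observables
      (v := fun w : ((Fin n → ℝ) × (Fin n → ℝ)) × (Fin n → ℝ) ↦ w.1.1 - S.auxGain • w.1.2)
      (t := fun w ↦ w.1.2) (z := fun w ↦ w.2) (by fun_prop) (by fun_prop) (by fun_prop)))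
    measurable_const

lemma exists_typical_of_mem_goodPairs (hδ : δ < 1) {q : (Fin n → ℝ) × (Fin n → ℝ)}
    (hq : q ∈ S.goodPairs n η δ) : ∃ z, S.Typical η q z := by
  by_contra! hall
  have hle : stdGaussN n {z | ¬ S.Typical η q z} ≤ ENNReal.ofReal δ := hq
  simp only [hall, not_false_eq_true, Set.ofPred_true, measure_univ] at hle
  exact hle.not_gt (ENNReal.ofReal_lt_one.2 hδ)

namespace Typical

variable {S} {q : (Fin n → ℝ) × (Fin n → ℝ)} {z : Fin n → ℝ}

lemma input₁ (h : S.Typical η q z) : IsTypical (S.Q + S.κ₁ ^ 2) η (S.input₁ q) := by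
  convert h 0 using 1
  · simp [observables]
  · change _ = (1 : ℝ) • (q.1 - S.auxGain • q.2) + S.κ₁ • q.2 + (0 : ℝ) • z
    rw [DirtyPaperScheme.input₁]
    module

lemma input₂ (h : S.Typical η q z) : IsTypical (S.c₂ ^ 2) η (S.input₂ q.2) := by
  convert h 1 using 1 <;> simp [observables, DirtyPaperScheme.input₂]

lemma auxWord (h : S.Typical η q z) : IsTypical S.auxVar η q.1 := by
  convert h 2 using 1 <;> simp [observables, auxVar]

lemma cleanPart (h : S.Typical η q z) : IsTypical S.Q η (q.1 - S.auxGain • q.2) := by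
  convert h 3 using 1 <;> simp [observables]

lemma residual₁ (h : S.Typical η q z) : IsTypical S.costaCoeff η
    (q.1 - S.costaCoeff • (S.input₁ q + S.a • S.input₂ q.2 + z)) := by
  convert h 4 using 1
  · have := S.Q_pos
    change _ = (1 - S.costaCoeff) ^ 2 * S.Q + 0 ^ 2 + (-S.costaCoeff) ^ 2
    rw [costaCoeff]
    field_simp
    ring
  · change _ = (1 - S.costaCoeff) • (q.1 - S.auxGain • q.2) + (0 : ℝ) • q.2 + -S.costaCoeff • z
    rw [DirtyPaperScheme.input₁, DirtyPaperScheme.input₂, auxGain]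
    module

lemma cloudCenter (h : S.Typical η q z) : IsTypical 1 η q.2 := by
  convert h 5 using 1 <;> simp [observables]

lemma residual₂ (h : S.Typical η q z) : IsTypical S.cloudResidualVar η
    (q.2 - S.cloudCoeff • (S.b • S.input₁ q + S.input₂ q.2 + z)) := by
  convert h 6 using 1
  · have := S.noiseVar_pos
    change _ = (-(S.cloudCoeff * S.b)) ^ 2 * S.Q + (1 - S.cloudCoeff * S.cloudGain) ^ 2 +
      (-S.cloudCoeff) ^ 2
    have hnoise : S.b ^ 2 * S.Q = S.noiseVar - 1 := by rw [noiseVar]; ring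
    rw [neg_sq, mul_pow, mul_assoc, hnoise, cloudResidualVar, cloudCoeff]
    field_simp
    ring
  · change _ = -(S.cloudCoeff * S.b) • (q.1 - S.auxGain • q.2) +
      (1 - S.cloudCoeff * S.cloudGain) • q.2 + -S.cloudCoeff • z
    rw [DirtyPaperScheme.input₁, DirtyPaperScheme.input₂, cloudGain]
    module

lemma mem_test₁ (h : S.Typical η q z) :
    (q.1, S.input₁ q + S.a • S.input₂ q.2 + z) ∈ S.test₁ n η :=
  ⟨h.residual₁.2, h.auxWord.1⟩

lemma mem_test₂ (h : S.Typical η q z) :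
    (q.2, S.b • S.input₁ q + S.input₂ q.2 + z) ∈ S.test₂ n η :=
  ⟨h.residual₂.2, h.cloudCenter.1⟩

end Typical

/-- The mutual information `I(u; t)` of the auxiliary word and the cloud center, in nats. -/
def binRate : ℝ := 1 / 2 * Real.log (S.auxVar / S.Q)

/-- The number of auxiliary words a bin needs in order to contain one forming a good pair with the
cloud center, up to the tolerance `η`. -/
def binSize (n : ℕ) (η : ℝ) : ℝ := Real.exp (n * (S.binRate + η))

lemma gaussVec_goodPairs_le (hδ : δ < 1) (t : Fin n → ℝ) :
    gaussVec (S.auxGain • t) S.Q {u | (u, t) ∈ S.goodPairs n η δ} ≤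
      ENNReal.ofReal (S.binSize n η) * gaussVec 0 S.auxVar {u | (u, t) ∈ S.goodPairs n η δ} := by
  have hsize : S.binSize n η = Real.exp (-(n * (1 / 2 * Real.log (S.Q / S.auxVar) - η))) := by
    rw [binSize, binRate, ← inv_div S.auxVar, Real.log_inv]
    ring_nf
  rw [hsize]
  refine gaussVec_le_exp_mul_gaussVec 0 (S.auxGain • t) S.Q_pos S.auxVar_pos
    (measurable_prodMk_right S.measurableSet_goodPairs) (fun u hu ↦ ?_) fun u hu ↦ ?_
  · obtain ⟨z, hz⟩ := S.exists_typical_of_mem_goodPairs hδ hu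
    simpa only [sub_zero] using hz.auxWord.2
  · obtain ⟨z, hz⟩ := S.exists_typical_of_mem_goodPairs hδ hu
    exact hz.cleanPart.1

lemma lintegral_gaussVec_notMem_goodPairs_le (hη : 0 < η) (hδ : 0 < δ) (hn : 0 < n) :
    ∫⁻ t, gaussVec (S.auxGain • t) S.Q {u | (u, t) ∉ S.goodPairs n η δ} ∂stdGaussN n ≤
      ENNReal.ofReal (7 * atypicalBound η n / δ) := by
  have hbad : MeasurableSet {q | q ∉ S.goodPairs n η δ} := S.measurableSet_goodPairs.compl
  have hshift : MeasurableSet {w : (Fin n → ℝ) × (Fin n → ℝ) |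
      (S.auxGain • w.2 + w.1, w.2) ∉ S.goodPairs n η δ} :=
    (by fun_prop : Measurable fun w : (Fin n → ℝ) × (Fin n → ℝ) ↦
      (S.auxGain • w.2 + w.1, w.2)) hbad
  calc ∫⁻ t, gaussVec (S.auxGain • t) S.Q {u | (u, t) ∉ S.goodPairs n η δ} ∂stdGaussN n
    _ = ∫⁻ t, gaussVec 0 S.Q {v | (S.auxGain • t + v, t) ∉ S.goodPairs n η δ} ∂stdGaussN n := by
        refine lintegral_congr fun t ↦ ?_
        rw [← map_add_gaussVec]
        exact Measure.map_apply (measurable_const_add _) (measurable_prodMk_right hbad)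
    _ = ((gaussVec 0 S.Q).prod (stdGaussN n))
          {w | (S.auxGain • w.2 + w.1, w.2) ∉ S.goodPairs n η δ} :=
        (Measure.prod_apply_symm hshift).symm
    _ ≤ _ := by
        simpa only [goodPairs, Typical, Set.mem_ofPred_eq, add_sub_cancel_left, Fintype.card_fin,
          Nat.cast_ofNat] using
          measure_not_le_measure_not_jointlyTypical_le S.Q_pos.le hη hδ hn S.observables

lemma lintegral_gaussVec_notMem_goodPairs_pow_le (hη : 0 < η) (hδ : 0 < δ) (hδ₁ : δ < 1)
    (hn : 0 < n) (L : ℕ) :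
    ∫⁻ t, gaussVec 0 S.auxVar {u | (u, t) ∉ S.goodPairs n η δ} ^ L ∂stdGaussN n ≤
      ENNReal.ofReal (7 * atypicalBound η n / δ + Real.exp (-(L / S.binSize n η))) := by
  refine (lintegral_mono fun t ↦ measure_compl_pow_le_add_exp _ _
    (measurable_prodMk_right S.measurableSet_goodPairs) (K := S.binSize n η) (Real.exp_pos _)
    (S.gaussVec_goodPairs_le hδ₁ t) L).trans ?_
  rw [lintegral_add_right _ measurable_const, lintegral_const, measure_univ, mul_one,
    ENNReal.ofReal_add (by have := atypicalBound_nonneg η n; positivity) (Real.exp_nonneg _)]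
  gcongr
  exact S.lintegral_gaussVec_notMem_goodPairs_le hη hδ hn

theorem exists_code {P₁ P₂ : ℝ} (hη : 0 < η) (hδ : 0 < δ) (hδ₁ : δ < 1) (hn : 0 < n)
    (hP₁ : (S.Q + S.κ₁ ^ 2) * (1 + η) ≤ P₁) (hP₂ : S.c₂ ^ 2 * (1 + η) ≤ P₂) (L : ℕ) {M₁ M₂ : ℕ}
    (hM₁ : 0 < M₁) (hM₂ : 0 < M₂) {B : ℝ}
    (hB : 2 * (δ + (7 * atypicalBound η n / δ + Real.exp (-(L / S.binSize n η)))) +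
      ((M₁ - 1 : ℕ) : ℝ) *
        (L * Real.exp (-(n * (1 / 2 * Real.log (S.auxVar / S.costaCoeff) - η)))) +
      ((M₂ - 1 : ℕ) : ℝ) *
        Real.exp (-(n * (1 / 2 * Real.log (1 / S.cloudResidualVar) - η))) ≤ B) :
    ∃ (f₁ : Fin M₁ → Fin M₂ → Fin n → ℝ) (f₂ : Fin M₂ → Fin n → ℝ)
      (g₁ : (Fin n → ℝ) → Fin M₁) (g₂ : (Fin n → ℝ) → Fin M₂),
      (∀ w₁ w₂, sqNorm (f₁ w₁ w₂) ≤ n * P₁) ∧ (∀ w₂, sqNorm (f₂ w₂) ≤ n * P₂) ∧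
      𝔼 w₂, 𝔼 w₁, (stdGaussN n).real {z | g₁ (f₁ w₁ w₂ + S.a • f₂ w₂ + z) ≠ w₁} ≤ B ∧
      𝔼 w₂, 𝔼 w₁, (stdGaussN n).real {z | g₂ (S.b • f₁ w₁ w₂ + f₂ w₂ + z) ≠ w₂} ≤ B := by
  have hQ := S.Q_pos
  have hatyp := atypicalBound_nonneg η n
  refine exists_binning_code S.a S.b (le_trans (by positivity) hP₁) (le_trans (by positivity) hP₂)
    (gaussVec 0 S.auxVar) (stdGaussN n) S.measurable_input₁ S.measurable_input₂
    (G := S.goodPairs n η δ) (A₁ := S.test₁ n η) (A₂ := S.test₂ n η)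
    S.measurableSet_goodPairs measurableSet_linearTest measurableSet_linearTest
    (fun q hq ↦ ?_) (fun q hq ↦ ?_) hδ.le (by positivity) (Real.exp_nonneg _) (Real.exp_nonneg _)
    (fun q hq ↦ (measure_mono fun z ↦ mt Typical.mem_test₁).trans hq)
    (fun q hq ↦ (measure_mono fun z ↦ mt Typical.mem_test₂).trans hq)
    (S.lintegral_gaussVec_notMem_goodPairs_pow_le hη hδ hδ₁ hn L)
    (gaussVec_linearTest_le S.costaCoeff_pos S.auxVar_pos) (fun y ↦ ?_) hM₁ hM₂ hB
  · obtain ⟨z, hz⟩ := S.exists_typical_of_mem_goodPairs hδ₁ hq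
    refine hz.input₁.2.trans ?_
    rw [mul_assoc]
    gcongr
  · obtain ⟨z, hz⟩ := S.exists_typical_of_mem_goodPairs hδ₁ hq
    refine hz.input₂.2.trans ?_
    rw [mul_assoc]
    gcongr
  · rw [← gaussVec_zero_one]
    exact gaussVec_linearTest_le S.cloudResidualVar_pos one_pos y

end DirtyPaperScheme

section Rates

lemma ceil_sub_one_le {x : ℝ} (hx : 0 < x) : ((⌈x⌉₊ - 1 : ℕ) : ℝ) ≤ x := by
  rw [Nat.cast_sub (Nat.ceil_pos.2 hx), Nat.cast_one, sub_le_iff_le_add]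
  exact (Nat.ceil_lt_add_one hx.le).le

lemma ceil_exp_le_two_mul {x : ℝ} (hx : 0 ≤ x) : (⌈Real.exp x⌉₊ : ℝ) ≤ 2 * Real.exp x := by
  linarith [Nat.ceil_lt_add_one (Real.exp_nonneg x), Real.one_le_exp hx]

lemma le_logb_two_ceil_exp_div {n : ℕ} (hn : 0 < n) (R : ℝ) :
    R ≤ Real.logb 2 ⌈Real.exp (n * (R * Real.log 2))⌉₊ / n := by
  rw [Real.logb, le_div_iff₀ (by positivity), le_div_iff₀ (Real.log_pos one_lt_two),
    Real.le_log_iff_exp_le (Nat.cast_pos.2 (Nat.ceil_pos.2 (Real.exp_pos _)))]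
  rw [mul_right_comm, mul_comm]
  exact Nat.le_ceil _

end Rates

namespace DirtyPaperScheme

variable (S : DirtyPaperScheme) {d R : ℝ}

/-- The rate of the first message, in bits. -/
def rate₁ : ℝ := 1 / 2 * Real.logb 2 (1 + S.Q)

/-- The rate of the second message, in bits. -/
def rate₂ : ℝ := 1 / 2 * Real.logb 2 ((S.cloudGain ^ 2 + S.noiseVar) / S.noiseVar)

lemma binRate_nonneg : 0 ≤ S.binRate := by
  have hratio : 1 ≤ S.auxVar / S.Q := by
    rw [one_le_div S.Q_pos, auxVar]
    exact le_add_of_nonneg_right (sq_nonneg _)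
  exact mul_nonneg (by norm_num) (Real.log_nonneg hratio)

lemma half_log_auxVar_div_costaCoeff :
    1 / 2 * Real.log (S.auxVar / S.costaCoeff) = S.binRate + S.rate₁ * Real.log 2 := by
  have hQ := S.Q_pos
  rw [costaCoeff, ← div_mul, Real.log_mul (div_pos S.auxVar_pos hQ).ne' (by positivity), binRate,
    rate₁, mul_assoc, Real.logb, div_mul_cancel₀ _ (Real.log_pos one_lt_two).ne', add_comm S.Q]
  ring

lemma half_log_one_div_cloudResidualVar :
    1 / 2 * Real.log (1 / S.cloudResidualVar) = S.rate₂ * Real.log 2 := by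
  rw [cloudResidualVar, one_div_div, rate₂, mul_assoc, Real.logb,
    div_mul_cancel₀ _ (Real.log_pos one_lt_two).ne']

lemma exp_neg_ceil_div_binSize_le (n : ℕ) (d : ℝ) :
    Real.exp (-(⌈S.binSize n (2 * d)⌉₊ / S.binSize n d)) ≤ Real.exp (-(n * d)) := by
  refine Real.exp_le_exp.2 (neg_le_neg ?_)
  calc n * d
    _ ≤ Real.exp (n * d) := by linarith [Real.add_one_le_exp (n * d)]
    _ = S.binSize n (2 * d) / S.binSize n d := by
        rw [binSize, binSize, ← Real.exp_sub]
        ring_nf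
    _ ≤ ⌈S.binSize n (2 * d)⌉₊ / S.binSize n d :=
        div_le_div_of_nonneg_right (Nat.le_ceil _) (Real.exp_nonneg _)

lemma collision₁_le (n : ℕ) (hd : 0 ≤ d) (hR : R * Real.log 2 + 4 * d ≤ S.rate₁ * Real.log 2) :
    ((⌈Real.exp (n * (R * Real.log 2))⌉₊ - 1 : ℕ) : ℝ) * (⌈S.binSize n (2 * d)⌉₊ *
        Real.exp (-(n * (1 / 2 * Real.log (S.auxVar / S.costaCoeff) - d)))) ≤
      2 * Real.exp (-(n * d)) := by
  have hbin := S.binRate_nonneg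
  rw [half_log_auxVar_div_costaCoeff]
  calc _ ≤ Real.exp (n * (R * Real.log 2)) * (2 * Real.exp (n * (S.binRate + 2 * d)) *
          Real.exp (-(n * (S.binRate + S.rate₁ * Real.log 2 - d)))) := by
        gcongr
        · exact ceil_sub_one_le (Real.exp_pos _)
        · exact ceil_exp_le_two_mul (by positivity)
    _ = 2 * Real.exp (n * (R * Real.log 2 + 4 * d - S.rate₁ * Real.log 2) - n * d) := by
        rw [mul_assoc 2, mul_left_comm, ← Real.exp_add, ← Real.exp_add]
        ring_nf
    _ ≤ 2 * Real.exp (-(n * d)) := by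
        gcongr
        linarith [mul_nonneg (Nat.cast_nonneg (α := ℝ) n) (sub_nonneg.2 hR)]

lemma collision₂_le (n : ℕ) (hR : R * Real.log 2 + 2 * d ≤ S.rate₂ * Real.log 2) :
    ((⌈Real.exp (n * (R * Real.log 2))⌉₊ - 1 : ℕ) : ℝ) *
        Real.exp (-(n * (1 / 2 * Real.log (1 / S.cloudResidualVar) - d))) ≤
      Real.exp (-(n * d)) := by
  rw [half_log_one_div_cloudResidualVar]
  calc _ ≤ Real.exp (n * (R * Real.log 2)) *
          Real.exp (-(n * (S.rate₂ * Real.log 2 - d))) := by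
        gcongr
        exact ceil_sub_one_le (Real.exp_pos _)
    _ ≤ Real.exp (-(n * d)) := by
        rw [← Real.exp_add]
        gcongr
        linarith [mul_nonneg (Nat.cast_nonneg (α := ℝ) n) (sub_nonneg.2 hR)]

lemma tendsto_error_bound {δ : ℝ} (hd : 0 < d) :
    Filter.Tendsto (fun n : ℕ ↦ 2 * (δ + (7 * atypicalBound d n / δ + Real.exp (-(n * d)))) +
      2 * Real.exp (-(n * d)) + Real.exp (-(n * d))) Filter.atTop (nhds (2 * δ)) := by
  have hexp : Filter.Tendsto (fun n : ℕ ↦ Real.exp (-(n * d))) Filter.atTop (nhds 0) :=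
    Real.tendsto_exp_neg_atTop_nhds_zero.comp
      (tendsto_natCast_atTop_atTop.atTop_mul_const hd)
  have hatyp := ((tendsto_atypicalBound d).const_mul 7).div_const δ
  simpa using ((((hatyp.add hexp).const_add δ).const_mul 2).add (hexp.const_mul 2)).add hexp

lemma exists_slack {η₀ R₁ R₂ : ℝ} (hη₀ : 0 < η₀) (hR₁ : R₁ < S.rate₁) (hR₂ : R₂ < S.rate₂) :
    ∃ d, 0 < d ∧ d ≤ η₀ ∧ R₁ * Real.log 2 + 4 * d ≤ S.rate₁ * Real.log 2 ∧
      R₂ * Real.log 2 + 2 * d ≤ S.rate₂ * Real.log 2 := by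
  obtain ⟨d₁, hd₁, hslack₁⟩ : ∃ d > 0, R₁ * Real.log 2 + 4 * d = S.rate₁ * Real.log 2 :=
    ⟨(S.rate₁ - R₁) * Real.log 2 / 4, by have := sub_pos.2 hR₁; positivity, by ring⟩
  obtain ⟨d₂, hd₂, hslack₂⟩ : ∃ d > 0, R₂ * Real.log 2 + 2 * d = S.rate₂ * Real.log 2 :=
    ⟨(S.rate₂ - R₂) * Real.log 2 / 2, by have := sub_pos.2 hR₂; positivity, by ring⟩
  obtain ⟨d, hd, hdη₀, hdd₁, hdd₂⟩ : ∃ d > 0, d ≤ η₀ ∧ d ≤ d₁ ∧ d ≤ d₂ :=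
    ⟨min η₀ (min d₁ d₂), by positivity, by simp⟩
  exact ⟨d, hd, hdη₀, by linarith, by linarith⟩

theorem achievableGT1 {η₀ P₁ P₂ R₁ R₂ : ℝ} (hη₀ : 0 < η₀)
    (hP₁ : (S.Q + S.κ₁ ^ 2) * (1 + η₀) ≤ P₁) (hP₂ : S.c₂ ^ 2 * (1 + η₀) ≤ P₂)
    (hR₁ : R₁ < S.rate₁) (hR₂ : R₂ < S.rate₂) : AchievableGT1 S.a S.b P₁ P₂ R₁ R₂ := by
  refine achievableGT1_iff.2 fun ε hε ↦ ?_
  have hQ := S.Q_pos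
  obtain ⟨d, hd, hdη, hd₁, hd₂⟩ := S.exists_slack hη₀ hR₁ hR₂
  obtain ⟨δ, hδ, hδ₁, hδε⟩ : ∃ δ > 0, δ < 1 ∧ 2 * δ < ε := by
    refine ⟨min (1 / 2) (ε / 4), by positivity, ?_, ?_⟩
    · exact (min_le_left _ _).trans_lt one_half_lt_one
    · linarith [min_le_right (1 / 2) (ε / 4)]
  obtain ⟨n, hnε, hn⟩ := (((tendsto_error_bound hd).eventually_le_const hδε).and
    (Filter.eventually_gt_atTop 0)).exists
  have hM₁ := Nat.ceil_pos.2 (Real.exp_pos (n * (R₁ * Real.log 2)))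
  have hM₂ := Nat.ceil_pos.2 (Real.exp_pos (n * (R₂ * Real.log 2)))
  have : Nonempty (Fin ⌈Real.exp (n * (R₁ * Real.log 2))⌉₊) := Fin.pos_iff_nonempty.1 hM₁
  have : Nonempty (Fin ⌈Real.exp (n * (R₂ * Real.log 2))⌉₊) := Fin.pos_iff_nonempty.1 hM₂
  obtain ⟨f₁, f₂, g₁, g₂, hf₁, hf₂, herr₁, herr₂⟩ := S.exists_code hd hδ hδ₁ hn
    (hP₁.trans' (by gcongr)) (hP₂.trans' (by gcongr)) ⌈S.binSize n (2 * d)⌉₊ hM₁ hM₂ (B := ε) <| by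
      linarith [S.exp_neg_ceil_div_binSize_le n d, S.collision₁_le n hd.le hd₁,
        S.collision₂_le n hd₂]
  exact ⟨n, _, _, f₁, f₂, g₁, g₂, hn, hM₁, hM₂,
    Finset.expect_le Finset.univ_nonempty fun w₂ _ ↦
      Finset.expect_le Finset.univ_nonempty fun w₁ _ ↦ hf₁ w₁ w₂,
    Finset.expect_le Finset.univ_nonempty fun w₂ _ ↦ hf₂ w₂,
    (sub_le_self _ hε.le).trans (le_logb_two_ceil_exp_div hn R₁),
    (sub_le_self _ hε.le).trans (le_logb_two_ceil_exp_div hn R₂), herr₁, herr₂⟩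

end DirtyPaperScheme

section Achievability

variable {a b P₁ P₂ R₁ R₂ : ℝ}

lemma mem_capacityGT1_of_continuousAt_rates {rate₁ rate₂ : ℝ → ℝ} (h₁ : ContinuousAt rate₁ 0)
    (h₂ : ContinuousAt rate₂ 0) (hR₁ : R₁ ≤ rate₁ 0) (hR₂ : R₂ ≤ rate₂ 0)
    (h : ∀ s ∈ Set.Ioo 0 1, ∀ r₁ < rate₁ s, ∀ r₂ < rate₂ s, AchievableGT1 a b P₁ P₂ r₁ r₂) :
    (R₁, R₂) ∈ CapacityGT1 a b P₁ P₂ := by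
  have hcont : ContinuousAt (fun s ↦ (min R₁ (rate₁ s) - s, min R₂ (rate₂ s) - s)) 0 := by
    fun_prop
  have hlim := hcont.tendsto.mono_left (nhdsWithin_le_nhds (s := Set.Ioi 0))
  rw [min_eq_left hR₁, min_eq_left hR₂, sub_zero, sub_zero] at hlim
  refine mem_closure_of_tendsto hlim ?_
  filter_upwards [Ioo_mem_nhdsGT one_pos] with s hs
  exact h s hs _ ((sub_lt_self _ hs.1).trans_le (min_le_right _ _))
    _ ((sub_lt_self _ hs.1).trans_le (min_le_right _ _))

/-- The slack in power and rate needed by the coding scheme is created by scaling the signals down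
by `√(1 - s)` and adding the power `s P₁ / 2` to the first message, which also makes `Q`
positive. -/
lemma mem_capacityGT1_of_le_rates {Q κ₁ c₂ : ℝ} (hP₁ : 0 < P₁) (hQ : 0 ≤ Q)
    (hpow₁ : Q + κ₁ ^ 2 ≤ P₁) (hpow₂ : c₂ ^ 2 ≤ P₂) (hR₁ : R₁ ≤ 1 / 2 * Real.logb 2 (1 + Q))
    (hR₂ : R₂ ≤ 1 / 2 * Real.logb 2
      (((b * κ₁ + c₂) ^ 2 + (1 + b ^ 2 * Q)) / (1 + b ^ 2 * Q))) :
    (R₁, R₂) ∈ CapacityGT1 a b P₁ P₂ := by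
  let Q' (s : ℝ) : ℝ := (1 - s) * Q + s * P₁ / 2
  let κ' (s : ℝ) : ℝ := √(1 - s) * κ₁
  let c' (s : ℝ) : ℝ := √(1 - s) * c₂
  have hQ'₀ : Q' 0 = Q := by simp [Q']
  have hκ'₀ : κ' 0 = κ₁ := by simp [κ']
  have hc'₀ : c' 0 = c₂ := by simp [c']
  refine mem_capacityGT1_of_continuousAt_rates (rate₁ := fun s ↦ 1 / 2 * Real.logb 2 (1 + Q' s))
    (rate₂ := fun s ↦ 1 / 2 * Real.logb 2
      (((b * κ' s + c' s) ^ 2 + (1 + b ^ 2 * Q' s)) / (1 + b ^ 2 * Q' s)))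
    (.mul continuousAt_const (.logb (by fun_prop) (by rw [hQ'₀]; positivity)))
    (.mul continuousAt_const
      (.logb (.div (by fun_prop) (by fun_prop) (by rw [hQ'₀]; positivity))
        (by rw [hQ'₀]; positivity)))
    (by rwa [hQ'₀]) (by rwa [hQ'₀, hκ'₀, hc'₀]) fun s ⟨hs₀, hs₁⟩ r₁ hr₁ r₂ hr₂ ↦ ?_
  have hs : 0 < 1 - s := sub_pos.2 hs₁
  have hroot : √(1 - s) ^ 2 = 1 - s := Real.sq_sqrt hs.le
  refine DirtyPaperScheme.achievableGT1 ⟨a, b, Q' s, κ' s, c' s, by positivity⟩ (half_pos hs₀)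
    ?_ ?_ hr₁ hr₂
  · calc (Q' s + κ' s ^ 2) * (1 + s / 2)
      _ = ((1 - s) * (Q + κ₁ ^ 2) + s * P₁ / 2) * (1 + s / 2) := by rw [mul_pow, hroot]; ring
      _ ≤ ((1 - s) * P₁ + s * P₁ / 2) * (1 + s / 2) := by gcongr
      _ = (1 - (s / 2) ^ 2) * P₁ := by ring
      _ ≤ P₁ := mul_le_of_le_one_left hP₁.le (sub_le_self _ (sq_nonneg _))
  · calc c' s ^ 2 * (1 + s / 2)
      _ = ((1 - s) * (1 + s / 2)) * c₂ ^ 2 := by rw [mul_pow, hroot]; ring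
      _ ≤ c₂ ^ 2 := mul_le_of_le_one_left (sq_nonneg _) (by nlinarith)
      _ ≤ P₂ := hpow₂

lemma DPC12_subset_capacityGT1_of_pos (hP₁ : 0 < P₁) (hP₂ : 0 ≤ P₂) :
    DPC12 b P₁ P₂ ⊆ CapacityGT1 a b P₁ P₂ := by
  rintro ⟨R₁, R₂⟩ ⟨α, hα₀, hα₁, hR₁, hR₂⟩
  obtain ⟨g, hg, hbg⟩ : ∃ g : ℝ, g ^ 2 = 1 ∧ b * g = |b| := by
    rcases le_total 0 b with hb | hb
    · exact ⟨1, one_pow 2, by rw [abs_of_nonneg hb, mul_one]⟩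
    · exact ⟨-1, by norm_num, by rw [abs_of_nonpos hb, mul_neg_one]⟩
  have hα : 0 ≤ (1 - α) * P₁ := mul_nonneg (sub_nonneg.2 hα₁) hP₁.le
  refine mem_capacityGT1_of_le_rates (Q := α * P₁) (κ₁ := g * √((1 - α) * P₁)) (c₂ := √P₂)
    hP₁ (by positivity) ?_ (Real.sq_sqrt hP₂).le hR₁ (hR₂.trans_eq ?_)
  · rw [mul_pow, hg, Real.sq_sqrt hα]
    linarith
  · rw [← mul_assoc b, hbg, add_sq, mul_pow, sq_abs, Real.sq_sqrt hα, Real.sq_sqrt hP₂,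
      Real.sqrt_mul hα]
    ring_nf

/-- When transmitter 1 has no power, a code for a channel in which receiver 2 does not hear
transmitter 1 may be used with the first input replaced by zero. -/
lemma AchievableGT1.zero_power_of_zero_gain {a' P R : ℝ} (h : AchievableGT1 a' 0 P P₂ R R₂)
    (hR₁ : R₁ ≤ 0) : AchievableGT1 a b 0 P₂ R₁ R₂ := by
  rw [achievableGT1_iff] at h ⊢
  intro ε hε
  obtain ⟨n, M₁, M₂, f₁, f₂, g₁, g₂, hn, hM₁, hM₂, -, hpow₂, -, hrate₂, -, herr₂⟩ := h ε hε
  have := Fin.pos_iff_nonempty.1 hM₁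
  refine ⟨n, 1, M₂, 0, f₂, 0, g₂, hn, one_pos, hM₂, ?_, hpow₂, ?_, hrate₂, ?_, ?_⟩
  · simp [sqNorm]
  · simpa using hR₁.trans hε.le
  · simpa using hε.le
  · simpa using herr₂

theorem DPC12_subset_capacityGT1 (hP₁ : 0 ≤ P₁) (hP₂ : 0 ≤ P₂) :
    DPC12 b P₁ P₂ ⊆ CapacityGT1 a b P₁ P₂ := by
  rcases hP₁.eq_or_lt with rfl | hP₁
  · rintro ⟨R₁, R₂⟩ ⟨α, -, -, hR₁, hR₂⟩
    simp only [mul_zero, add_zero, zero_mul, Real.sqrt_zero, Real.logb_one, div_one] at hR₁ hR₂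
    have hmem : (R₁, R₂) ∈ CapacityGT1 a 0 1 P₂ :=
      DPC12_subset_capacityGT1_of_pos one_pos hP₂
        ⟨0, le_rfl, zero_le_one, by simpa using hR₁, by simpa using hR₂⟩
    exact map_mem_closure (f := fun R : ℝ × ℝ ↦ (R₁, R.2))
      (t := {R : ℝ × ℝ | AchievableGT1 a b 0 P₂ R.1 R.2}) (by fun_prop) hmem fun R hR ↦
        hR.zero_power_of_zero_gain hR₁
  · exact DPC12_subset_capacityGT1_of_pos hP₁ hP₂

end Achievability

/-- **Theorem 5 (capacity of the Gaussian weak IFC with degraded message sets).**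
If `|b| ≤ 1`, the capacity region `C^{T₁}_{GIFC}` is exactly the set of rate pairs
`(R₁,R₂)` with `R₁ ≤ ½ log(1 + αP₁)` and
`R₂ ≤ ½ log((1 + b²P₁ + 2|b|√((1−α)P₁P₂) + P₂)/(1 + b²αP₁))` for some `α ∈ [0,1]`. -/
theorem capacityGT1_eq_DPC12 (a b P1 P2 : ℝ) (hb : |b| ≤ 1)
    (hP1 : 0 ≤ P1) (hP2 : 0 ≤ P2) :
    CapacityGT1 a b P1 P2 = DPC12 b P1 P2 :=
  Set.Subset.antisymm (capacityGT1_subset_DPC12 hb hP1 hP2) (DPC12_subset_capacityGT1 hP1 hP2)
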